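/- Let N ≥ 3 and let K = ⋃_{i=1}^k \bar{B}_{ρ_i}(x_i) be a finite union of k ≥ 1 pairwise disjoint closed balls in ℝ^N with radii ρ_i > 0. Let γ ∈ (0,1), let φ : (0,∞) → (0,∞) be nonincreasing and locally γ-Hölder continuous with ∫₀^∞ r·φ(r) dr < ∞, and let f : (0,∞) → (0,∞) be C¹ and strictly decreasing. Then there exists a function ũ : ℝ^N \ int(K) → ℝ which is continuous on ℝ^N \ int(K), twice continuously differentiable on ℝ^N \ K, and satisfies: −Δũ(x) = φ(δ_K(x)) f(ũ(x)) and ũ(x) > 0 for all x ∈ ℝ^N \ K; ũ = 0 on ∂K; ũ(x) → 0 as |x| → ∞; and ũ is minimal, i.e. for every C² positive solution u of the inequality −Δu ≥ φ(δ_K(x)) f(u) on ℝ^N \ K one has ũ(x) ≤ u(x) for all x ∈ ℝ^N \ K. -/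

import Mathlib

open Metric Set MeasureTheory Filter

noncomputable def laplacian {N : ℕ} (u : EuclideanSpace ℝ (Fin N) → ℝ)
    (x : EuclideanSpace ℝ (Fin N)) : ℝ :=
  ∑ i, iteratedFDeriv ℝ 2 u x ![EuclideanSpace.single i 1, EuclideanSpace.single i 1]

/-!
At scale `ε` both singularities are removed: one solves
`-Δ W + p W = φ (max δ ε) * f (W + ε)` on the whole space, where `p = ε` away from `K` and `p` is
so large close to `K` that `W ≤ ε` there. On bounded continuous functions this is a fixed point
equation `W = (l - Δ)⁻¹ (l W - p W + φ (max δ ε) * f (W + ε))` with a contraction on the right for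
large `l`, since `f` is nonincreasing and Lipschitz away from zero. A mean value formula with
remainder passes to the limit `ε → 0`; by an interior bootstrap it makes the limit a `C²` solution.

The integral condition provides a bounded radial solution of `-Δ V = φ (|x - c i| - ρ i)` which
vanishes at infinity. Summing over the balls gives a barrier `V`, and `W ≤ s + ε + f s * V` for all
`s > 0` by comparison, so the limit vanishes at infinity. Near the ball `i` the distance to `K` is
`|x - c i| - ρ i`, and there the potential of that ball plus a multiple of
`1 - (ρ i / |x - c i|) ^ (N - 2)` is a barrier that vanishes on the sphere. Minimality is the
maximum principle applied to the positive part of `w - u`.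
-/

open scoped Topology Laplacian
open Module (finrank)

section LaplacianCalculus

lemma laplacian_eq_laplacian_innerProductSpace {N : ℕ} (u : EuclideanSpace ℝ (Fin N) → ℝ) :
    laplacian u = Δ u := by
  rw [InnerProductSpace.laplacian_eq_iteratedFDeriv_orthonormalBasis u
    (EuclideanSpace.basisFun (Fin N) ℝ)]
  ext x
  simp only [laplacian, EuclideanSpace.basisFun_apply]

lemma deriv_deriv_comp_line {E : Type*} [NormedAddCommGroup E] [NormedSpace ℝ E] {u : E → ℝ}
    {x : E} (hu : ContDiffAt ℝ 2 u x) (e : E) :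
    deriv (deriv fun t : ℝ => u (x + t • e)) 0 = fderiv ℝ (fderiv ℝ u) x e e := by
  have hline : ∀ t : ℝ, HasDerivAt (fun t : ℝ => x + t • e) e t := fun t => by
    simpa using ((hasDerivAt_id t).smul_const e).const_add x
  have htendsto : Tendsto (fun t : ℝ => x + t • e) (𝓝 0) (𝓝 x) := by
    have := (hline 0).continuousAt.tendsto
    simpa using this
  have hfst : deriv (fun t : ℝ => u (x + t • e)) =ᶠ[𝓝 0] fun t => fderiv ℝ u (x + t • e) e := by
    filter_upwards [htendsto.eventually (hu.eventually (by simp))] with t ht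
    exact ((ht.differentiableAt (by norm_num)).hasFDerivAt.comp_hasDerivAt t (hline t)).deriv
  have hu' : ContDiffAt ℝ 1 (fderiv ℝ u) x := hu.fderiv_right (by norm_num)
  have hsnd : HasFDerivAt (fderiv ℝ u) (fderiv ℝ (fderiv ℝ u) x) (x + (0 : ℝ) • e) := by
    simpa using (hu'.differentiableAt (by norm_num)).hasFDerivAt
  have hcomp := hsnd.comp_hasDerivAt (0 : ℝ) (hline 0)
  have happly := hcomp.clm_apply (hasDerivAt_const (0 : ℝ) e)
  rw [hfst.deriv_eq]
  exact happly.deriv.trans (by simp)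

lemma deriv_deriv_nonpos_of_isLocalMax {p : ℝ → ℝ} {t : ℝ} (hc : ContinuousAt p t)
    (hm : IsLocalMax p t) : deriv (deriv p) t ≤ 0 := by
  by_contra! hpos
  have hmin : IsLocalMin p t := isLocalMin_of_deriv_deriv_pos hpos hm.deriv_eq_zero hc
  have hconst : p =ᶠ[𝓝 t] fun _ => p t := by
    filter_upwards [hm, hmin] with s h h' using le_antisymm h h'
  rw [hconst.deriv.deriv_eq] at hpos
  simp at hpos

lemma contDiff_norm_sub_sq {E : Type*} [NormedAddCommGroup E] [InnerProductSpace ℝ E]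
    {n : WithTop ℕ∞} (c : E) : ContDiff ℝ n fun y : E => ‖y - c‖ ^ 2 :=
  (contDiff_norm_sq ℝ).comp (contDiff_id.sub contDiff_const)

lemma norm_fderiv_norm_sub {E : Type*} [NormedAddCommGroup E] [InnerProductSpace ℝ E] {c x : E}
    (hx : x ≠ c) : ‖fderiv ℝ (fun y => ‖y - c‖) x‖ = 1 := by
  have : Nontrivial E := ⟨x, c, hx⟩
  rw [fderiv_comp_sub (f := fun y : E => ‖y‖) c]
  exact norm_fderiv_norm
    ((contDiffAt_norm (n := 1) ℝ (sub_ne_zero.2 hx)).differentiableAt (by norm_num))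

variable {E : Type*} [NormedAddCommGroup E] [InnerProductSpace ℝ E] [FiniteDimensional ℝ E]

lemma laplacian_eq_sum_fderiv_fderiv {ι : Type*} [Fintype ι] (b : OrthonormalBasis ι ℝ E)
    (u : E → ℝ) (x : E) : Δ u x = ∑ i, fderiv ℝ (fderiv ℝ u) x (b i) (b i) := by
  simp [InnerProductSpace.laplacian_eq_iteratedFDeriv_orthonormalBasis u b,
    iteratedFDeriv_two_apply]

lemma laplacian_nonpos_of_isLocalMax {u : E → ℝ} {x : E} (hu : ContDiffAt ℝ 2 u x)
    (hm : IsLocalMax u x) : Δ u x ≤ 0 := by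
  rw [laplacian_eq_sum_fderiv_fderiv (stdOrthonormalBasis ℝ E)]
  refine Finset.sum_nonpos fun i _ => ?_
  rw [← deriv_deriv_comp_line hu]
  have hline : ContinuousAt (fun t : ℝ => x + t • stdOrthonormalBasis ℝ E i) 0 := by fun_prop
  have hx : x + (0 : ℝ) • stdOrthonormalBasis ℝ E i = x := by simp
  refine deriv_deriv_nonpos_of_isLocalMax
    (ContinuousAt.comp (by rw [hx]; exact hu.continuousAt) hline) ?_
  have htendsto := hline.tendsto
  rw [hx] at htendsto
  filter_upwards [htendsto.eventually hm] with t ht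
  rwa [hx]

lemma laplacian_comp {a : ℝ → ℝ} {u : E → ℝ} {x : E} (ha : ContDiffAt ℝ 2 a (u x))
    (hu : ContDiffAt ℝ 2 u x) :
    Δ (fun y => a (u y)) x
      = deriv (deriv a) (u x) * ‖fderiv ℝ u x‖ ^ 2 + deriv a (u x) * Δ u x := by
  have hfst : fderiv ℝ (fun y => a (u y)) =ᶠ[𝓝 x] fun y => deriv a (u y) • fderiv ℝ u y := by
    filter_upwards [hu.continuousAt.eventually (ha.eventually (by simp)),
      hu.eventually (by simp)] with y hay huy
    exact ((hay.differentiableAt (by norm_num)).hasDerivAt.comp_hasFDerivAt y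
      (huy.differentiableAt (by norm_num)).hasFDerivAt).fderiv
  have ha' : HasDerivAt (deriv a) (deriv (deriv a) (u x)) (u x) := by
    have : ContDiffAt ℝ 1 (deriv a) (u x) := by
      have h := ha.fderiv_right (m := 1) (by norm_num)
      exact h.clm_apply contDiffAt_const
    exact (this.differentiableAt (by norm_num)).hasDerivAt
  have hu' : HasFDerivAt u (fderiv ℝ u x) x := (hu.differentiableAt (by norm_num)).hasFDerivAt
  have hu'' : HasFDerivAt (fderiv ℝ u) (fderiv ℝ (fderiv ℝ u) x) x :=
    ((hu.fderiv_right (m := 1) (by norm_num)).differentiableAt (by norm_num)).hasFDerivAt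
  have hsnd : HasFDerivAt (fun y => deriv a (u y) • fderiv ℝ u y)
      (deriv a (u x) • fderiv ℝ (fderiv ℝ u) x +
        (deriv (deriv a) (u x) • fderiv ℝ u x).smulRight (fderiv ℝ u x)) x :=
    (ha'.comp_hasFDerivAt x hu').smul hu''
  have hnorm : ‖fderiv ℝ u x‖ ^ 2 = ∑ i, fderiv ℝ u x (stdOrthonormalBasis ℝ E i) ^ 2 := by
    rw [← (InnerProductSpace.toDual ℝ E).symm.norm_map,
      ← (stdOrthonormalBasis ℝ E).sum_sq_norm_inner_left]
    simp [InnerProductSpace.toDual_symm_apply]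
  simp only [laplacian_eq_sum_fderiv_fderiv (stdOrthonormalBasis ℝ E), hfst.fderiv_eq, hsnd.fderiv,
    hnorm, Finset.mul_sum, ← Finset.sum_add_distrib]
  refine Finset.sum_congr rfl fun i _ => ?_
  simp only [add_apply, smul_apply, ContinuousLinearMap.smulRight_apply, smul_eq_mul]
  ring

lemma laplacian_norm_sub_sq (c x : E) : Δ (fun y => ‖y - c‖ ^ 2) x = 2 * finrank ℝ E := by
  have hfst : fderiv ℝ (fun y : E => ‖y - c‖ ^ 2) = fun y => 2 • innerSL ℝ (y - c) := by
    ext1 y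
    rw [fderiv_comp_sub (f := fun y : E => ‖y‖ ^ 2) c, fderiv_norm_sq_apply]
  have hsnd : HasFDerivAt (fun y : E => 2 • innerSL ℝ (y - c)) (2 • innerSL ℝ) x :=
    ((innerSL ℝ).hasFDerivAt.comp x ((hasFDerivAt_id x).sub_const c)).const_smul 2
  have hinner : ∀ v : E, (innerSL ℝ : E →L[ℝ] E →L[ℝ] ℝ) v v = ‖v‖ ^ 2 :=
    real_inner_self_eq_norm_sq
  rw [laplacian_eq_sum_fderiv_fderiv (stdOrthonormalBasis ℝ E), hfst, hsnd.fderiv]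
  simp [hinner, mul_comm]

lemma laplacian_norm_sub {c x : E} (hx : x ≠ c) :
    Δ (fun y => ‖y - c‖) x = (finrank ℝ E - 1) / ‖x - c‖ := by
  have hx' : x - c ≠ 0 := sub_ne_zero.2 hx
  have : 0 < ‖x - c‖ := norm_pos_iff.2 hx'
  have hC2 : ContDiffAt ℝ 2 (fun y => ‖y - c‖) x :=
    (contDiffAt_id.sub contDiffAt_const).norm ℝ hx'
  have hsq := laplacian_comp (a := fun t => t ^ 2) (contDiff_id.pow 2).contDiffAt hC2
  rw [laplacian_norm_sub_sq, norm_fderiv_norm_sub hx] at hsq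
  have hd : deriv (fun t : ℝ => t ^ 2) = fun t => 2 * t := by ext t; simp
  simp only [hd, deriv_const_mul_id'] at hsq
  field_simp
  linarith

lemma laplacian_radial {v : ℝ → ℝ} {c x : E} (hx : x ≠ c) (hv : ContDiffAt ℝ 2 v ‖x - c‖) :
    Δ (fun y => v ‖y - c‖) x
      = deriv (deriv v) ‖x - c‖ + (finrank ℝ E - 1) / ‖x - c‖ * deriv v ‖x - c‖ := by
  have hx' : x - c ≠ 0 := sub_ne_zero.2 hx
  rw [laplacian_comp (u := fun y => ‖y - c‖) hv
    ((contDiffAt_id.sub contDiffAt_const).norm ℝ hx'), norm_fderiv_norm_sub hx,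
    laplacian_norm_sub hx]
  ring

lemma laplacian_sum {ι : Type*} (s : Finset ι) {u : ι → E → ℝ} {x : E}
    (hu : ∀ i ∈ s, ContDiffAt ℝ 2 (u i) x) :
    Δ (fun y => ∑ i ∈ s, u i y) x = ∑ i ∈ s, Δ (u i) x := by
  classical
  induction s using Finset.induction_on with
  | empty => simp [InnerProductSpace.laplacian_const]
  | insert i s hi ih =>
    simp only [Finset.sum_insert hi]
    have hs : ∀ j ∈ s, ContDiffAt ℝ 2 (u j) x := fun j hj => hu j (Finset.mem_insert_of_mem hj)
    rw [← ih hs]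
    exact (hu i (Finset.mem_insert_self i s)).laplacian_add (.sum hs)

lemma laplacian_le_of_isLocalMax_sub_mul_norm_sub_sq {u : E → ℝ} {a : ℝ} {c x : E}
    (hu : ContDiffAt ℝ 2 u x) (hm : IsLocalMax (fun y => u y - a * ‖y - c‖ ^ 2) x) :
    Δ u x ≤ 2 * finrank ℝ E * a := by
  have hsq : ContDiffAt ℝ 2 (fun y : E => a * ‖y - c‖ ^ 2) x :=
    contDiffAt_const.mul (contDiff_norm_sub_sq c).contDiffAt
  have hmul : Δ (fun y : E => a * ‖y - c‖ ^ 2) x = 2 * finrank ℝ E * a := by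
    have h := InnerProductSpace.laplacian_smul a (x := x)
      (contDiff_norm_sub_sq (n := 2) c).contDiffAt
    rw [laplacian_norm_sub_sq, smul_eq_mul, mul_comm] at h
    exact h
  have hsub : Δ (fun y => u y - a * ‖y - c‖ ^ 2) x = Δ u x - Δ (fun y : E => a * ‖y - c‖ ^ 2) x :=
    hu.laplacian_sub hsq
  linarith [laplacian_nonpos_of_isLocalMax (hu.sub hsq) hm]

end LaplacianCalculus

section Comparison

variable {E : Type*} [NormedAddCommGroup E] [InnerProductSpace ℝ E] [FiniteDimensional ℝ E]

lemma exists_forall_sub_mul_norm_sub_sq_le {v : E → ℝ} (hv : Continuous v) {B ε : ℝ} (hε : 0 < ε)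
    (hB : ∀ x, v x ≤ B) (c : E) :
    ∃ x, ∀ y, v y - ε * ‖y - c‖ ^ 2 ≤ v x - ε * ‖x - c‖ ^ 2 := by
  have hcompact : IsCompact {y | v c ≤ v y - ε * ‖y - c‖ ^ 2} := by
    refine Metric.isCompact_of_isClosed_isBounded
      (isClosed_le continuous_const (by fun_prop)) ?_
    refine (isBounded_closedBall (x := c) (r := √((B - v c) / ε))).subset fun y hy => ?_
    rw [mem_closedBall, dist_eq_norm]
    apply Real.le_sqrt_of_sq_le
    rw [le_div_iff₀ hε]
    rw [mem_ofPred_eq] at hy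
    linarith [hB y]
  obtain ⟨x, hx, hmax⟩ := hcompact.exists_isMaxOn ⟨c, by simp⟩
    (f := fun y => v y - ε * ‖y - c‖ ^ 2) (by fun_prop)
  refine ⟨x, fun y => ?_⟩
  by_cases hy : v c ≤ v y - ε * ‖y - c‖ ^ 2
  · exact hmax hy
  · exact (not_le.1 hy).le.trans hx

lemma nonpos_of_mul_le_laplacian {v : E → ℝ} (hc : Continuous v) {B κ : ℝ} (hκ : 0 < κ)
    (hB : ∀ x, v x ≤ B) (hv : ∀ x, 0 < v x → ContDiffAt ℝ 2 v x ∧ κ * v x ≤ Δ v x) (x : E) :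
    v x ≤ 0 := by
  by_contra! hpos
  set n : ℝ := (finrank ℝ E : ℝ)
  have : 0 ≤ n := Nat.cast_nonneg _
  obtain ⟨ε, hε, hε'⟩ : ∃ ε, 0 < ε ∧ 2 * n * ε < κ * v x := by
    refine ⟨κ * v x / (2 * n + 1), by positivity, ?_⟩
    rw [← mul_div_assoc, div_lt_iff₀ (by positivity)]
    nlinarith [mul_pos hκ hpos]
  obtain ⟨x₀, hmax⟩ := exists_forall_sub_mul_norm_sub_sq_le hc hε hB x
  have hx₀ : v x ≤ v x₀ := by
    have h := hmax x
    have : 0 ≤ ε * ‖x₀ - x‖ ^ 2 := by positivity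
    simp only [sub_self, norm_zero] at h
    linarith
  obtain ⟨hC2, hΔ⟩ := hv x₀ (hpos.trans_le hx₀)
  have hle := laplacian_le_of_isLocalMax_sub_mul_norm_sub_sq hC2 (Eventually.of_forall hmax)
  linarith [mul_le_mul_of_nonneg_left hx₀ hκ.le]

lemma nonpos_of_laplacian_nonneg_of_tendsto_zero [Nontrivial E] {v : E → ℝ} (hc : Continuous v)
    (hlim : Tendsto v (cocompact E) (𝓝 0))
    (hv : ∀ x, 0 < v x → ContDiffAt ℝ 2 v x ∧ 0 ≤ Δ v x) (x : E) : v x ≤ 0 := by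
  by_contra! hpos
  obtain ⟨R, hR⟩ : ∃ R, {y | v x / 2 ≤ v y} ⊆ closedBall x R := by
    have hlt := hlim.eventually (gt_mem_nhds (half_pos hpos))
    obtain ⟨t, ht, hsub⟩ := mem_cocompact.1 hlt
    obtain ⟨R, hR⟩ := ht.isBounded.subset_closedBall x
    exact ⟨R, fun y hy => hR (by_contra fun hyt => not_le.2 (mem_ofPred_eq ▸ hsub hyt) hy)⟩
  have hcompact : IsCompact {y | v x / 2 ≤ v y} :=
    (isCompact_closedBall x R).of_isClosed_subset (isClosed_le continuous_const hc) hR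
  set ε := v x / (2 * (R ^ 2 + 1)) with hε_def
  have hε : 0 < ε := by positivity
  have hεR : ε * R ^ 2 < v x / 2 := by
    rw [hε_def, div_mul_eq_mul_div, div_lt_iff₀ (by positivity)]
    nlinarith
  obtain ⟨x₀, hx₀, hmax⟩ := hcompact.exists_isMaxOn (f := fun y => v y - -ε * ‖y - x‖ ^ 2)
    ⟨x, by rw [mem_ofPred_eq]; linarith⟩ (by fun_prop)
  have hx₀R : ‖x₀ - x‖ ^ 2 ≤ R ^ 2 :=
    pow_le_pow_left₀ (norm_nonneg _) (mem_closedBall_iff_norm.1 (hR hx₀)) 2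
  have hlarge : v x / 2 < v x₀ := by
    have h : v x - -ε * ‖x - x‖ ^ 2 ≤ v x₀ - -ε * ‖x₀ - x‖ ^ 2 :=
      hmax (show v x / 2 ≤ v x by linarith)
    simp only [sub_self, norm_zero] at h
    nlinarith
  obtain ⟨hC2, hΔ⟩ := hv x₀ (by linarith)
  have hlocal : IsLocalMax (fun y => v y - -ε * ‖y - x‖ ^ 2) x₀ := by
    filter_upwards [hc.continuousAt.eventually (lt_mem_nhds hlarge)] with y hy using hmax hy.le
  have hle := laplacian_le_of_isLocalMax_sub_mul_norm_sub_sq hC2 hlocal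
  have hn : (0 : ℝ) < finrank ℝ E := Nat.cast_pos.2 Module.finrank_pos
  nlinarith [mul_pos hn hε]

end Comparison

section MeanKernel

/-- A pair of kernels `η`, `ζ` with `∇ζ(z) = -η(z) z`, integrable together with `‖z‖ η(z)`.  The
`η`-mean `∫ φ(x - s z) η(z) dz` then has `s`-derivative `s ∫ Δφ(x - s z) ζ(z) dz`. -/
structure IsMeanKernel {E : Type*} [NormedAddCommGroup E] [InnerProductSpace ℝ E]
    [FiniteDimensional ℝ E] [MeasurableSpace E] [BorelSpace E] (η ζ : E → ℝ) : Prop where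
  continuous : Continuous η
  contDiff_potential : ContDiff ℝ 1 ζ
  integrable : Integrable η
  integrable_potential : Integrable ζ
  integrable_norm_mul : Integrable fun z => ‖z‖ * η z
  fderiv_potential : ∀ z v, fderiv ℝ ζ z v = -η z * inner ℝ z v

lemma hasFDerivAt_sub_smul {E : Type*} [NormedAddCommGroup E] [NormedSpace ℝ E] (x : E) (s : ℝ)
    (z : E) : HasFDerivAt (fun z : E => x - s • z) (-(s • ContinuousLinearMap.id ℝ E)) z := by
  simpa using ((hasFDerivAt_id z).const_smul s).const_sub x

lemma hasDerivAt_sub_smul {E : Type*} [NormedAddCommGroup E] [NormedSpace ℝ E] (x : E) (s : ℝ)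
    (z : E) : HasDerivAt (fun s : ℝ => x - s • z) (-z) s := by
  simpa using ((hasDerivAt_id s).smul_const z).const_sub x

variable {E : Type*} [NormedAddCommGroup E] [InnerProductSpace ℝ E] [FiniteDimensional ℝ E]
  [MeasurableSpace E] [BorelSpace E]

lemma integrable_mul_of_continuous_of_le {k g : E → ℝ} {M : ℝ} (hk : Integrable k)
    (hg : Continuous g) (hM : ∀ x, |g x| ≤ M) : Integrable fun z => g z * k z :=
  hk.bdd_mul hg.aestronglyMeasurable (Eventually.of_forall hM)

lemma hasDerivAt_integral_sub_smul_mul {η φ : E → ℝ} {B₀ B₁ : ℝ} (hη : Continuous η)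
    (hη' : Integrable η) (hη₁ : Integrable fun z => ‖z‖ * η z) (hφ : ContDiff ℝ 1 φ)
    (hB₀ : ∀ x, |φ x| ≤ B₀) (hB₁ : ∀ x, ‖fderiv ℝ φ x‖ ≤ B₁) (x : E) (s : ℝ) :
    HasDerivAt (fun s : ℝ => ∫ z, φ (x - s • z) * η z)
      (∫ z, fderiv ℝ φ (x - s • z) (-z) * η z) s := by
  have hφc : Continuous φ := hφ.continuous
  have : Continuous (fderiv ℝ φ) := hφ.continuous_fderiv (by norm_num)
  refine (hasDerivAt_integral_of_dominated_loc_of_deriv_le (μ := volume)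
    (F' := fun (s : ℝ) z => fderiv ℝ φ (x - s • z) (-z) * η z)
    (bound := fun z => B₁ * ‖‖z‖ * η z‖) (s := univ) univ_mem
    (Eventually.of_forall fun s => Continuous.aestronglyMeasurable (by fun_prop))
    (integrable_mul_of_continuous_of_le hη' (by fun_prop) fun z => hB₀ _)
    (Continuous.aestronglyMeasurable (by fun_prop))
    (Eventually.of_forall fun z s _ => ?_) (hη₁.norm.const_mul B₁)
    (Eventually.of_forall fun z s _ => ?_)).2
  · rw [norm_mul, norm_mul, norm_norm, ← mul_assoc]
    gcongr
    refine ((fderiv ℝ φ _).le_opNorm _).trans ?_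
    rw [norm_neg]
    gcongr
    exact hB₁ _
  · have hline := hasDerivAt_sub_smul x s z
    have hφd := (hφ.differentiable (by norm_num) (x - s • z)).hasFDerivAt
    exact (hφd.comp_hasDerivAt s hline).mul_const _

lemma IsMeanKernel.fderiv_apply_neg_mul {ι : Type*} [Fintype ι] {η ζ : E → ℝ}
    (h : IsMeanKernel η ζ) (b : OrthonormalBasis ι ℝ E) (L : E →L[ℝ] ℝ) (z : E) :
    L (-z) * η z = ∑ i, L (b i) * fderiv ℝ ζ z (b i) := by
  conv_lhs => rw [← b.sum_repr' z]
  rw [map_neg, map_sum, neg_mul, Finset.sum_mul, ← Finset.sum_neg_distrib]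
  refine Finset.sum_congr rfl fun i _ => ?_
  rw [map_smul, h.fderiv_potential, real_inner_comm, b.sum_repr', smul_eq_mul]
  ring

lemma IsMeanKernel.integrable_fderiv_potential {η ζ : E → ℝ} (h : IsMeanKernel η ζ) (e : E) :
    Integrable fun z => fderiv ℝ ζ z e := by
  have hζ : Continuous (fderiv ℝ ζ) := h.contDiff_potential.continuous_fderiv (by norm_num)
  refine (h.integrable_norm_mul.mul_const ‖e‖).mono
    (Continuous.aestronglyMeasurable (by fun_prop)) (Eventually.of_forall fun z => ?_)
  rw [h.fderiv_potential, norm_mul, norm_mul, norm_mul, norm_norm, norm_norm, norm_neg,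
    mul_comm ‖z‖, mul_assoc]
  gcongr
  exact abs_real_inner_le_norm z e

lemma IsMeanKernel.integral_fderiv_mul_fderiv {η ζ φ : E → ℝ} {B₁ B₂ : ℝ}
    (h : IsMeanKernel η ζ) (hφ : ContDiff ℝ 2 φ) (hB₁ : ∀ x, ‖fderiv ℝ φ x‖ ≤ B₁)
    (hB₂ : ∀ x, ‖fderiv ℝ (fderiv ℝ φ) x‖ ≤ B₂) (x : E) (s : ℝ) (e : E) :
    Integrable (fun z => fderiv ℝ φ (x - s • z) e * fderiv ℝ ζ z e) ∧
    Integrable (fun z => fderiv ℝ (fderiv ℝ φ) (x - s • z) e e * ζ z) ∧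
    ∫ z, fderiv ℝ φ (x - s • z) e * fderiv ℝ ζ z e
      = s * ∫ z, fderiv ℝ (fderiv ℝ φ) (x - s • z) e e * ζ z := by
  have hφ' : ContDiff ℝ 1 (fderiv ℝ φ) := hφ.fderiv_right (by norm_num)
  have hφc : Continuous (fderiv ℝ φ) := hφ'.continuous
  have : Continuous (fderiv ℝ (fderiv ℝ φ)) := hφ'.continuous_fderiv (by norm_num)
  have hfst : ∀ y, |fderiv ℝ φ y e| ≤ B₁ * ‖e‖ := fun y =>
    ((fderiv ℝ φ y).le_opNorm e).trans (by gcongr; exact hB₁ y)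
  have hsnd : ∀ y, |fderiv ℝ (fderiv ℝ φ) y e e| ≤ B₂ * ‖e‖ * ‖e‖ := fun y =>
    ((fderiv ℝ (fderiv ℝ φ) y).le_opNorm₂ e e).trans (by gcongr; exact hB₂ y)
  have hcomp : ∀ z, HasFDerivAt (fun z => fderiv ℝ φ (x - s • z) e)
      (((fderiv ℝ (fderiv ℝ φ) (x - s • z)).comp
        (-(s • ContinuousLinearMap.id ℝ E))).flip e) z := fun z => by
    have hφd := (hφ'.differentiable (by norm_num) (x - s • z)).hasFDerivAt
    have hcomp := hφd.comp z (hasFDerivAt_sub_smul x s z)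
    refine (hcomp.clm_apply (hasFDerivAt_const e z)).congr_fderiv ?_
    ext v
    simp
  have hfd : ∀ z, fderiv ℝ (fun z => fderiv ℝ φ (x - s • z) e) z e * ζ z
      = -s * (fderiv ℝ (fderiv ℝ φ) (x - s • z) e e * ζ z) := fun z => by
    rw [(hcomp z).fderiv]
    simp only [ContinuousLinearMap.comp_neg, ContinuousLinearMap.comp_smulₛₗ, Real.ringHom_apply,
      ContinuousLinearMap.comp_id, ContinuousLinearMap.flip_apply, neg_apply, smul_apply,
      smul_eq_mul, neg_mul, neg_inj]
    ring
  have hint₁ : Integrable fun z => fderiv ℝ φ (x - s • z) e * fderiv ℝ ζ z e :=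
    integrable_mul_of_continuous_of_le (h.integrable_fderiv_potential e) (by fun_prop)
      fun z => hfst _
  have hint₂ : Integrable fun z => fderiv ℝ (fderiv ℝ φ) (x - s • z) e e * ζ z :=
    integrable_mul_of_continuous_of_le h.integrable_potential (by fun_prop) fun z => hsnd _
  refine ⟨hint₁, hint₂, ?_⟩
  rw [integral_mul_fderiv_eq_neg_fderiv_mul_of_integrable]
  · simp_rw [hfd]
    rw [integral_const_mul, neg_mul, neg_neg]
  · simpa only [hfd] using hint₂.const_mul (-s)
  · exact hint₁
  · exact integrable_mul_of_continuous_of_le h.integrable_potential (by fun_prop) fun z => hfst _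
  · exact fun z _ => (hcomp z).differentiableAt
  · exact fun z _ => h.contDiff_potential.differentiable (by norm_num) z

theorem IsMeanKernel.hasDerivAt_integral {η ζ φ : E → ℝ} {B₀ B₁ B₂ : ℝ}
    (h : IsMeanKernel η ζ) (hφ : ContDiff ℝ 2 φ) (hB₀ : ∀ x, |φ x| ≤ B₀)
    (hB₁ : ∀ x, ‖fderiv ℝ φ x‖ ≤ B₁) (hB₂ : ∀ x, ‖fderiv ℝ (fderiv ℝ φ) x‖ ≤ B₂) (x : E) (s : ℝ) :
    HasDerivAt (fun s : ℝ => ∫ z, φ (x - s • z) * η z) (s * ∫ z, Δ φ (x - s • z) * ζ z) s := by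
  set b := stdOrthonormalBasis ℝ E
  have hparts := fun i => h.integral_fderiv_mul_fderiv hφ hB₁ hB₂ x s (b i)
  refine (hasDerivAt_integral_sub_smul_mul h.continuous h.integrable h.integrable_norm_mul
    (hφ.of_le (by norm_num)) hB₀ hB₁ x s).congr_deriv ?_
  simp_rw [h.fderiv_apply_neg_mul b, laplacian_eq_sum_fderiv_fderiv b, Finset.sum_mul]
  rw [integral_finsetSum _ fun i _ => (hparts i).1, integral_finsetSum _ fun i _ => (hparts i).2.1,
    Finset.mul_sum]
  exact Finset.sum_congr rfl fun i _ => (hparts i).2.2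

end MeanKernel

section Bump

variable {E : Type*} [NormedAddCommGroup E]

/-- A smooth bump supported in the closed unit ball, the potential of the mean kernel
`bumpSlope`. -/
noncomputable def bump (z : E) : ℝ := expNegInvGlue (1 - ‖z‖ ^ 2)

/-- The kernel determined by `∇ bump (z) = -bumpSlope z • z`. -/
noncomputable def bumpSlope (z : E) : ℝ := 2 * deriv expNegInvGlue (1 - ‖z‖ ^ 2)

lemma bump_nonneg (z : E) : 0 ≤ bump z := expNegInvGlue.nonneg _

lemma bumpSlope_nonneg (z : E) : 0 ≤ bumpSlope z :=
  mul_nonneg zero_le_two expNegInvGlue.monotone.deriv_nonneg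

lemma bump_zero_pos : 0 < bump (0 : E) := expNegInvGlue.pos_of_pos (by simp)

lemma bump_eq_zero {z : E} (hz : 1 ≤ ‖z‖) : bump z = 0 :=
  expNegInvGlue.zero_of_nonpos (by nlinarith)

lemma bumpSlope_eq_zero {z : E} (hz : 1 ≤ ‖z‖) : bumpSlope z = 0 := by
  have hmin : IsLocalMin expNegInvGlue (1 - ‖z‖ ^ 2) := Eventually.of_forall fun t => by
    rw [expNegInvGlue.zero_of_nonpos (x := 1 - ‖z‖ ^ 2) (by nlinarith)]
    exact expNegInvGlue.nonneg t
  rw [bumpSlope, hmin.deriv_eq_zero, mul_zero]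

lemma tsupport_subset_closedBall_of_forall_eq_zero {F : Type*} [Zero F] {k : E → F} {R : ℝ}
    (h : ∀ z, R ≤ ‖z‖ → k z = 0) : tsupport k ⊆ closedBall 0 R := by
  refine closure_minimal (fun z hz => ?_) isClosed_closedBall
  rw [mem_closedBall, dist_zero_right]
  by_contra! hR
  exact hz (h z hR.le)

lemma tsupport_bump_subset : tsupport (bump : E → ℝ) ⊆ closedBall 0 1 :=
  tsupport_subset_closedBall_of_forall_eq_zero fun _ => bump_eq_zero

lemma tsupport_bumpSlope_subset : tsupport (bumpSlope : E → ℝ) ⊆ closedBall 0 1 :=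
  tsupport_subset_closedBall_of_forall_eq_zero fun _ => bumpSlope_eq_zero

lemma hasCompactSupport_bump [ProperSpace E] : HasCompactSupport (bump : E → ℝ) :=
  (isCompact_closedBall _ _).of_isClosed_subset (isClosed_tsupport _) tsupport_bump_subset

lemma hasCompactSupport_bumpSlope [ProperSpace E] : HasCompactSupport (bumpSlope : E → ℝ) :=
  (isCompact_closedBall _ _).of_isClosed_subset (isClosed_tsupport _) tsupport_bumpSlope_subset

variable [InnerProductSpace ℝ E]

lemma contDiff_bump : ContDiff ℝ 2 (bump : E → ℝ) :=
  expNegInvGlue.contDiff.comp (contDiff_const.sub (contDiff_norm_sq ℝ))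

lemma contDiff_bumpSlope : ContDiff ℝ 2 (bumpSlope : E → ℝ) := by
  have hglue : ContDiff ℝ (2 + 1) expNegInvGlue := expNegInvGlue.contDiff (n := 3)
  exact contDiff_const.mul ((contDiff_succ_iff_deriv.1 hglue).2.2.comp
    (contDiff_const.sub (contDiff_norm_sq ℝ)))

lemma fderiv_bump_apply (z v : E) : fderiv ℝ bump z v = -bumpSlope z * inner ℝ z v := by
  have hsq : HasFDerivAt (fun z : E => 1 - ‖z‖ ^ 2) (-(2 • innerSL ℝ z)) z := by
    simpa using ((hasStrictFDerivAt_norm_sq z).hasFDerivAt).const_sub (1 : ℝ)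
  have hglue : Differentiable ℝ expNegInvGlue :=
    (expNegInvGlue.contDiff (n := 1)).differentiable (by norm_num)
  have hcomp : fderiv ℝ bump z = _ :=
    ((hglue (1 - ‖z‖ ^ 2)).hasDerivAt.comp_hasFDerivAt z hsq).fderiv
  rw [hcomp]
  simp only [smul_neg, neg_apply, smul_apply, coe_innerSL_apply, nsmul_eq_mul, Nat.cast_ofNat,
    smul_eq_mul, bumpSlope, neg_mul, neg_inj]
  ring

variable [FiniteDimensional ℝ E] [MeasurableSpace E] [BorelSpace E]

lemma isMeanKernel_bump : IsMeanKernel (bumpSlope : E → ℝ) bump where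
  continuous := contDiff_bumpSlope.continuous
  contDiff_potential := contDiff_bump.of_le (by norm_num)
  integrable :=
    contDiff_bumpSlope.continuous.integrable_of_hasCompactSupport hasCompactSupport_bumpSlope
  integrable_potential :=
    contDiff_bump.continuous.integrable_of_hasCompactSupport hasCompactSupport_bump
  integrable_norm_mul := (continuous_norm.mul contDiff_bumpSlope.continuous)
    |>.integrable_of_hasCompactSupport hasCompactSupport_bumpSlope.mul_left
  fderiv_potential := fderiv_bump_apply

lemma integral_bump_pos : 0 < ∫ z : E, bump z :=
  contDiff_bump.continuous.integral_pos_of_hasCompactSupport_nonneg_nonzero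
    hasCompactSupport_bump bump_nonneg bump_zero_pos.ne'

lemma integral_bumpSlope_pos [Nontrivial E] : 0 < ∫ z : E, bumpSlope z := by
  obtain ⟨z, hz⟩ : ∃ z : E, bumpSlope z ≠ 0 := by
    by_contra! hzero
    obtain ⟨e, he⟩ := exists_norm_eq E zero_le_one
    have hconst := is_const_of_fderiv_eq_zero (𝕜 := ℝ) (f := (bump : E → ℝ))
      (contDiff_bump.differentiable (by norm_num))
      (fun z => by ext v; rw [fderiv_bump_apply, hzero]; simp) 0 e
    rw [bump_eq_zero he.ge] at hconst
    exact bump_zero_pos.ne' hconst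
  exact contDiff_bumpSlope.continuous.integral_pos_of_hasCompactSupport_nonneg_nonzero
    hasCompactSupport_bumpSlope bumpSlope_nonneg hz

end Bump

section DilatedConvolution

lemma hasCompactSupport_comp_inv_smul {E F : Type*} [NormedAddCommGroup E] [NormedSpace ℝ E]
    [Zero F] {k : E → F} (hk : HasCompactSupport k) {s : ℝ} (hs : 0 < s) :
    HasCompactSupport fun z => k (s⁻¹ • z) :=
  hk.comp_homeomorph (Homeomorph.smulOfNeZero s⁻¹ (inv_ne_zero hs.ne'))

lemma sub_smul_mem_closedBall {E : Type*} [NormedAddCommGroup E] [NormedSpace ℝ E] {x z : E}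
    {s r : ℝ} (hs : 0 ≤ s) (hsr : s ≤ r) (hz : ‖z‖ ≤ 1) : x - s • z ∈ closedBall x r := by
  rw [mem_closedBall, dist_eq_norm, sub_sub_cancel_left, norm_neg, norm_smul,
    Real.norm_of_nonneg hs]
  nlinarith

lemma norm_le_one_of_ne_zero {E F : Type*} [NormedAddCommGroup E] [Zero F] {k : E → F}
    (hk : tsupport k ⊆ closedBall 0 1) {z : E} (hz : k z ≠ 0) : ‖z‖ ≤ 1 :=
  mem_closedBall_zero_iff.1 (hk (subset_tsupport k hz))

lemma contDiff_two_of_hasFDerivAt {E F : Type*} [NormedAddCommGroup E] [NormedSpace ℝ E]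
    [NormedAddCommGroup F] [NormedSpace ℝ F] {f : E → F} {f' : E → (E →L[ℝ] F)}
    {f'' : E → (E →L[ℝ] E →L[ℝ] F)} (hf : ∀ x, HasFDerivAt f (f' x) x)
    (hf' : ∀ x, HasFDerivAt f' (f'' x) x) (hf'' : Continuous f'') : ContDiff ℝ 2 f := by
  have hsnd : fderiv ℝ f' = f'' := funext fun x => (hf' x).fderiv
  have hfst : fderiv ℝ f = f' := funext fun x => (hf x).fderiv
  have hC1 : ContDiff ℝ 1 f' :=
    contDiff_one_iff_fderiv.2 ⟨fun x => (hf' x).differentiableAt, hsnd ▸ hf''⟩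
  rw [← one_add_one_eq_two, contDiff_succ_iff_fderiv]
  exact ⟨fun x => (hf x).differentiableAt, by simp, hfst ▸ hC1⟩

/-- The convolution of `g` with the kernel `k` dilated to scale `s`, in the form
`∫ g(x - s z) k(z) dz`. -/
noncomputable def dilatedConv {E F : Type*} [NormedAddCommGroup E] [InnerProductSpace ℝ E]
    [FiniteDimensional ℝ E] [MeasurableSpace E] [BorelSpace E] [NormedAddCommGroup F]
    [NormedSpace ℝ F] (g : E → ℝ) (k : E → F) (s : ℝ) (x : E) : F :=
  ∫ z, g (x - s • z) • k z

variable {E : Type*} [NormedAddCommGroup E] [InnerProductSpace ℝ E] [FiniteDimensional ℝ E]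
  [MeasurableSpace E] [BorelSpace E] {F : Type*} [NormedAddCommGroup F] [NormedSpace ℝ F]

lemma dilatedConv_eq_convolution (g : E → ℝ) (k : E → F) {s : ℝ} (hs : 0 < s) :
    dilatedConv g k s = (s ^ finrank ℝ E)⁻¹ •
      convolution g (fun z => k (s⁻¹ • z)) (ContinuousLinearMap.lsmul ℝ ℝ) volume := by
  ext x
  have hscale := Measure.integral_comp_smul (volume : Measure E)
    (fun y => g (x - y) • k (s⁻¹ • y)) s
  have hshift := integral_sub_left_eq_self (fun t => g t • k (s⁻¹ • (x - t)))
    (volume : Measure E) x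
  simp only [smul_smul, inv_mul_cancel₀ hs.ne', one_smul] at hscale
  simp only [sub_sub_cancel] at hshift
  rw [dilatedConv, hscale, hshift, abs_of_pos (by positivity)]
  rfl

lemma locallyIntegrable_of_measurable_of_le {g : E → ℝ} (hg : Measurable g) {M : ℝ}
    (hM : ∀ x, |g x| ≤ M) : LocallyIntegrable g := fun x =>
  ⟨ball x 1, ball_mem_nhds x one_pos, Measure.integrableOn_of_bounded (M := M)
    measure_ball_lt_top.ne hg.aestronglyMeasurable (Eventually.of_forall fun x => hM x)⟩

lemma continuous_dilatedConv {g : E → ℝ} (hg : Measurable g) {M : ℝ} (hM : ∀ x, |g x| ≤ M)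
    {k : E → F} (hk : Continuous k) (hks : HasCompactSupport k) {s : ℝ} (hs : 0 < s) :
    Continuous (dilatedConv g k s) := by
  rw [dilatedConv_eq_convolution g k hs]
  exact (HasCompactSupport.continuous_convolution_right _ (hasCompactSupport_comp_inv_smul hks hs)
    (locallyIntegrable_of_measurable_of_le hg hM) (hk.comp (continuous_const_smul _))).const_smul _

lemma hasFDerivAt_dilatedConv [CompleteSpace F] {g : E → ℝ} (hg : Measurable g) {M : ℝ}
    (hM : ∀ x, |g x| ≤ M) {k : E → F} (hk : ContDiff ℝ 1 k) (hks : HasCompactSupport k) {s : ℝ}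
    (hs : 0 < s) (x : E) :
    HasFDerivAt (dilatedConv g k s) (s⁻¹ • dilatedConv g (fderiv ℝ k) s x) x := by
  have hconv := HasCompactSupport.hasFDerivAt_convolution_right (ContinuousLinearMap.lsmul ℝ ℝ)
    (hasCompactSupport_comp_inv_smul hks hs) (locallyIntegrable_of_measurable_of_le hg hM)
    (hk.comp (contDiff_id.const_smul s⁻¹)) x
  have hfderiv : fderiv ℝ (fun z => k (s⁻¹ • z)) = fun y => s⁻¹ • fderiv ℝ k (s⁻¹ • y) :=
    funext fun y => fderiv_comp_smul (𝕜 := ℝ) (f := k) (x := y) s⁻¹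
  rw [dilatedConv_eq_convolution g k hs, dilatedConv_eq_convolution g (fderiv ℝ k) hs]
  refine (hconv.const_smul (s ^ finrank ℝ E)⁻¹).congr_fderiv ?_
  rw [Pi.smul_apply, smul_comm]
  congr 1
  rw [convolution, convolution, ← integral_smul, hfderiv]
  refine integral_congr_ae (Eventually.of_forall fun t => ?_)
  ext v
  simp only [ContinuousLinearMap.precompR_apply, ContinuousLinearMap.lsmul_apply, smul_apply]
  exact smul_comm _ _ _

lemma stronglyMeasurable_dilatedConv_scale {g : E → ℝ} (hg : Measurable g) {k : E → F}
    (hk : Continuous k) (hks : HasCompactSupport k) (x : E) :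
    StronglyMeasurable fun s => dilatedConv g k s x := by
  have hgm : Measurable fun p : ℝ × E => g (x - p.1 • p.2) := hg.comp (by fun_prop)
  exact StronglyMeasurable.integral_prod_right'
    (f := fun p : ℝ × E => g (x - p.1 • p.2) • k p.2) (hgm.stronglyMeasurable.smul
      ((hk.stronglyMeasurable_of_hasCompactSupport hks).comp_measurable measurable_snd))

lemma continuous_dilatedConv_scale {g k : E → ℝ} (hg : Continuous g) {M : ℝ}
    (hM : ∀ x, |g x| ≤ M) (hk : Integrable k) (x : E) :
    Continuous fun s => dilatedConv g k s x := by
  refine continuous_of_dominated (bound := fun z => M * ‖k z‖)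
    (fun s => (Continuous.aestronglyMeasurable (by fun_prop)).mul hk.aestronglyMeasurable)
    (fun s => Eventually.of_forall fun z => ?_) (hk.norm.const_mul M)
    (Eventually.of_forall fun z => by fun_prop)
  rw [norm_smul]
  exact mul_le_mul_of_nonneg_right (hM _) (norm_nonneg _)

lemma norm_dilatedConv_le {g : E → ℝ} {M : ℝ} (hM : ∀ x, |g x| ≤ M) {k : E → F}
    (hk : Integrable k) (s : ℝ) (x : E) : ‖dilatedConv g k s x‖ ≤ M * ∫ z, ‖k z‖ := by
  rw [dilatedConv, ← integral_const_mul]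
  refine norm_integral_le_of_norm_le (hk.norm.const_mul M) (Eventually.of_forall fun z => ?_)
  rw [norm_smul]
  exact mul_le_mul_of_nonneg_right (hM _) (norm_nonneg _)

lemma dilatedConv_congr {g g' : E → ℝ} {k : E → F} (hk : tsupport k ⊆ closedBall 0 1) {s r : ℝ}
    {x : E} (hs : 0 ≤ s) (hsr : s ≤ r) (h : EqOn g g' (closedBall x r)) :
    dilatedConv g k s x = dilatedConv g' k s x := by
  refine integral_congr_ae (Eventually.of_forall fun z => ?_)
  by_cases hz : k z = 0
  · simp [hz]
  · simp only [h (sub_smul_mem_closedBall hs hsr (norm_le_one_of_ne_zero hk hz))]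

/-- For a kernel of mean zero, `g(x - s z)` may be replaced by `g(x - s z) - g(x) = O(s ^ γ)`. -/
lemma norm_dilatedConv_le_of_holderWith {g : E → ℝ} (hg : Measurable g) {M : ℝ}
    (hM : ∀ x, |g x| ≤ M) {C γ : NNReal} (hH : HolderWith C γ g) {k : E → F} (hk : Integrable k)
    (hks : tsupport k ⊆ closedBall 0 1) (hk0 : ∫ z, k z = 0) {s : ℝ} (hs : 0 < s) (x : E) :
    ‖dilatedConv g k s x‖ ≤ C * s ^ (γ : ℝ) * ∫ z, ‖k z‖ := by
  have hint : Integrable fun z => g (x - s • z) • k z :=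
    hk.bdd_smul M (hg.comp (by fun_prop : Measurable fun z => x - s • z)).aestronglyMeasurable
      (Eventually.of_forall fun z => hM _)
  have hint' : Integrable fun z => g x • k z := hk.smul (g x)
  have hsub : dilatedConv g k s x = ∫ z, (g (x - s • z) - g x) • k z := by
    simp_rw [sub_smul]
    rw [integral_sub hint hint', integral_smul, hk0, smul_zero, sub_zero, dilatedConv]
  rw [hsub, ← integral_const_mul]
  refine norm_integral_le_of_norm_le (hk.norm.const_mul _) (Eventually.of_forall fun z => ?_)
  by_cases hz : k z = 0
  · simp [hz]
  · rw [norm_smul]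
    refine mul_le_mul_of_nonneg_right ?_ (norm_nonneg _)
    exact hH.dist_le_of_le (sub_smul_mem_closedBall hs.le le_rfl (norm_le_one_of_ne_zero hks hz))

lemma integral_fderiv_eq_zero [CompleteSpace F] {k : E → F} (hk : ContDiff ℝ 1 k)
    (hks : HasCompactSupport k) : ∫ z, fderiv ℝ k z = 0 := by
  have hderiv := hasFDerivAt_dilatedConv (g := fun _ => 1) measurable_const (M := 1) (by simp)
    hk hks one_pos 0
  have hconst : dilatedConv (fun _ => 1) k 1 = fun _ => ∫ z, k z := by
    ext x
    simp [dilatedConv]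
  rw [hconst] at hderiv
  simpa [dilatedConv] using hderiv.unique (hasFDerivAt_const _ _)

lemma contDiff_two_dilatedConv {g : E → ℝ} (hg : Measurable g) {M : ℝ} (hM : ∀ x, |g x| ≤ M)
    {k : E → ℝ} (hk : ContDiff ℝ 2 k) (hks : HasCompactSupport k) {s : ℝ} (hs : 0 < s) :
    ContDiff ℝ 2 (dilatedConv g k s) := by
  have hk' : ContDiff ℝ 1 (fderiv ℝ k) := hk.fderiv_right (by norm_num)
  have hcont := continuous_dilatedConv hg hM (hk'.continuous_fderiv (by norm_num))
    ((hks.fderiv ℝ).fderiv ℝ) hs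
  exact contDiff_two_of_hasFDerivAt
    (fun x => hasFDerivAt_dilatedConv hg hM (hk.of_le (by norm_num)) hks hs x)
    (fun x => (hasFDerivAt_dilatedConv hg hM hk' (hks.fderiv ℝ) hs x).const_smul s⁻¹)
    ((hcont.const_smul s⁻¹).const_smul s⁻¹)

end DilatedConvolution

section Potential

variable {E : Type*} [NormedAddCommGroup E] [InnerProductSpace ℝ E] [FiniteDimensional ℝ E]
  [MeasurableSpace E] [BorelSpace E] {F : Type*} [NormedAddCommGroup F] [NormedSpace ℝ F]

lemma hasFDerivAt_integral_smul_dilatedConv [CompleteSpace F] {g : E → ℝ} (hg : Measurable g)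
    {M : ℝ} (hM : ∀ x, |g x| ≤ M) {k : E → F} (hk : ContDiff ℝ 1 k) (hks : HasCompactSupport k)
    {a a' b : ℝ → ℝ} {r : ℝ} (hr : 0 < r) (ha : Continuous a) (ha' : Measurable a')
    (haa' : ∀ s ∈ Ioc 0 r, a s * s⁻¹ = a' s) (hb : IntervalIntegrable b volume 0 r)
    (hle : ∀ s ∈ Ioc 0 r, ∀ x, ‖a' s • dilatedConv g (fderiv ℝ k) s x‖ ≤ b s) (x : E) :
    HasFDerivAt (fun x => ∫ s in 0..r, a s • dilatedConv g k s x)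
      (∫ s in 0..r, a' s • dilatedConv g (fderiv ℝ k) s x) x := by
  have hmeas : ∀ x, AEStronglyMeasurable (fun s => a s • dilatedConv g k s x)
      (volume.restrict (Ioc 0 r)) := fun x => ha.aestronglyMeasurable.smul
    (stronglyMeasurable_dilatedConv_scale hg hk.continuous hks x).aestronglyMeasurable
  have hmeas' : AEStronglyMeasurable (fun s => a' s • dilatedConv g (fderiv ℝ k) s x)
      (volume.restrict (Ioc 0 r)) := ha'.aestronglyMeasurable.smul
    (stronglyMeasurable_dilatedConv_scale hg (hk.continuous_fderiv one_ne_zero) (hks.fderiv ℝ)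
      x).aestronglyMeasurable
  have hint : IntegrableOn (fun s => a s • dilatedConv g k s x) (Ioc 0 r) := by
    obtain ⟨A, hA⟩ := isCompact_Icc.exists_bound_of_continuousOn (ha.continuousOn (s := Icc 0 r))
    refine Integrable.of_bound (hmeas x) (A * (M * ∫ z, ‖k z‖)) ?_
    refine (ae_restrict_iff' measurableSet_Ioc).2 (Eventually.of_forall fun s hs => ?_)
    have hAs := hA s (Ioc_subset_Icc_self hs)
    rw [norm_smul]
    exact mul_le_mul hAs (norm_dilatedConv_le hM (hk.continuous.integrable_of_hasCompactSupport hks)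
      s x) (norm_nonneg _) ((norm_nonneg _).trans hAs)
  simp_rw [intervalIntegral.integral_of_le hr.le]
  refine hasFDerivAt_integral_of_dominated_of_fderiv_le (𝕜 := ℝ) (bound := b) (s := univ)
    (F' := fun x s => a' s • dilatedConv g (fderiv ℝ k) s x) univ_mem
    (Eventually.of_forall hmeas) hint hmeas' ?_
    ((intervalIntegrable_iff_integrableOn_Ioc_of_le hr.le).1 hb) ?_
  · exact (ae_restrict_iff' measurableSet_Ioc).2 (Eventually.of_forall fun s hs x _ => hle s hs x)
  · refine (ae_restrict_iff' measurableSet_Ioc).2 (Eventually.of_forall fun s hs x _ => ?_)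
    refine ((hasFDerivAt_dilatedConv hg hM hk hks hs.1 x).const_smul (a s)).congr_fderiv ?_
    rw [smul_smul, haa' s hs]

lemma continuous_integral_smul_dilatedConv {g : E → ℝ} (hg : Measurable g) {M : ℝ}
    (hM : ∀ x, |g x| ≤ M) {k : E → F} (hk : Continuous k) (hks : HasCompactSupport k)
    {a b : ℝ → ℝ} {r : ℝ} (hr : 0 < r) (ha : Measurable a) (hb : IntervalIntegrable b volume 0 r)
    (hle : ∀ s ∈ Ioc 0 r, ∀ x, ‖a s • dilatedConv g k s x‖ ≤ b s) :
    Continuous fun x => ∫ s in 0..r, a s • dilatedConv g k s x := by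
  simp_rw [intervalIntegral.integral_of_le hr.le]
  refine continuous_of_dominated (bound := b) (fun x => ha.aestronglyMeasurable.smul
    (stronglyMeasurable_dilatedConv_scale hg hk hks x).aestronglyMeasurable) (fun x => ?_)
    ((intervalIntegrable_iff_integrableOn_Ioc_of_le hr.le).1 hb) ?_
  · exact (ae_restrict_iff' measurableSet_Ioc).2 (Eventually.of_forall fun s hs => hle s hs x)
  · exact (ae_restrict_iff' measurableSet_Ioc).2 (Eventually.of_forall fun s hs =>
      (continuous_dilatedConv hg hM hk hks hs.1).const_smul _)

lemma hasFDerivAt_integral_scale_smul_dilatedConv [CompleteSpace F] {g : E → ℝ}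
    (hg : Measurable g) {M : ℝ} (hM : ∀ x, |g x| ≤ M) {k : E → F} (hk : ContDiff ℝ 1 k)
    (hks : HasCompactSupport k) {r : ℝ} (hr : 0 < r) (x : E) :
    HasFDerivAt (fun x => ∫ s in 0..r, s • dilatedConv g k s x)
      (∫ s in 0..r, (1 : ℝ) • dilatedConv g (fderiv ℝ k) s x) x := by
  have hint : Integrable (fderiv ℝ k) :=
    (hk.continuous_fderiv one_ne_zero).integrable_of_hasCompactSupport (hks.fderiv ℝ)
  exact hasFDerivAt_integral_smul_dilatedConv (a' := fun _ => 1) hg hM hk hks hr continuous_id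
    measurable_const (fun s hs => mul_inv_cancel₀ hs.1.ne') intervalIntegrable_const
    (fun s _ x => (one_smul ℝ (dilatedConv g (fderiv ℝ k) s x)).symm ▸
      norm_dilatedConv_le hM hint s x) x

lemma exists_hasFDerivAt_integral_dilatedConv_of_holderWith [CompleteSpace F] {g : E → ℝ}
    (hg : Measurable g) {M : ℝ} (hM : ∀ x, |g x| ≤ M) {C γ : NNReal} (hγ : 0 < γ)
    (hH : HolderWith C γ g) {k : E → F} (hk : ContDiff ℝ 1 k) (hks : tsupport k ⊆ closedBall 0 1)
    {r : ℝ} (hr : 0 < r) :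
    ∃ I' : E → (E →L[ℝ] F), Continuous I' ∧
      ∀ x, HasFDerivAt (fun x => ∫ s in 0..r, (1 : ℝ) • dilatedConv g k s x) (I' x) x := by
  have hkc : HasCompactSupport k := HasCompactSupport.of_support_subset_isCompact
    (isCompact_closedBall 0 1) ((subset_tsupport k).trans hks)
  have hk' : Continuous (fderiv ℝ k) := hk.continuous_fderiv one_ne_zero
  have hint : Integrable (fderiv ℝ k) := hk'.integrable_of_hasCompactSupport (hkc.fderiv ℝ)
  have hle : ∀ s ∈ Ioc 0 r, ∀ x, ‖s⁻¹ • dilatedConv g (fderiv ℝ k) s x‖ ≤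
      C * (∫ z, ‖fderiv ℝ k z‖) * s ^ ((γ : ℝ) - 1) := by
    intro s hs x
    rw [norm_smul, norm_inv, Real.norm_of_nonneg hs.1.le]
    calc s⁻¹ * ‖dilatedConv g (fderiv ℝ k) s x‖
        ≤ s⁻¹ * (C * s ^ (γ : ℝ) * ∫ z, ‖fderiv ℝ k z‖) :=
          mul_le_mul_of_nonneg_left (norm_dilatedConv_le_of_holderWith hg hM hH hint
            ((tsupport_fderiv_subset ℝ).trans hks) (integral_fderiv_eq_zero hk hkc) hs.1 x)
            (inv_nonneg.2 hs.1.le)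
      _ = C * (∫ z, ‖fderiv ℝ k z‖) * s ^ ((γ : ℝ) - 1) := by
          rw [Real.rpow_sub_one hs.1.ne']
          field_simp
  have hrpow : IntervalIntegrable (fun s : ℝ => C * (∫ z, ‖fderiv ℝ k z‖) * s ^ ((γ : ℝ) - 1))
      volume 0 r :=
    (intervalIntegral.intervalIntegrable_rpow' (by linarith [NNReal.coe_pos.2 hγ])).const_mul _
  exact ⟨fun x => ∫ s in 0..r, s⁻¹ • dilatedConv g (fderiv ℝ k) s x,
    continuous_integral_smul_dilatedConv hg hM hk' (hkc.fderiv ℝ) hr measurable_inv hrpow hle,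
    hasFDerivAt_integral_smul_dilatedConv (a := fun _ => 1) hg hM hk hkc hr continuous_const
      measurable_inv (fun s _ => one_mul _) hrpow hle⟩

/-- The potential `∫₀ʳ s (∫ g(x - s z) ζ(z) dz) ds`, with `ζ` the standard bump, which is the
error term in the mean value formula. -/
noncomputable def bumpPotential (g : E → ℝ) (r : ℝ) (x : E) : ℝ :=
  ∫ s in 0..r, s • dilatedConv g bump s x

lemma hasFDerivAt_bumpPotential {g : E → ℝ} (hg : Measurable g) {M : ℝ} (hM : ∀ x, |g x| ≤ M)
    {r : ℝ} (hr : 0 < r) (x : E) : HasFDerivAt (bumpPotential g r)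
      (∫ s in 0..r, (1 : ℝ) • dilatedConv g (fderiv ℝ bump) s x) x :=
  hasFDerivAt_integral_scale_smul_dilatedConv hg hM (contDiff_bump.of_le (by norm_num))
    hasCompactSupport_bump hr x

lemma contDiff_two_bumpPotential {g : E → ℝ} (hg : Measurable g) {M : ℝ} (hM : ∀ x, |g x| ≤ M)
    {C γ : NNReal} (hγ : 0 < γ) (hH : HolderWith C γ g) {r : ℝ} (hr : 0 < r) :
    ContDiff ℝ 2 (bumpPotential g r) := by
  obtain ⟨I', hI', hderiv⟩ := exists_hasFDerivAt_integral_dilatedConv_of_holderWith hg hM hγ hH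
    (contDiff_bump.fderiv_right (m := 1) (by norm_num))
    ((tsupport_fderiv_subset ℝ).trans tsupport_bump_subset) hr
  exact contDiff_two_of_hasFDerivAt (hasFDerivAt_bumpPotential hg hM hr) hderiv hI'

lemma bumpPotential_congr {g g' : E → ℝ} {r : ℝ} (hr : 0 ≤ r) {x : E}
    (h : EqOn g g' (closedBall x r)) : bumpPotential g r x = bumpPotential g' r x := by
  refine intervalIntegral.integral_congr fun s hs => ?_
  rw [uIcc_of_le hr] at hs
  simp only [dilatedConv_congr tsupport_bump_subset hs.1 hs.2 h]

end Potential

section MeanValue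

lemma exists_lipschitzWith_one_retraction {E : Type*} [NormedAddCommGroup E]
    [InnerProductSpace ℝ E] {K : Set E} (hne : K.Nonempty) (hK : IsComplete K)
    (hconv : Convex ℝ K) :
    ∃ π : E → E, (∀ x, π x ∈ K) ∧ (∀ x ∈ K, π x = x) ∧ LipschitzWith 1 π := by
  choose π hπK hπmin using exists_norm_eq_iInf_of_complete_convex hne hK hconv
  have hobtuse : ∀ x, ∀ w ∈ K, inner ℝ (x - π x) (w - π x) ≤ 0 := fun x =>
    (norm_eq_iInf_iff_real_inner_le_zero hconv (hπK x)).1 (hπmin x)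
  refine ⟨π, hπK, fun x hx => ?_, LipschitzWith.of_dist_le_mul fun x y => ?_⟩
  · have hself := hobtuse x x hx
    rw [real_inner_self_eq_norm_sq] at hself
    exact (sub_eq_zero.1 (norm_eq_zero.1 (pow_eq_zero_iff two_ne_zero |>.1
      (le_antisymm hself (sq_nonneg _))))).symm
  · have hsq : ‖π x - π y‖ ^ 2 ≤ ‖x - y‖ * ‖π x - π y‖ := by
      have hx := hobtuse x (π y) (hπK y)
      have hy := hobtuse y (π x) (hπK x)
      have hsum : inner ℝ (π x - π y) (π x - π y) = inner ℝ (x - y) (π x - π y) +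
          inner ℝ (x - π x) (π y - π x) + inner ℝ (y - π y) (π x - π y) := by
        simp only [inner_sub_left, inner_sub_right]
        ring
      rw [← real_inner_self_eq_norm_sq]
      linarith [real_inner_le_norm (x - y) (π x - π y)]
    rw [NNReal.coe_one, one_mul, dist_eq_norm, dist_eq_norm]
    by_contra! hlt
    nlinarith [norm_nonneg (x - y)]

variable {E : Type*} [NormedAddCommGroup E] [InnerProductSpace ℝ E] [FiniteDimensional ℝ E]
  [MeasurableSpace E] [BorelSpace E]

/-- The mean value formula at `x` and scale `r` satisfied by every solution of `-Δ w = g` near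
`closedBall x r`: with `η = bumpSlope` and `ζ = bump`,
`(∫ η) w(x) = ∫ w(x - r z) η(z) dz + ∫₀ʳ s ∫ g(x - s z) ζ(z) dz ds`. -/
def MeanValueFormulaAt (w g : E → ℝ) (x : E) (r : ℝ) : Prop :=
  (∫ z : E, bumpSlope z) * w x = dilatedConv w bumpSlope r x + bumpPotential g r x

/-- An integrated form of the equation `-Δ w = g` on `U`, stable under monotone limits: the mean
value formula holds on every closed ball contained in `U`. -/
def HasMeanValueFormula (U : Set E) (w g : E → ℝ) : Prop :=
  ∀ x r, 0 < r → closedBall x r ⊆ U → MeanValueFormulaAt w g x r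

lemma MeanValueFormulaAt.congr {w w' g g' : E → ℝ} {x : E} {r : ℝ}
    (h : MeanValueFormulaAt w g x r) (hr : 0 ≤ r) (hw : EqOn w w' (closedBall x r))
    (hg : EqOn g g' (closedBall x r)) : MeanValueFormulaAt w' g' x r := by
  rw [MeanValueFormulaAt, ← hw (mem_closedBall_self hr), ← bumpPotential_congr hr hg,
    ← dilatedConv_congr tsupport_bumpSlope_subset hr le_rfl hw]
  exact h

lemma MeanValueFormulaAt.eq [Nontrivial E] {w g : E → ℝ} {x : E} {r : ℝ}
    (h : MeanValueFormulaAt w g x r) :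
    w x = (∫ z : E, bumpSlope z)⁻¹ * (dilatedConv w bumpSlope r x + bumpPotential g r x) := by
  rw [← h, inv_mul_cancel_left₀ integral_bumpSlope_pos.ne']

lemma HasMeanValueFormula.eqOn_ball [Nontrivial E] {U : Set E} {w g w' g' : E → ℝ}
    (h : HasMeanValueFormula U w g) {x₀ : E} {r : ℝ} (hr : 0 < r)
    (hU : closedBall x₀ (2 * r) ⊆ U) (hw : EqOn w w' (closedBall x₀ (2 * r)))
    (hg : EqOn g g' (closedBall x₀ (2 * r))) :
    EqOn w (fun x => (∫ z : E, bumpSlope z)⁻¹ *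
      (dilatedConv w' bumpSlope r x + bumpPotential g' r x)) (ball x₀ r) := by
  intro x hx
  have hsub : closedBall x r ⊆ closedBall x₀ (2 * r) :=
    closedBall_subset_closedBall' (by linarith [mem_ball.1 hx])
  have hx₀ : x ∈ closedBall x₀ (2 * r) := hsub (mem_closedBall_self hr.le)
  rw [hw hx₀]
  exact ((h x r hr (hsub.trans hU)).congr hr.le (hw.mono hsub) (hg.mono hsub)).eq

lemma exists_lipschitzWith_dilatedConv {g : E → ℝ} (hg : Measurable g) {M : ℝ}
    (hM : ∀ x, |g x| ≤ M) {k : E → ℝ} (hk : ContDiff ℝ 1 k) (hks : HasCompactSupport k) {s : ℝ}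
    (hs : 0 < s) : ∃ L, LipschitzWith L (dilatedConv g k s) := by
  have hint : Integrable (fderiv ℝ k) :=
    (hk.continuous_fderiv one_ne_zero).integrable_of_hasCompactSupport (hks.fderiv ℝ)
  refine ⟨(s⁻¹ * (M * ∫ z, ‖fderiv ℝ k z‖)).toNNReal, lipschitzWith_of_nnnorm_fderiv_le (𝕜 := ℝ)
    (fun x => (hasFDerivAt_dilatedConv hg hM hk hks hs x).differentiableAt) fun x => ?_⟩
  rw [(hasFDerivAt_dilatedConv hg hM hk hks hs x).fderiv, ← norm_toNNReal]
  refine Real.toNNReal_le_toNNReal ?_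
  rw [norm_smul, norm_inv, Real.norm_of_nonneg hs.le]
  exact mul_le_mul_of_nonneg_left (norm_dilatedConv_le hM hint s x) (inv_nonneg.2 hs.le)

lemma exists_lipschitzWith_bumpPotential {g : E → ℝ} (hg : Measurable g) {M : ℝ}
    (hM : ∀ x, |g x| ≤ M) {r : ℝ} (hr : 0 < r) : ∃ L, LipschitzWith L (bumpPotential g r) := by
  have hint : Integrable (fderiv ℝ (bump : E → ℝ)) :=
    (contDiff_bump.continuous_fderiv two_ne_zero).integrable_of_hasCompactSupport
      (hasCompactSupport_bump.fderiv ℝ)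
  refine ⟨(M * (∫ z, ‖fderiv ℝ (bump : E → ℝ) z‖) * |r - 0|).toNNReal,
    lipschitzWith_of_nnnorm_fderiv_le (𝕜 := ℝ)
      (fun x => (hasFDerivAt_bumpPotential hg hM hr x).differentiableAt) fun x => ?_⟩
  rw [(hasFDerivAt_bumpPotential hg hM hr x).fderiv, ← norm_toNNReal]
  refine Real.toNNReal_le_toNNReal (intervalIntegral.norm_integral_le_of_norm_le_const
    fun s _ => ?_)
  rw [one_smul]
  exact norm_dilatedConv_le hM hint s x

lemma HasMeanValueFormula.exists_lipschitzOnWith [Nontrivial E] {U : Set E} {w g : E → ℝ}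
    (h : HasMeanValueFormula U w g) (hw : Measurable w) (hg : Measurable g) {x₀ : E} {r M : ℝ}
    (hr : 0 < r) (hU : closedBall x₀ (2 * r) ⊆ U) (hwM : ∀ x ∈ closedBall x₀ (2 * r), |w x| ≤ M)
    (hgM : ∀ x ∈ closedBall x₀ (2 * r), |g x| ≤ M) : ∃ L, LipschitzOnWith L w (ball x₀ r) := by
  obtain ⟨π, hπ, hπid, hπlip⟩ := exists_lipschitzWith_one_retraction
    (nonempty_closedBall.2 (show 0 ≤ 2 * r by positivity)) isClosed_closedBall.isComplete
    (convex_closedBall x₀ (2 * r))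
  obtain ⟨L₁, hL₁⟩ := exists_lipschitzWith_dilatedConv (hw.comp hπlip.continuous.measurable)
    (fun x => hwM _ (hπ x)) (contDiff_bumpSlope.of_le one_le_two) hasCompactSupport_bumpSlope hr
  obtain ⟨L₂, hL₂⟩ := exists_lipschitzWith_bumpPotential (hg.comp hπlip.continuous.measurable)
    (fun x => hgM _ (hπ x)) hr
  have heq := h.eqOn_ball hr hU (fun x hx => congrArg w (hπid x hx).symm)
    (fun x hx => congrArg g (hπid x hx).symm)
  have hlip := (lipschitzWith_smul (∫ z : E, bumpSlope z)⁻¹).comp (hL₁.add hL₂)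
  refine ⟨‖(∫ z : E, bumpSlope z)⁻¹‖₊ * (L₁ + L₂), fun x hx y hy => ?_⟩
  rw [heq hx, heq hy]
  exact hlip x y

lemma HasMeanValueFormula.contDiffOn_ball [Nontrivial E] {U : Set E} {w g : E → ℝ}
    (h : HasMeanValueFormula U w g) (hw : Measurable w) (hg : Measurable g) {x₀ : E} {r M : ℝ}
    {C γ : NNReal} (hγ : 0 < γ) (hr : 0 < r) (hU : closedBall x₀ (2 * r) ⊆ U)
    (hwM : ∀ x ∈ closedBall x₀ (2 * r), |w x| ≤ M)
    (hgM : ∀ x ∈ closedBall x₀ (2 * r), |g x| ≤ M)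
    (hgC : HolderOnWith C γ g (closedBall x₀ (2 * r))) : ContDiffOn ℝ 2 w (ball x₀ r) := by
  obtain ⟨π, hπ, hπid, hπlip⟩ := exists_lipschitzWith_one_retraction
    (nonempty_closedBall.2 (show 0 ≤ 2 * r by positivity)) isClosed_closedBall.isComplete
    (convex_closedBall x₀ (2 * r))
  have hholder : HolderWith C γ (g ∘ π) := by
    intro x y
    refine (hgC (π x) (hπ x) (π y) (hπ y)).trans ?_
    gcongr
    simpa using hπlip x y
  have hconv := contDiff_two_dilatedConv (hw.comp hπlip.continuous.measurable)
    (fun x => hwM _ (hπ x)) contDiff_bumpSlope hasCompactSupport_bumpSlope hr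
  have hpot := contDiff_two_bumpPotential (hg.comp hπlip.continuous.measurable)
    (fun x => hgM _ (hπ x)) hγ hholder hr
  exact (contDiff_const.mul (hconv.add hpot)).contDiffOn.congr
    (h.eqOn_ball hr hU (fun x hx => congrArg w (hπid x hx).symm)
      (fun x hx => congrArg g (hπid x hx).symm))

end MeanValue

section MeanValueEquation

lemma continuous_laplacian {E : Type*} [NormedAddCommGroup E] [InnerProductSpace ℝ E]
    [FiniteDimensional ℝ E] {u : E → ℝ} (hu : ContDiff ℝ 2 u) : Continuous (Δ u) := by
  have hfd : ContDiff ℝ 1 (fderiv ℝ u) := hu.fderiv_right (by norm_num)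
  rw [funext (laplacian_eq_sum_fderiv_fderiv (stdOrthonormalBasis ℝ E) u)]
  exact continuous_finsetSum _ fun i _ =>
    ((hfd.continuous_fderiv one_ne_zero).clm_apply continuous_const).clm_apply continuous_const

lemma hasCompactSupport_laplacian {E : Type*} [NormedAddCommGroup E] [InnerProductSpace ℝ E]
    [FiniteDimensional ℝ E] {u : E → ℝ} (hu : HasCompactSupport u) : HasCompactSupport (Δ u) := by
  refine ((hu.fderiv ℝ).fderiv ℝ).mono (Function.support_subset_iff'.2 fun x hx => ?_)
  rw [laplacian_eq_sum_fderiv_fderiv (stdOrthonormalBasis ℝ E), Function.notMem_support.1 hx]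
  simp

/-- The class `C²_b`: twice continuously differentiable functions that are bounded together with
their first and second derivatives. -/
structure IsC2Bounded {E : Type*} [NormedAddCommGroup E] [NormedSpace ℝ E] (u : E → ℝ) :
    Prop where
  contDiff : ContDiff ℝ 2 u
  bounded : ∃ B, ∀ x, |u x| ≤ B
  bounded_fderiv : ∃ B, ∀ x, ‖fderiv ℝ u x‖ ≤ B
  bounded_fderiv_fderiv : ∃ B, ∀ x, ‖fderiv ℝ (fderiv ℝ u) x‖ ≤ B

lemma IsC2Bounded.contDiff_fderiv {E : Type*} [NormedAddCommGroup E] [NormedSpace ℝ E] {u : E → ℝ}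
    (hu : IsC2Bounded u) : ContDiff ℝ 1 (fderiv ℝ u) := hu.contDiff.fderiv_right (by norm_num)

lemma IsC2Bounded.continuous_fderiv_fderiv {E : Type*} [NormedAddCommGroup E] [NormedSpace ℝ E]
    {u : E → ℝ} (hu : IsC2Bounded u) : Continuous (fderiv ℝ (fderiv ℝ u)) :=
  hu.contDiff_fderiv.continuous_fderiv one_ne_zero

lemma isC2Bounded_of_hasCompactSupport {E : Type*} [NormedAddCommGroup E] [NormedSpace ℝ E]
    {u : E → ℝ} (hu : ContDiff ℝ 2 u) (hus : HasCompactSupport u) : IsC2Bounded u where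
  contDiff := hu
  bounded := hu.continuous.bounded_above_of_compact_support hus
  bounded_fderiv :=
    (hu.continuous_fderiv two_ne_zero).bounded_above_of_compact_support (hus.fderiv ℝ)
  bounded_fderiv_fderiv :=
    ((hu.fderiv_right (m := 1) (by norm_num)).continuous_fderiv
      one_ne_zero).bounded_above_of_compact_support ((hus.fderiv ℝ).fderiv ℝ)

lemma IsC2Bounded.bounded_laplacian {E : Type*} [NormedAddCommGroup E] [InnerProductSpace ℝ E]
    [FiniteDimensional ℝ E] {u : E → ℝ} (hu : IsC2Bounded u) : ∃ B, ∀ x, |Δ u x| ≤ B := by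
  obtain ⟨B, hB⟩ := hu.bounded_fderiv_fderiv
  refine ⟨∑ _i : Fin (finrank ℝ E), B, fun x => ?_⟩
  rw [laplacian_eq_sum_fderiv_fderiv (stdOrthonormalBasis ℝ E)]
  refine (Finset.abs_sum_le_sum_abs _ _).trans (Finset.sum_le_sum fun i _ => ?_)
  have hle := (fderiv ℝ (fderiv ℝ u) x).le_opNorm₂ (stdOrthonormalBasis ℝ E i)
    (stdOrthonormalBasis ℝ E i)
  rw [(stdOrthonormalBasis ℝ E).norm_eq_one, mul_one, mul_one] at hle
  exact hle.trans (hB x)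

lemma contDiff_mul_of_tsupport_subset {E : Type*} [NormedAddCommGroup E] [NormedSpace ℝ E]
    {n : WithTop ℕ∞} {w χ : E → ℝ} {U : Set E} (hU : IsOpen U) (hw : ContDiffOn ℝ n w U)
    (hχ : ContDiff ℝ n χ) (hsupp : tsupport χ ⊆ U) : ContDiff ℝ n fun x => χ x * w x := by
  refine contDiff_iff_contDiffAt.2 fun x => ?_
  by_cases hx : x ∈ U
  · exact hχ.contDiffAt.mul (hw.contDiffAt (hU.mem_nhds hx))
  · have hzero : (fun x => χ x * w x) =ᶠ[𝓝 x] fun _ => 0 := by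
      filter_upwards [(isClosed_tsupport χ).isOpen_compl.mem_nhds fun h => hx (hsupp h)] with y hy
      rw [image_eq_zero_of_notMem_tsupport hy, zero_mul]
    exact contDiffAt_const.congr_of_eventuallyEq hzero

lemma eq_zero_of_integral_id_mul_eq_zero {H : ℝ → ℝ} (hH : Continuous H) {ε : ℝ} (hε : 0 < ε)
    (hint : ∀ s ∈ Ioo 0 ε, ∫ t in 0..s, t * H t = 0) : H 0 = 0 := by
  have hzero : ∀ s ∈ Ioo 0 ε, H s = 0 := by
    intro s hs
    have hderiv := ((continuous_id.mul hH).integral_hasStrictDerivAt 0 s).hasDerivAt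
    have hconst : HasDerivAt (fun s => ∫ t in 0..s, t * H t) 0 s :=
      (hasDerivAt_const s (0 : ℝ)).congr_of_eventuallyEq
        (eventually_of_mem (isOpen_Ioo.mem_nhds hs) hint)
    exact (mul_eq_zero.1 (hderiv.unique hconst)).resolve_left hs.1.ne'
  refine tendsto_nhds_unique ((hH.tendsto 0).mono_left nhdsWithin_le_nhds)
    (tendsto_const_nhds.congr' ?_ : Tendsto H (𝓝[>] 0) (𝓝 0))
  filter_upwards [Ioo_mem_nhdsGT hε] with s hs using (hzero s hs).symm

variable {E : Type*} [NormedAddCommGroup E] [InnerProductSpace ℝ E] [FiniteDimensional ℝ E]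
  [MeasurableSpace E] [BorelSpace E]

lemma IsC2Bounded.meanValueFormulaAt {u : E → ℝ} (hu : IsC2Bounded u) (x : E) (r : ℝ) :
    MeanValueFormulaAt u (fun y => -Δ u y) x r := by
  obtain ⟨B₀, hB₀⟩ := hu.bounded
  obtain ⟨B₁, hB₁⟩ := hu.bounded_fderiv
  obtain ⟨B₂, hB₂⟩ := hu.bounded_fderiv_fderiv
  obtain ⟨B₃, hB₃⟩ := hu.bounded_laplacian
  have hcont : Continuous fun s => dilatedConv (Δ u) bump s x := continuous_dilatedConv_scale
    (continuous_laplacian hu.contDiff) hB₃ isMeanKernel_bump.integrable_potential x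
  have hftc := intervalIntegral.integral_eq_sub_of_hasDerivAt (a := 0) (b := r)
    (fun s _ => isMeanKernel_bump.hasDerivAt_integral hu.contDiff hB₀ hB₁ hB₂ x s)
    ((continuous_id.mul hcont).intervalIntegrable 0 r)
  simp only [zero_smul, sub_zero, integral_const_mul] at hftc
  have hpot : bumpPotential (fun y => -Δ u y) r x =
      -∫ s in 0..r, s * ∫ z, Δ u (x - s • z) * bump z := by
    simp only [bumpPotential, dilatedConv, smul_eq_mul, neg_mul, integral_neg, mul_neg,
      intervalIntegral.integral_neg]
  rw [MeanValueFormulaAt, hpot, hftc]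
  simp only [dilatedConv, smul_eq_mul]
  ring

lemma eq_of_bumpPotential_eq {g g' : E → ℝ} (hg : Continuous g) (hg' : Continuous g') {M M' : ℝ}
    (hM : ∀ x, |g x| ≤ M) (hM' : ∀ x, |g' x| ≤ M') {x : E} {ε : ℝ} (hε : 0 < ε)
    (h : ∀ r ∈ Ioo 0 ε, bumpPotential g r x = bumpPotential g' r x) : g x = g' x := by
  have hcont := continuous_dilatedConv_scale hg hM isMeanKernel_bump.integrable_potential x
  have hcont' := continuous_dilatedConv_scale hg' hM' isMeanKernel_bump.integrable_potential x
  have hzero := eq_zero_of_integral_id_mul_eq_zero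
    (H := fun s => dilatedConv g bump s x - dilatedConv g' bump s x) (hcont.sub hcont') hε
    fun r hr => by
    simp only [mul_sub]
    rw [intervalIntegral.integral_sub (Continuous.intervalIntegrable (by fun_prop) 0 r)
      (Continuous.intervalIntegrable (by fun_prop) 0 r), sub_eq_zero]
    exact h r hr
  simp only [dilatedConv, zero_smul, sub_zero, smul_eq_mul, integral_const_mul, ← sub_mul] at hzero
  exact sub_eq_zero.1 ((mul_eq_zero.1 hzero).resolve_right integral_bump_pos.ne')

lemma HasMeanValueFormula.laplacian_eq {U : Set E} {w g : E → ℝ} (h : HasMeanValueFormula U w g)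
    {x₀ : E} {r : ℝ} (hr : 0 < r) (hU : ball x₀ r ⊆ U) (hw : ContDiffOn ℝ 2 w (ball x₀ r))
    (hg : ContinuousOn g (ball x₀ r)) : -Δ w x₀ = g x₀ := by
  let χ : ContDiffBump x₀ := ⟨r / 4, r / 2, by positivity, by linarith⟩
  have hsupp : tsupport χ ⊆ ball x₀ r :=
    χ.tsupport_eq.trans_subset (closedBall_subset_ball (half_lt_self hr))
  have hχ : ∀ x ∈ closedBall x₀ (r / 4), χ x = 1 := fun x hx => χ.one_of_mem_closedBall hx
  have hx₀ : x₀ ∈ closedBall x₀ (r / 4) := mem_closedBall_self (by positivity)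
  let u : E → ℝ := fun x => χ x * w x
  let q : E → ℝ := fun x => χ x * g x
  have hu : ContDiff ℝ 2 u := contDiff_mul_of_tsupport_subset isOpen_ball hw χ.contDiff hsupp
  have hus : HasCompactSupport u := χ.hasCompactSupport.mul_right
  have hq : Continuous q := (contDiff_zero (𝕜 := ℝ)).1
    (contDiff_mul_of_tsupport_subset isOpen_ball (contDiffOn_zero.2 hg) χ.contDiff hsupp)
  obtain ⟨M, hM⟩ := hq.bounded_above_of_compact_support χ.hasCompactSupport.mul_right
  obtain ⟨M', hM'⟩ := (continuous_laplacian hu).neg.bounded_above_of_compact_support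
    (hasCompactSupport_laplacian hus).neg
  have huw : EqOn w u (closedBall x₀ (r / 4)) := fun x hx => by simp only [u, hχ x hx, one_mul]
  have hgq : EqOn g q (closedBall x₀ (r / 4)) := fun x hx => by simp only [q, hχ x hx, one_mul]
  have hΔ : Δ w x₀ = Δ u x₀ := InnerProductSpace.laplacian_congr_nhds
    (eventually_of_mem (closedBall_mem_nhds x₀ (by positivity)) huw) |>.self_of_nhds
  rw [hΔ, hgq hx₀]
  refine eq_of_bumpPotential_eq (continuous_laplacian hu).neg hq hM' hM
    (show 0 < r / 4 by positivity) fun s hs => ?_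
  have hsub : closedBall x₀ s ⊆ closedBall x₀ (r / 4) := closedBall_subset_closedBall hs.2.le
  have hmv := (h x₀ s hs.1 ((closedBall_subset_ball (by linarith [hs.2])).trans hU)).congr hs.1.le
    (huw.mono hsub) (hgq.mono hsub)
  exact add_left_cancel
    (((isC2Bounded_of_hasCompactSupport hu hus).meanValueFormulaAt x₀ s).symm.trans hmv)

end MeanValueEquation

section MeanValueLimit

lemma norm_smul_le_of_tsupport_subset {E : Type*} [NormedAddCommGroup E] [NormedSpace ℝ E]
    {g k : E → ℝ} (hk1 : tsupport k ⊆ closedBall 0 1) {x : E} {s r M : ℝ} (hs : 0 ≤ s)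
    (hsr : s ≤ r) (hM : ∀ y ∈ closedBall x r, |g y| ≤ M) (z : E) :
    ‖g (x - s • z) • k z‖ ≤ M * ‖k z‖ := by
  by_cases hz : k z = 0
  · simp [hz]
  · rw [norm_smul]
    exact mul_le_mul_of_nonneg_right
      (hM _ (sub_smul_mem_closedBall hs hsr (norm_le_one_of_ne_zero hk1 hz))) (norm_nonneg _)

variable {E : Type*} [NormedAddCommGroup E] [InnerProductSpace ℝ E] [FiniteDimensional ℝ E]
  [MeasurableSpace E] [BorelSpace E]

lemma norm_dilatedConv_le_of_closedBall {k : E → ℝ} (hk : Integrable k)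
    (hk1 : tsupport k ⊆ closedBall 0 1) {g : E → ℝ} {x : E} {s r M : ℝ} (hs : 0 ≤ s) (hsr : s ≤ r)
    (hM : ∀ y ∈ closedBall x r, |g y| ≤ M) : ‖dilatedConv g k s x‖ ≤ M * ∫ z, ‖k z‖ := by
  rw [← integral_const_mul]
  exact norm_integral_le_of_norm_le (hk.norm.const_mul M)
    (Eventually.of_forall (norm_smul_le_of_tsupport_subset hk1 hs hsr hM))

lemma tendsto_dilatedConv {k : E → ℝ} (hk : Integrable k) (hk1 : tsupport k ⊆ closedBall 0 1)
    {g : E → ℝ} {G : ℕ → E → ℝ} (hG : ∀ n, Measurable (G n)) {x : E} {s r M : ℝ} (hs : 0 ≤ s)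
    (hsr : s ≤ r) (hM : ∀ᶠ n in atTop, ∀ y ∈ closedBall x r, |G n y| ≤ M)
    (hlim : ∀ y ∈ closedBall x r, Tendsto (fun n => G n y) atTop (𝓝 (g y))) :
    Tendsto (fun n => dilatedConv (G n) k s x) atTop (𝓝 (dilatedConv g k s x)) := by
  refine tendsto_integral_filter_of_dominated_convergence (fun z => M * ‖k z‖)
    (Eventually.of_forall fun n => ?_) ?_ (hk.norm.const_mul M) (Eventually.of_forall fun z => ?_)
  · exact ((hG n).comp (by fun_prop)).aestronglyMeasurable.smul hk.aestronglyMeasurable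
  · filter_upwards [hM] with n hn
    exact Eventually.of_forall (norm_smul_le_of_tsupport_subset hk1 hs hsr hn)
  · by_cases hz : k z = 0
    · simp [hz]
    · exact (hlim _ (sub_smul_mem_closedBall hs hsr (norm_le_one_of_ne_zero hk1 hz))).smul_const _

lemma tendsto_bumpPotential {g : E → ℝ} {G : ℕ → E → ℝ} (hG : ∀ n, Measurable (G n)) {x : E}
    {r M : ℝ} (hr : 0 ≤ r) (hM : ∀ᶠ n in atTop, ∀ y ∈ closedBall x r, |G n y| ≤ M)
    (hlim : ∀ y ∈ closedBall x r, Tendsto (fun n => G n y) atTop (𝓝 (g y))) :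
    Tendsto (fun n => bumpPotential (G n) r x) atTop (𝓝 (bumpPotential g r x)) := by
  have hbump := isMeanKernel_bump (E := E).integrable_potential
  refine intervalIntegral.tendsto_integral_filter_of_dominated_convergence
    (fun _ => r * (M * ∫ z : E, ‖bump z‖)) (Eventually.of_forall fun n => ?_) ?_
    intervalIntegrable_const (Eventually.of_forall fun s hs => ?_)
  · exact (measurable_id.aestronglyMeasurable.smul (stronglyMeasurable_dilatedConv_scale (hG n)
      contDiff_bump.continuous hasCompactSupport_bump x).aestronglyMeasurable)
  · filter_upwards [hM] with n hn
    refine Eventually.of_forall fun s hs => ?_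
    rw [uIoc_of_le hr] at hs
    rw [norm_smul, Real.norm_of_nonneg hs.1.le]
    exact mul_le_mul hs.2
      (norm_dilatedConv_le_of_closedBall hbump tsupport_bump_subset hs.1.le hs.2 hn)
      (norm_nonneg _) hr
  · rw [uIoc_of_le hr] at hs
    exact (tendsto_dilatedConv hbump tsupport_bump_subset hG hs.1.le hs.2 hM hlim).const_smul s

lemma meanValueFormulaAt_of_tendsto {w g : E → ℝ} {W G : ℕ → E → ℝ} (hWm : ∀ n, Measurable (W n))
    (hGm : ∀ n, Measurable (G n)) {x : E} {r M : ℝ} (hr : 0 ≤ r)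
    (hWM : ∀ᶠ n in atTop, ∀ y ∈ closedBall x r, |W n y| ≤ M)
    (hGM : ∀ᶠ n in atTop, ∀ y ∈ closedBall x r, |G n y| ≤ M)
    (hW : ∀ y ∈ closedBall x r, Tendsto (fun n => W n y) atTop (𝓝 (w y)))
    (hG : ∀ y ∈ closedBall x r, Tendsto (fun n => G n y) atTop (𝓝 (g y)))
    (h : ∀ᶠ n in atTop, MeanValueFormulaAt (W n) (G n) x r) : MeanValueFormulaAt w g x r := by
  have hleft := (hW x (mem_closedBall_self hr)).const_mul (∫ z : E, bumpSlope z)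
  have hconv := tendsto_dilatedConv (isMeanKernel_bump (E := E)).integrable
    tsupport_bumpSlope_subset hWm hr le_rfl hWM hW
  exact tendsto_nhds_unique (hleft.congr' (h.mono fun n hn => hn))
    (hconv.add (tendsto_bumpPotential hGm hr hGM hG))

end MeanValueLimit

section TranslationAverage

variable {E : Type*} [NormedAddCommGroup E] {F : Type*} [NormedAddCommGroup F] [NormedSpace ℝ F]
  {P : Type*} [MeasurableSpace P] {μ : Measure P} {W : P → ℝ} {τ : P → E}

lemma norm_integral_smul_comp_sub_le (hW : Integrable W μ) {h : E → F} {B : ℝ}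
    (hB : ∀ x, ‖h x‖ ≤ B) (x : E) :
    ‖∫ p, W p • h (x - τ p) ∂μ‖ ≤ (∫ p, ‖W p‖ ∂μ) * B := by
  rw [← integral_mul_const]
  refine norm_integral_le_of_norm_le (hW.norm.mul_const _) (Eventually.of_forall fun p => ?_)
  rw [norm_smul]
  exact mul_le_mul_of_nonneg_left (hB _) (norm_nonneg _)

variable [SecondCountableTopology E] [MeasurableSpace E] [BorelSpace E]

lemma aestronglyMeasurable_smul_comp_sub (hW : Integrable W μ) (hτ : Measurable τ) {h : E → F}
    (hh : Continuous h) (x : E) : AEStronglyMeasurable (fun p => W p • h (x - τ p)) μ :=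
  hW.aestronglyMeasurable.smul
    (hh.stronglyMeasurable.comp_measurable (hτ.const_sub x)).aestronglyMeasurable

lemma integrable_smul_comp_sub (hW : Integrable W μ) (hτ : Measurable τ) {h : E → F}
    (hh : Continuous h) {B : ℝ} (hB : ∀ x, ‖h x‖ ≤ B) (x : E) :
    Integrable (fun p => W p • h (x - τ p)) μ := by
  refine (hW.norm.mul_const B).mono' (aestronglyMeasurable_smul_comp_sub hW hτ hh x)
    (Eventually.of_forall fun p => ?_)
  rw [norm_smul]
  exact mul_le_mul_of_nonneg_left (hB _) (norm_nonneg _)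

lemma continuous_integral_smul_comp_sub (hW : Integrable W μ) (hτ : Measurable τ) {h : E → F}
    (hh : Continuous h) {B : ℝ} (hB : ∀ x, ‖h x‖ ≤ B) :
    Continuous fun x => ∫ p, W p • h (x - τ p) ∂μ := by
  refine continuous_of_dominated (bound := fun p => ‖W p‖ * B)
    (aestronglyMeasurable_smul_comp_sub hW hτ hh) (fun x => Eventually.of_forall fun p => ?_)
    (hW.norm.mul_const _) (Eventually.of_forall fun p => by fun_prop)
  rw [norm_smul]
  exact mul_le_mul_of_nonneg_left (hB _) (norm_nonneg _)

variable [NormedSpace ℝ E]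

lemma hasFDerivAt_integral_smul_comp_sub (hW : Integrable W μ) (hτ : Measurable τ) {h : E → F}
    (hh : ContDiff ℝ 1 h) {B₀ B₁ : ℝ} (hB₀ : ∀ x, ‖h x‖ ≤ B₀) (hB₁ : ∀ x, ‖fderiv ℝ h x‖ ≤ B₁)
    (x : E) :
    HasFDerivAt (fun x => ∫ p, W p • h (x - τ p) ∂μ) (∫ p, W p • fderiv ℝ h (x - τ p) ∂μ) x := by
  have hh' : Continuous (fderiv ℝ h) := hh.continuous_fderiv one_ne_zero
  refine hasFDerivAt_integral_of_dominated_of_fderiv_le (𝕜 := ℝ) (s := univ)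
    (bound := fun p => ‖W p‖ * B₁) (F' := fun x p => W p • fderiv ℝ h (x - τ p)) univ_mem
    (Eventually.of_forall (aestronglyMeasurable_smul_comp_sub hW hτ hh.continuous))
    (integrable_smul_comp_sub hW hτ hh.continuous hB₀ x)
    (aestronglyMeasurable_smul_comp_sub hW hτ hh' x)
    (Eventually.of_forall fun p x _ => ?_) (hW.norm.mul_const _)
    (Eventually.of_forall fun p x _ => ?_)
  · rw [norm_smul]
    exact mul_le_mul_of_nonneg_left (hB₁ _) (norm_nonneg _)
  · exact ((hh.differentiable one_ne_zero (x - τ p)).hasFDerivAt.comp x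
      ((hasFDerivAt_id x).sub_const (τ p))).const_smul (W p)

lemma integral_smul_comp_sub_apply [CompleteSpace F] (hW : Integrable W μ) (hτ : Measurable τ)
    {h : E → E →L[ℝ] F} (hh : Continuous h) {B : ℝ} (hB : ∀ x, ‖h x‖ ≤ B) (x v : E) :
    (∫ p, W p • h (x - τ p) ∂μ) v = ∫ p, W p • h (x - τ p) v ∂μ := by
  rw [ContinuousLinearMap.integral_apply (integrable_smul_comp_sub hW hτ hh hB x)]
  rfl

lemma IsC2Bounded.fderiv_integral_smul_comp_sub (hW : Integrable W μ) (hτ : Measurable τ)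
    {h : E → ℝ} (hh : IsC2Bounded h) :
    fderiv ℝ (fun x => ∫ p, W p • h (x - τ p) ∂μ) =
      fun x => ∫ p, W p • fderiv ℝ h (x - τ p) ∂μ := by
  obtain ⟨B₀, hB₀⟩ := hh.bounded
  obtain ⟨B₁, hB₁⟩ := hh.bounded_fderiv
  exact funext fun x => (hasFDerivAt_integral_smul_comp_sub hW hτ (hh.contDiff.of_le one_le_two)
    hB₀ hB₁ x).fderiv

lemma IsC2Bounded.hasFDerivAt_integral_smul_fderiv_comp_sub (hW : Integrable W μ)
    (hτ : Measurable τ) {h : E → ℝ} (hh : IsC2Bounded h) (x : E) :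
    HasFDerivAt (fun x => ∫ p, W p • fderiv ℝ h (x - τ p) ∂μ)
      (∫ p, W p • fderiv ℝ (fderiv ℝ h) (x - τ p) ∂μ) x := by
  obtain ⟨B₁, hB₁⟩ := hh.bounded_fderiv
  obtain ⟨B₂, hB₂⟩ := hh.bounded_fderiv_fderiv
  exact hasFDerivAt_integral_smul_comp_sub hW hτ hh.contDiff_fderiv hB₁ hB₂ x

lemma IsC2Bounded.integral_smul_comp_sub (hW : Integrable W μ) (hτ : Measurable τ)
    {h : E → ℝ} (hh : IsC2Bounded h) : IsC2Bounded fun x => ∫ p, W p • h (x - τ p) ∂μ := by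
  obtain ⟨B₀, hB₀⟩ := hh.bounded
  obtain ⟨B₁, hB₁⟩ := hh.bounded_fderiv
  obtain ⟨B₂, hB₂⟩ := hh.bounded_fderiv_fderiv
  have hfderiv := hh.hasFDerivAt_integral_smul_fderiv_comp_sub hW hτ
  refine ⟨contDiff_two_of_hasFDerivAt (hasFDerivAt_integral_smul_comp_sub hW hτ
    (hh.contDiff.of_le one_le_two) hB₀ hB₁) hfderiv
    (continuous_integral_smul_comp_sub hW hτ hh.continuous_fderiv_fderiv hB₂),
    ⟨_, norm_integral_smul_comp_sub_le (h := h) (τ := τ) hW hB₀⟩, ?_, ?_⟩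
  · rw [hh.fderiv_integral_smul_comp_sub hW hτ]
    exact ⟨_, norm_integral_smul_comp_sub_le hW hB₁⟩
  · rw [hh.fderiv_integral_smul_comp_sub hW hτ, funext fun x => (hfderiv x).fderiv]
    exact ⟨_, norm_integral_smul_comp_sub_le hW hB₂⟩

lemma IsC2Bounded.laplacian_integral_smul_comp_sub {E : Type*} [NormedAddCommGroup E]
    [InnerProductSpace ℝ E] [FiniteDimensional ℝ E] [MeasurableSpace E] [BorelSpace E] {τ : P → E}
    (hW : Integrable W μ) (hτ : Measurable τ) {h : E → ℝ} (hh : IsC2Bounded h) (x : E) :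
    Δ (fun x => ∫ p, W p • h (x - τ p) ∂μ) x = ∫ p, W p • Δ h (x - τ p) ∂μ := by
  obtain ⟨B, hB⟩ := hh.bounded_fderiv_fderiv
  have hcont : ∀ v, Continuous fun x => fderiv ℝ (fderiv ℝ h) x v := fun v =>
    hh.continuous_fderiv_fderiv.clm_apply continuous_const
  have hle : ∀ v x, ‖fderiv ℝ (fderiv ℝ h) x v‖ ≤ B * ‖v‖ := fun v x =>
    (fderiv ℝ (fderiv ℝ h) x).le_of_opNorm_le (hB x) v
  simp only [laplacian_eq_sum_fderiv_fderiv (stdOrthonormalBasis ℝ E), Finset.smul_sum]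
  rw [hh.fderiv_integral_smul_comp_sub hW hτ,
    (hh.hasFDerivAt_integral_smul_fderiv_comp_sub hW hτ x).fderiv, integral_finsetSum]
  · refine Finset.sum_congr rfl fun i _ => ?_
    rw [integral_smul_comp_sub_apply hW hτ hh.continuous_fderiv_fderiv hB,
      integral_smul_comp_sub_apply hW hτ (hcont _) (hle _)]
  · exact fun i _ => integrable_smul_comp_sub (h := fun x => fderiv ℝ (fderiv ℝ h) x
      (stdOrthonormalBasis ℝ E i) (stdOrthonormalBasis ℝ E i)) hW hτ
      ((hcont _).clm_apply continuous_const)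
      (fun x => (fderiv ℝ (fderiv ℝ h) x (stdOrthonormalBasis ℝ E i)).le_of_opNorm_le (hle _ x) _) x

end TranslationAverage

section Resolvent

variable {E : Type*} [NormedAddCommGroup E]

/-- The profile `exp (-‖z‖² / 4)` of the heat kernel. -/
noncomputable def gaussian (z : E) : ℝ := Real.exp (-(1 / 4) * ‖z‖ ^ 2)

lemma gaussian_pos (z : E) : 0 < gaussian z := Real.exp_pos _

lemma norm_mul_gaussian_le (z : E) : ‖z‖ * gaussian z ≤ 2 * Real.exp (-(1 / 8) * ‖z‖ ^ 2) := by
  have hsplit : gaussian z = Real.exp (-(1 / 8) * ‖z‖ ^ 2) * Real.exp (-(1 / 8) * ‖z‖ ^ 2) := by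
    rw [gaussian, ← Real.exp_add]
    congr 1
    ring
  have hinv : Real.exp ((1 / 8) * ‖z‖ ^ 2) * Real.exp (-(1 / 8) * ‖z‖ ^ 2) = 1 := by
    rw [← Real.exp_add, neg_mul, add_neg_cancel, Real.exp_zero]
  have hnorm : ‖z‖ ≤ 2 * Real.exp ((1 / 8) * ‖z‖ ^ 2) := by
    nlinarith [sq_nonneg (‖z‖ - 2), Real.add_one_le_exp ((1 / 8) * ‖z‖ ^ 2)]
  calc ‖z‖ * gaussian z
      ≤ 2 * Real.exp ((1 / 8) * ‖z‖ ^ 2) * gaussian z :=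
        mul_le_mul_of_nonneg_right hnorm (gaussian_pos z).le
    _ = 2 * (Real.exp ((1 / 8) * ‖z‖ ^ 2) * Real.exp (-(1 / 8) * ‖z‖ ^ 2)) *
          Real.exp (-(1 / 8) * ‖z‖ ^ 2) := by rw [hsplit]; ring
    _ = 2 * Real.exp (-(1 / 8) * ‖z‖ ^ 2) := by rw [hinv, mul_one]

variable [InnerProductSpace ℝ E]

lemma contDiff_gaussian : ContDiff ℝ 2 (gaussian : E → ℝ) :=
  (contDiff_const.mul (contDiff_norm_sq ℝ)).exp

lemma fderiv_two_mul_gaussian (z v : E) :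
    fderiv ℝ (fun z : E => 2 * gaussian z) z v = -gaussian z * inner ℝ z v := by
  have hsq : HasFDerivAt (fun z : E => ‖z‖ ^ 2) (2 • innerSL ℝ z) z :=
    (hasStrictFDerivAt_norm_sq z).hasFDerivAt
  have hexp : HasFDerivAt (fun z : E => 2 * gaussian z) _ z :=
    ((hsq.const_mul (-(1 / 4))).exp).const_mul 2
  rw [hexp.fderiv]
  simp only [smul_apply, innerSL_apply_apply, smul_eq_mul, nsmul_eq_mul,
    gaussian]
  ring

variable [FiniteDimensional ℝ E] [MeasurableSpace E] [BorelSpace E]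

lemma integrable_exp_neg_mul_norm_sq {b : ℝ} (hb : 0 < b) :
    Integrable fun z : E => Real.exp (-b * ‖z‖ ^ 2) := by
  have hcexp := GaussianFourier.integrable_cexp_neg_mul_sq_norm_add (V := E) (b := (b : ℂ))
    (by simpa using hb) 0 0
  refine hcexp.norm.congr (Eventually.of_forall fun z => ?_)
  simp only [zero_mul, add_zero, Complex.norm_exp]
  norm_cast

lemma integrable_gaussian : Integrable (gaussian : E → ℝ) :=
  integrable_exp_neg_mul_norm_sq (by norm_num)

lemma isMeanKernel_gaussian : IsMeanKernel (gaussian : E → ℝ) fun z => 2 * gaussian z where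
  continuous := contDiff_gaussian.continuous
  contDiff_potential := contDiff_const.mul (contDiff_gaussian.of_le one_le_two)
  integrable := integrable_gaussian
  integrable_potential := integrable_gaussian.const_mul 2
  integrable_norm_mul := by
    refine ((integrable_exp_neg_mul_norm_sq (b := 1 / 8) (by norm_num)).const_mul 2).mono'
      (continuous_norm.mul contDiff_gaussian.continuous).aestronglyMeasurable
      (Eventually.of_forall fun z => ?_)
    rw [Real.norm_of_nonneg (mul_nonneg (norm_nonneg z) (gaussian_pos z).le)]
    exact norm_mul_gaussian_le z
  fderiv_potential := fderiv_two_mul_gaussian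

lemma integral_gaussian_pos : 0 < ∫ z : E, gaussian z := by
  simp only [gaussian]
  rw [GaussianFourier.integral_rexp_neg_mul_sq_norm (by norm_num)]
  positivity

/-- The density in `(s, z)` whose pushforward under `(s, z) ↦ s z` is the Green kernel of `l - Δ`:
the Laplace transform at `l` of the heat semigroup, with time written as `s²`. -/
noncomputable def resolventKernel (l : ℝ) (p : ℝ × E) : ℝ :=
  p.1 * Real.exp (-l * p.1 ^ 2) * (2 * (∫ z : E, gaussian z)⁻¹ * gaussian p.2)

/-- The resolvent `(l - Δ)⁻¹` on bounded functions. -/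
noncomputable def greenResolvent (l : ℝ) (g : E → ℝ) (x : E) : ℝ :=
  ∫ p : ℝ × E, resolventKernel l p • g (x - p.1 • p.2) ∂(volume.restrict (Ioi 0)).prod volume

lemma integrable_resolventKernel {l : ℝ} (hl : 0 < l) :
    Integrable (resolventKernel (E := E) l) ((volume.restrict (Ioi 0)).prod volume) :=
  (integrable_mul_exp_neg_mul_sq hl).restrict.mul_prod (integrable_gaussian.const_mul _)

lemma measurable_fst_smul_snd : Measurable fun p : ℝ × E => p.1 • p.2 := by fun_prop

lemma greenResolvent_eq_integral {l : ℝ} (hl : 0 < l) {g : E → ℝ} (hg : Continuous g) {B : ℝ}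
    (hB : ∀ x, |g x| ≤ B) (x : E) :
    greenResolvent l g x = 2 * (∫ z : E, gaussian z)⁻¹ *
      ∫ s in Ioi (0 : ℝ), s * Real.exp (-l * s ^ 2) * dilatedConv g gaussian s x := by
  rw [greenResolvent, integral_prod _ (integrable_smul_comp_sub
    (integrable_resolventKernel hl) measurable_fst_smul_snd hg hB x), ← integral_const_mul]
  refine integral_congr_ae (Eventually.of_forall fun s => ?_)
  simp only [resolventKernel, dilatedConv, smul_eq_mul, ← integral_const_mul]
  refine integral_congr_ae (Eventually.of_forall fun z => ?_)
  ring

lemma integrableOn_mul_exp_mul_dilatedConv {l : ℝ} (hl : 0 < l) {g k : E → ℝ} (hg : Continuous g)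
    {B : ℝ} (hB : ∀ x, |g x| ≤ B) (hk : Integrable k) (x : E) :
    IntegrableOn (fun s => s * Real.exp (-l * s ^ 2) * dilatedConv g k s x) (Ioi 0) :=
  (integrable_mul_exp_neg_mul_sq hl).integrableOn.mul_bdd
    (continuous_dilatedConv_scale hg hB hk x).aestronglyMeasurable
    (Eventually.of_forall fun s => norm_dilatedConv_le hB hk s x)

lemma hasDerivAt_exp_mul_dilatedConv_gaussian {g : E → ℝ} (hg : IsC2Bounded g) (l : ℝ) (x : E)
    (s : ℝ) : HasDerivAt (fun s => Real.exp (-l * s ^ 2) * dilatedConv g gaussian s x)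
      (2 * (s * Real.exp (-l * s ^ 2) * dilatedConv (Δ g) gaussian s x) -
        2 * l * (s * Real.exp (-l * s ^ 2) * dilatedConv g gaussian s x)) s := by
  obtain ⟨B₀, hB₀⟩ := hg.bounded
  obtain ⟨B₁, hB₁⟩ := hg.bounded_fderiv
  obtain ⟨B₂, hB₂⟩ := hg.bounded_fderiv_fderiv
  have hconv : HasDerivAt (fun s => dilatedConv g gaussian s x)
      (s * ∫ z, Δ g (x - s • z) * (2 * gaussian z)) s :=
    isMeanKernel_gaussian.hasDerivAt_integral hg.contDiff hB₀ hB₁ hB₂ x s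
  have hexp := ((hasDerivAt_pow 2 s).const_mul (-l)).exp
  refine (hexp.mul hconv).congr_deriv ?_
  simp only [dilatedConv, smul_eq_mul, mul_left_comm _ (2 : ℝ), integral_const_mul]
  push_cast
  ring

lemma tendsto_exp_mul_dilatedConv {l : ℝ} (hl : 0 < l) {g k : E → ℝ} {B : ℝ}
    (hB : ∀ x, |g x| ≤ B) (hk : Integrable k) (x : E) :
    Tendsto (fun s => Real.exp (-l * s ^ 2) * dilatedConv g k s x) atTop (𝓝 0) := by
  have hexp : Tendsto (fun s : ℝ => Real.exp (-l * s ^ 2)) atTop (𝓝 0) :=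
    Real.tendsto_exp_atBot.comp
      ((tendsto_pow_atTop two_ne_zero).const_mul_atTop_of_neg (neg_neg_of_pos hl))
  exact hexp.zero_mul_isBoundedUnder_le
    (isBoundedUnder_of ⟨_, fun s => norm_dilatedConv_le hB hk s x⟩)

lemma greenResolvent_laplacian {l : ℝ} (hl : 0 < l) {g : E → ℝ} (hg : IsC2Bounded g) (x : E) :
    greenResolvent l (Δ g) x = l * greenResolvent l g x - g x := by
  obtain ⟨B₀, hB₀⟩ := hg.bounded
  obtain ⟨B₁, hB₁⟩ := hg.bounded_laplacian
  have hΔ := continuous_laplacian hg.contDiff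
  have hint := integrableOn_mul_exp_mul_dilatedConv hl hg.contDiff.continuous hB₀
    integrable_gaussian x
  have hintΔ := integrableOn_mul_exp_mul_dilatedConv hl hΔ hB₁ integrable_gaussian x
  have hzero : dilatedConv g gaussian 0 x = g x * ∫ z : E, gaussian z := by
    simp only [dilatedConv, zero_smul, sub_zero, smul_eq_mul, integral_const_mul]
  have hderiv := hasDerivAt_exp_mul_dilatedConv_gaussian hg l x
  have hftc := integral_Ioi_of_hasDerivAt_of_tendsto (hderiv 0).continuousAt.continuousWithinAt
    (fun s _ => hderiv s) ((hintΔ.const_mul 2).sub (hint.const_mul (2 * l)))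
    (tendsto_exp_mul_dilatedConv hl hB₀ integrable_gaussian x)
  rw [integral_sub (hintΔ.const_mul 2) (hint.const_mul (2 * l)), integral_const_mul,
    integral_const_mul, hzero] at hftc
  rw [greenResolvent_eq_integral hl hΔ hB₁,
    greenResolvent_eq_integral hl hg.contDiff.continuous hB₀]
  have hpos := (integral_gaussian_pos (E := E)).ne'
  rw [zero_pow two_ne_zero, mul_zero, Real.exp_zero, one_mul, zero_sub] at hftc
  linear_combination (∫ z : E, gaussian z)⁻¹ * hftc - g x * mul_inv_cancel₀ hpos

lemma greenResolvent_const {l : ℝ} (hl : 0 < l) (a : ℝ) (x : E) :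
    greenResolvent l (fun _ : E => a) x = a / l := by
  have hconst : IsC2Bounded fun _ : E => a :=
    ⟨contDiff_const, ⟨_, fun _ => le_rfl⟩, ⟨0, by simp⟩, ⟨0, fun x =>
      (norm_le_zero_iff (E := E →L[ℝ] E →L[ℝ] ℝ)).2 (by simp)⟩⟩
  have h := greenResolvent_laplacian hl hconst x
  have hΔ : Δ (fun _ : E => a) = fun _ => 0 := by
    funext x
    simp [laplacian_eq_sum_fderiv_fderiv (stdOrthonormalBasis ℝ E)]
  rw [hΔ] at h
  simp only [greenResolvent, smul_zero, integral_zero] at h ⊢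
  field_simp
  linarith

lemma integral_norm_resolventKernel {l : ℝ} (hl : 0 < l) :
    ∫ p : ℝ × E, ‖resolventKernel l p‖ ∂(volume.restrict (Ioi 0)).prod volume = 1 / l := by
  rw [← greenResolvent_const (E := E) hl 1 0, greenResolvent]
  refine integral_congr_ae ?_
  have hpos : ∀ᵐ p ∂(volume.restrict (Ioi (0 : ℝ))).prod (volume : Measure E), 0 < p.1 :=
    Measure.quasiMeasurePreserving_fst.ae (ae_restrict_mem measurableSet_Ioi)
  filter_upwards [hpos] with p hp
  have hgauss := gaussian_pos p.2
  have hint := integral_gaussian_pos (E := E)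
  rw [smul_eq_mul, mul_one, Real.norm_of_nonneg]
  unfold resolventKernel
  positivity

lemma continuous_greenResolvent {l : ℝ} (hl : 0 < l) {g : E → ℝ} (hg : Continuous g) {B : ℝ}
    (hB : ∀ x, |g x| ≤ B) : Continuous (greenResolvent l g) :=
  continuous_integral_smul_comp_sub (integrable_resolventKernel hl) measurable_fst_smul_snd hg hB

lemma abs_greenResolvent_le {l : ℝ} (hl : 0 < l) {g : E → ℝ} {B : ℝ} (hB : ∀ x, |g x| ≤ B)
    (x : E) : |greenResolvent l g x| ≤ B / l := by
  refine (norm_integral_smul_comp_sub_le (integrable_resolventKernel hl) (h := g) (B := B) hB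
    x).trans_eq ?_
  rw [integral_norm_resolventKernel hl, one_div_mul_eq_div]

lemma greenResolvent_sub {l : ℝ} (hl : 0 < l) {g h : E → ℝ} (hg : Continuous g)
    (hh : Continuous h) {B B' : ℝ} (hB : ∀ x, |g x| ≤ B) (hB' : ∀ x, |h x| ≤ B') (x : E) :
    greenResolvent l (fun y => g y - h y) x = greenResolvent l g x - greenResolvent l h x := by
  simp only [greenResolvent, smul_sub]
  exact integral_sub
    (integrable_smul_comp_sub (integrable_resolventKernel hl) measurable_fst_smul_snd hg hB x)
    (integrable_smul_comp_sub (integrable_resolventKernel hl) measurable_fst_smul_snd hh hB' x)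

lemma tendsto_greenResolvent {l : ℝ} (hl : 0 < l) {g : E → ℝ} {G : ℕ → E → ℝ} {B : ℝ}
    (hG : ∀ n, Continuous (G n)) (hB : ∀ n x, |G n x| ≤ B)
    (hlim : ∀ y, Tendsto (fun n => G n y) atTop (𝓝 (g y))) (x : E) :
    Tendsto (fun n => greenResolvent l (G n) x) atTop (𝓝 (greenResolvent l g x)) := by
  have hW := integrable_resolventKernel (E := E) hl
  refine tendsto_integral_of_dominated_convergence (fun p => ‖resolventKernel l p‖ * B)
    (fun n => aestronglyMeasurable_smul_comp_sub hW measurable_fst_smul_snd (hG n) x)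
    (hW.norm.mul_const B) (fun n => Eventually.of_forall fun p => ?_)
    (Eventually.of_forall fun p => (hlim _).const_smul _)
  rw [norm_smul]
  exact mul_le_mul_of_nonneg_left (hB n _) (norm_nonneg _)

end Resolvent

section SemilinearEquation

variable {E : Type*} [NormedAddCommGroup E] [InnerProductSpace ℝ E] [FiniteDimensional ℝ E]
  [MeasurableSpace E] [BorelSpace E]

lemma exists_norm_smul_dilatedConv_le {F : Type*} [NormedAddCommGroup F] [NormedSpace ℝ F]
    {g : E → ℝ} {M : ℝ} (hM : ∀ x, |g x| ≤ M) {k : E → F} (hk : Integrable k) (c s : ℝ) :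
    ∃ B, ∀ x, ‖c • dilatedConv g k s x‖ ≤ B :=
  ⟨‖c‖ * (M * ∫ z, ‖k z‖), fun x => (norm_smul_le _ _).trans
    (mul_le_mul_of_nonneg_left (norm_dilatedConv_le hM hk s x) (norm_nonneg c))⟩

lemma integrable_fderiv_of_hasCompactSupport {F : Type*} [NormedAddCommGroup F] [NormedSpace ℝ F]
    {k : E → F} (hk : ContDiff ℝ 1 k) (hks : HasCompactSupport k) : Integrable (fderiv ℝ k) :=
  (hk.continuous_fderiv one_ne_zero).integrable_of_hasCompactSupport (hks.fderiv ℝ)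

lemma fderiv_smul_dilatedConv {F : Type*} [NormedAddCommGroup F] [NormedSpace ℝ F]
    [CompleteSpace F] {g : E → ℝ} (hg : Measurable g) {M : ℝ} (hM : ∀ x, |g x| ≤ M) {k : E → F}
    (hk : ContDiff ℝ 1 k) (hks : HasCompactSupport k) {s : ℝ} (hs : 0 < s) (c : ℝ) :
    fderiv ℝ (fun x => c • dilatedConv g k s x) =
      fun x => (c * s⁻¹) • dilatedConv g (fderiv ℝ k) s x :=
  funext fun x => by
    rw [mul_smul]
    exact ((hasFDerivAt_dilatedConv hg hM hk hks hs x).const_smul c).fderiv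

lemma isC2Bounded_dilatedConv {g : E → ℝ} (hg : Measurable g) {M : ℝ} (hM : ∀ x, |g x| ≤ M)
    {k : E → ℝ} (hk : ContDiff ℝ 2 k) (hks : HasCompactSupport k) {s : ℝ} (hs : 0 < s) :
    IsC2Bounded (dilatedConv g k s) := by
  have hk' : ContDiff ℝ 1 (fderiv ℝ k) := hk.fderiv_right (by norm_num)
  have hfderiv : fderiv ℝ (dilatedConv g k s) = fun x => s⁻¹ • dilatedConv g (fderiv ℝ k) s x :=
    funext fun x => (hasFDerivAt_dilatedConv hg hM (hk.of_le one_le_two) hks hs x).fderiv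
  have hfderiv₂ := fderiv_smul_dilatedConv hg hM hk' (hks.fderiv ℝ) hs s⁻¹
  refine ⟨contDiff_two_dilatedConv hg hM hk hks hs,
    ⟨_, norm_dilatedConv_le hM (hk.continuous.integrable_of_hasCompactSupport hks) s⟩, ?_, ?_⟩
  · rw [hfderiv]
    exact exists_norm_smul_dilatedConv_le hM
      (integrable_fderiv_of_hasCompactSupport (hk.of_le one_le_two) hks) _ s
  · rw [hfderiv, hfderiv₂]
    exact exists_norm_smul_dilatedConv_le hM
      (integrable_fderiv_of_hasCompactSupport hk' (hks.fderiv ℝ)) _ s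

/-- The bump kernel normalised to have integral one. -/
noncomputable def mollifier (z : E) : ℝ := (∫ z : E, bump z)⁻¹ * bump z

lemma integrable_mollifier : Integrable (mollifier : E → ℝ) :=
  isMeanKernel_bump.integrable_potential.const_mul _

lemma integral_mollifier : ∫ z : E, mollifier z = 1 := by
  simp only [mollifier, integral_const_mul]
  exact inv_mul_cancel₀ integral_bump_pos.ne'

lemma abs_dilatedConv_mollifier_le {g : E → ℝ} {B : ℝ} (hB : ∀ x, |g x| ≤ B) (s : ℝ) (x : E) :
    |dilatedConv g mollifier s x| ≤ B := by
  have hnorm : ∀ z : E, ‖mollifier z‖ = mollifier z := fun z =>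
    Real.norm_of_nonneg (mul_nonneg (inv_nonneg.2 integral_bump_pos.le) (bump_nonneg z))
  have hle := norm_dilatedConv_le hB integrable_mollifier s x
  simp only [hnorm, integral_mollifier, mul_one] at hle
  exact hle

lemma tendsto_dilatedConv_mollifier {g : E → ℝ} (hg : Continuous g) {B : ℝ} (hB : ∀ x, |g x| ≤ B)
    (x : E) : Tendsto (fun s => dilatedConv g mollifier s x) (𝓝 0) (𝓝 (g x)) := by
  have hcont := (continuous_dilatedConv_scale hg hB integrable_mollifier x).tendsto 0
  have hzero : dilatedConv g mollifier 0 x = g x := by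
    simp only [dilatedConv, zero_smul, sub_zero, smul_eq_mul, integral_const_mul,
      integral_mollifier, mul_one]
  rwa [hzero] at hcont

lemma isC2Bounded_dilatedConv_mollifier {g : E → ℝ} (hg : Measurable g) {M : ℝ}
    (hM : ∀ x, |g x| ≤ M) {s : ℝ} (hs : 0 < s) : IsC2Bounded (dilatedConv g mollifier s) :=
  isC2Bounded_dilatedConv hg hM (contDiff_const.mul contDiff_bump)
    (hasCompactSupport_bump.mul_left) hs

lemma IsC2Bounded.meanValueFormulaAt_greenResolvent {l : ℝ} (hl : 0 < l) {g : E → ℝ}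
    (hg : IsC2Bounded g) (x : E) (r : ℝ) :
    MeanValueFormulaAt (greenResolvent l g) (fun y => g y - l * greenResolvent l g y) x r := by
  have hW := integrable_resolventKernel (E := E) hl
  have hΔ : ∀ y, -Δ (greenResolvent l g) y = g y - l * greenResolvent l g y := fun y => by
    rw [← neg_sub, ← greenResolvent_laplacian hl hg y]
    exact congrArg _ (hg.laplacian_integral_smul_comp_sub hW measurable_fst_smul_snd y)
  rw [← funext hΔ]
  exact (hg.integral_smul_comp_sub hW measurable_fst_smul_snd).meanValueFormulaAt x r

lemma abs_sub_mul_greenResolvent_le {l : ℝ} (hl : 0 < l) {g : E → ℝ} {B : ℝ}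
    (hB : ∀ x, |g x| ≤ B) (x : E) : |g x - l * greenResolvent l g x| ≤ 2 * B := by
  have hle := mul_le_mul_of_nonneg_left (abs_greenResolvent_le hl hB x) hl.le
  rw [mul_div_cancel₀ _ hl.ne'] at hle
  calc |g x - l * greenResolvent l g x| ≤ |g x| + |l * greenResolvent l g x| := abs_sub _ _
    _ = |g x| + l * |greenResolvent l g x| := by rw [abs_mul, abs_of_pos hl]
    _ ≤ 2 * B := by linarith [hB x]

lemma meanValueFormulaAt_greenResolvent {l : ℝ} (hl : 0 < l) {g : E → ℝ} (hg : Continuous g)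
    {B : ℝ} (hB : ∀ x, |g x| ≤ B) (x : E) {r : ℝ} (hr : 0 ≤ r) :
    MeanValueFormulaAt (greenResolvent l g) (fun y => g y - l * greenResolvent l g y) x r := by
  let G : ℕ → E → ℝ := fun n => dilatedConv g mollifier (1 / ((n : ℝ) + 1))
  have hG : ∀ n, IsC2Bounded (G n) := fun n =>
    isC2Bounded_dilatedConv_mollifier hg.measurable hB (by positivity)
  have hGc : ∀ n, Continuous (G n) := fun n => (hG n).contDiff.continuous
  have hGB : ∀ n y, |G n y| ≤ B := fun n => abs_dilatedConv_mollifier_le hB _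
  have hlim : ∀ y, Tendsto (fun n => G n y) atTop (𝓝 (g y)) := fun y =>
    (tendsto_dilatedConv_mollifier hg hB y).comp tendsto_one_div_add_atTop_nhds_zero_nat
  have hlimR : ∀ y, Tendsto (fun n => greenResolvent l (G n) y) atTop
      (𝓝 (greenResolvent l g y)) := tendsto_greenResolvent hl hGc hGB hlim
  have hmeas : ∀ n, Measurable (greenResolvent l (G n)) := fun n =>
    (continuous_greenResolvent hl (hGc n) (hGB n)).measurable
  exact meanValueFormulaAt_of_tendsto (M := max (B / l) (2 * B)) hmeas
    (fun n => (hGc n).measurable.sub ((hmeas n).const_mul l)) hr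
    (Eventually.of_forall fun n y _ =>
      (abs_greenResolvent_le hl (hGB n) y).trans (le_max_left _ _))
    (Eventually.of_forall fun n y _ =>
      (abs_sub_mul_greenResolvent_le hl (hGB n) y).trans (le_max_right _ _))
    (fun y _ => hlimR y) (fun y _ => (hlim y).sub ((hlimR y).const_mul l))
    (Eventually.of_forall fun n => (hG n).meanValueFormulaAt_greenResolvent hl x r)

lemma abs_mul_add_sub_mul_add_le {h : ℝ → ℝ} {l κ : ℝ}
    (hl : ∀ s t, s ≤ t → -l * (t - s) ≤ h t - h s) (hκ : ∀ s t, s ≤ t → h t - h s ≤ -κ * (t - s))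
    (s t : ℝ) : |(l * s + h s) - (l * t + h t)| ≤ (l - κ) * |s - t| := by
  wlog hst : t ≤ s generalizing s t
  · rw [abs_sub_comm, abs_sub_comm s]
    exact this t s (le_of_not_ge hst)
  rw [abs_of_nonneg (sub_nonneg.2 hst), abs_le]
  constructor <;> nlinarith [hl t s hst, hκ t s hst]

open BoundedContinuousFunction in
/-- `w` solves `-Δw = H(x, w)` iff it is a fixed point of `w ↦ (l - Δ)⁻¹(l w + H(x, w))`, which is a
contraction when the slopes of `H` in `w` lie between `-l` and `-κ`. -/
theorem exists_hasMeanValueFormula {H : E → ℝ → ℝ} (hH : Continuous fun p : E × ℝ => H p.1 p.2)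
    {B l κ : ℝ} (hB : ∀ x, |H x 0| ≤ B) (hκ : 0 < κ) (hκl : κ < l)
    (hslope : ∀ x s t, s ≤ t → -l * (t - s) ≤ H x t - H x s)
    (hslope' : ∀ x s t, s ≤ t → H x t - H x s ≤ -κ * (t - s)) :
    ∃ w : BoundedContinuousFunction E ℝ, HasMeanValueFormula univ w fun x => H x (w x) := by
  have hl : 0 < l := hκ.trans hκl
  have hlκ : 0 < l - κ := sub_pos.2 hκl
  have hG := fun x => abs_mul_add_sub_mul_add_le (hslope x) (hslope' x)
  let G : (E →ᵇ ℝ) → E → ℝ := fun w x => l * w x + H x (w x)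
  have hGc : ∀ w, Continuous (G w) := fun w =>
    (continuous_const.mul w.continuous).add (hH.comp (continuous_id.prodMk w.continuous))
  have hGB : ∀ w x, |G w x| ≤ (l - κ) * ‖w‖ + B := fun w x => by
    have hle := hG x (w x) 0
    rw [mul_zero, zero_add, sub_zero] at hle
    calc |G w x| = |(G w x - H x 0) + H x 0| := by rw [sub_add_cancel]
      _ ≤ |G w x - H x 0| + |H x 0| := abs_add_le _ _
      _ ≤ (l - κ) * ‖w‖ + B := add_le_add
        (hle.trans (mul_le_mul_of_nonneg_left (w.norm_coe_le_norm x) hlκ.le)) (hB x)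
  let T : (E →ᵇ ℝ) → (E →ᵇ ℝ) := fun w => ofNormedAddCommGroup (greenResolvent l (G w))
    (continuous_greenResolvent hl (hGc w) (hGB w)) _ (abs_greenResolvent_le hl (hGB w))
  have hT : ContractingWith (Real.toNNReal ((l - κ) / l)) T := by
    refine ⟨by rwa [Real.toNNReal_lt_one, div_lt_one hl, sub_lt_self_iff],
      LipschitzWith.of_dist_le_mul fun u v => ?_⟩
    rw [Real.coe_toNNReal _ (by positivity), dist_le (by positivity)]
    intro x
    have hdiff : ∀ y, |G u y - G v y| ≤ (l - κ) * dist u v := fun y =>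
      (hG y _ _).trans (mul_le_mul_of_nonneg_left (dist_coe_le_dist (f := u) (g := v) y) hlκ.le)
    calc dist (T u x) (T v x) = |greenResolvent l (fun y => G u y - G v y) x| := by
          rw [greenResolvent_sub hl (hGc u) (hGc v) (hGB u) (hGB v)]; rfl
      _ ≤ (l - κ) * dist u v / l := abs_greenResolvent_le hl hdiff x
      _ = (l - κ) / l * dist u v := by ring
  obtain ⟨w, hw, -⟩ := hT.exists_fixedPoint 0 (edist_ne_top _ _)
  have hfix : greenResolvent l (G w) = w := congrArg DFunLike.coe hw
  refine ⟨w, fun x r hr _ => ?_⟩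
  simpa only [hfix, G, add_sub_cancel_left] using
    meanValueFormulaAt_greenResolvent hl (hGc w) (hGB w) x hr.le

end SemilinearEquation

section LocallyHolder

/-- Local Hölder continuity of exponent `γ` on a set, the Hölder analogue of
`LocallyLipschitzOn`. -/
def LocallyHolderOn {X Y : Type*} [PseudoEMetricSpace X] [PseudoEMetricSpace Y] (γ : NNReal)
    (s : Set X) (f : X → Y) : Prop :=
  ∀ x ∈ s, ∃ C : NNReal, ∃ t ∈ 𝓝[s] x, HolderOnWith C γ f t

namespace LocallyHolderOn

variable {X Y Z : Type*} {γ : NNReal}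

lemma continuousOn [PseudoEMetricSpace X] [PseudoEMetricSpace Y] {s : Set X} {f : X → Y}
    (hf : LocallyHolderOn γ s f) (hγ : 0 < γ) : ContinuousOn f s := fun x hx => by
  obtain ⟨C, t, ht, hC⟩ := hf x hx
  exact ((hC.continuousOn hγ).continuousWithinAt
    (mem_of_mem_nhdsWithin hx ht)).mono_of_mem_nhdsWithin ht

lemma of_forall_isCompact [PseudoEMetricSpace X] [LocallyCompactSpace X] [PseudoEMetricSpace Y]
    {s : Set X} {f : X → Y} (hs : IsOpen s)
    (hf : ∀ t, IsCompact t → t ⊆ s → ∃ C : NNReal, HolderOnWith C γ f t) :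
    LocallyHolderOn γ s f := fun x hx => by
  obtain ⟨t, ht, hts, htc⟩ := local_compact_nhds (hs.mem_nhds hx)
  obtain ⟨C, hC⟩ := hf t htc hts
  exact ⟨C, t, mem_nhdsWithin_of_mem_nhds ht, hC⟩

lemma of_locallyLipschitzOn [PseudoMetricSpace X] [PseudoEMetricSpace Y] {s : Set X} {f : X → Y}
    (hf : LocallyLipschitzOn s f) (hγ : γ ≤ 1) : LocallyHolderOn γ s f := fun x hx => by
  obtain ⟨C, t, ht, hC⟩ := hf hx
  have hball : ball x 1 ∈ 𝓝[s] x := mem_nhdsWithin_of_mem_nhds (ball_mem_nhds x one_pos)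
  refine ⟨_, t ∩ ball x 1, inter_mem ht hball, HolderOnWith.of_le (D := 2) (fun y hy z hz => ?_)
    (holderOnWith_one.2 (hC.mono inter_subset_left)) hγ⟩
  rw [edist_nndist, ENNReal.coe_le_coe, ← NNReal.coe_le_coe, coe_nndist]
  calc dist y z ≤ dist y x + dist z x := dist_triangle_right y z x
    _ ≤ 1 + 1 := add_le_add (mem_ball.1 hy.2).le (mem_ball.1 hz.2).le
    _ = 2 := one_add_one_eq_two

lemma comp_locallyLipschitzOn [PseudoEMetricSpace X] [PseudoEMetricSpace Y] [PseudoEMetricSpace Z]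
    {s : Set X} {t : Set Y} {f : Y → Z} {g : X → Y} (hf : LocallyHolderOn γ t f)
    (hg : LocallyLipschitzOn s g) (hst : MapsTo g s t) :
    LocallyHolderOn γ s fun x => f (g x) := fun x hx => by
  obtain ⟨C, u, hu, hC⟩ := hf (g x) (hst hx)
  obtain ⟨L, v, hv, hL⟩ := hg hx
  have hpre : g ⁻¹' u ∈ 𝓝[s] x := (hg.continuousOn x hx).tendsto_nhdsWithin hst hu
  have hcomp := hC.comp (holderOnWith_one.2 (hL.mono (inter_subset_left (t := g ⁻¹' u))))
    fun y hy => hy.2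
  rw [mul_one] at hcomp
  exact ⟨_, _, inter_mem hv hpre, hcomp⟩

lemma sub [PseudoMetricSpace X] {s : Set X} {f g : X → ℝ} (hf : LocallyHolderOn γ s f)
    (hg : LocallyHolderOn γ s g) : LocallyHolderOn γ s fun x => f x - g x := fun x hx => by
  obtain ⟨C, t, ht, hC⟩ := hf x hx
  obtain ⟨C', t', ht', hC'⟩ := hg x hx
  refine ⟨C + C', t ∩ t', inter_mem ht ht', fun y hy z hz => ?_⟩
  have hfy := hC.edist_le hy.1 hz.1
  have hgy := hC'.edist_le hy.2 hz.2
  rw [edist_eq_enorm_sub] at hfy hgy ⊢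
  rw [ENNReal.coe_add, add_mul, sub_sub_sub_comm]
  exact enorm_sub_le.trans (add_le_add hfy hgy)

lemma mul [PseudoMetricSpace X] {s : Set X} {f g : X → ℝ} (hγ : 0 < γ)
    (hf : LocallyHolderOn γ s f) (hg : LocallyHolderOn γ s g) :
    LocallyHolderOn γ s fun x => f x * g x := fun x hx => by
  have hbdd : ∀ {h : X → ℝ}, LocallyHolderOn γ s h →
      ∀ᶠ y in 𝓝[s] x, ‖h y‖₊ ≤ ‖h x‖₊ + 1 := fun hh =>
    ((hh.continuousOn hγ x hx).nnnorm.eventually_lt_const (lt_add_one _)).mono fun _ => le_of_lt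
  obtain ⟨C, t, ht, hC⟩ := hf x hx
  obtain ⟨C', t', ht', hC'⟩ := hg x hx
  refine ⟨(‖f x‖₊ + 1) * C' + (‖g x‖₊ + 1) * C, _,
    inter_mem (inter_mem ht ht') (inter_mem (hbdd hf) (hbdd hg)), ?_⟩
  rintro y ⟨⟨hyt, hyt'⟩, hyf, -⟩ z ⟨⟨hzt, hzt'⟩, -, hzg⟩
  have hmul : f y * g y - f z * g z = f y * (g y - g z) + g z * (f y - f z) := by ring
  have hfy := hC.edist_le hyt hzt
  have hgy := hC'.edist_le hyt' hzt'
  rw [edist_eq_enorm_sub] at hfy hgy ⊢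
  rw [hmul, ENNReal.coe_add, add_mul, ENNReal.coe_mul, ENNReal.coe_mul, mul_assoc, mul_assoc]
  refine (enorm_add_le _ _).trans (add_le_add ?_ ?_) <;> rw [enorm_mul]
  · exact mul_le_mul' (ENNReal.coe_le_coe.2 hyf) hgy
  · exact mul_le_mul' (ENNReal.coe_le_coe.2 hzg) hfy

lemma congr [PseudoMetricSpace X] [PseudoEMetricSpace Y] {s : Set X} {f g : X → Y}
    (hf : LocallyHolderOn γ s f) (hfg : EqOn f g s) : LocallyHolderOn γ s g := fun x hx => by
  obtain ⟨C, t, ht, hC⟩ := hf x hx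
  refine ⟨C, t ∩ s, inter_mem ht self_mem_nhdsWithin, fun y hy z hz => ?_⟩
  rw [← hfg hy.2, ← hfg hz.2]
  exact hC y hy.1 z hz.1

end LocallyHolderOn

lemma exists_pos_forall_closedBall_two_mul {X : Type*} [PseudoMetricSpace X] {x : X} {P : X → Prop}
    (hP : ∀ᶠ y in 𝓝 x, P y) : ∃ r > 0, ∀ y ∈ closedBall x (2 * r), P y := by
  obtain ⟨r, hr, hrP⟩ := nhds_basis_closedBall.eventually_iff.1 hP
  exact ⟨r / 2, half_pos hr, by rwa [mul_div_cancel₀ r two_ne_zero]⟩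

variable {E : Type*} [NormedAddCommGroup E] [InnerProductSpace ℝ E] [FiniteDimensional ℝ E]
  [MeasurableSpace E] [BorelSpace E] [Nontrivial E]

lemma HasMeanValueFormula.locallyLipschitzOn {U : Set E} {w g : E → ℝ}
    (h : HasMeanValueFormula U w g) (hU : IsOpen U) (hw : Measurable w) (hg : Measurable g)
    (hwb : ∀ x ∈ U, ∃ M, ∀ᶠ y in 𝓝 x, |w y| ≤ M) (hgb : ∀ x ∈ U, ∃ M, ∀ᶠ y in 𝓝 x, |g y| ≤ M) :
    LocallyLipschitzOn U w := fun x hx => by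
  obtain ⟨M, hM⟩ := hwb x hx
  obtain ⟨M', hM'⟩ := hgb x hx
  obtain ⟨r, hr, hball⟩ := exists_pos_forall_closedBall_two_mul
    ((hM.and hM').and (hU.mem_nhds hx))
  obtain ⟨L, hL⟩ := h.exists_lipschitzOnWith hw hg hr (fun y hy => (hball y hy).2)
    (fun y hy => (hball y hy).1.1.trans (le_max_left M M'))
    (fun y hy => (hball y hy).1.2.trans (le_max_right M M'))
  exact ⟨L, ball x r, mem_nhdsWithin_of_mem_nhds (ball_mem_nhds x hr), hL⟩

lemma HasMeanValueFormula.contDiffAt_and_laplacian_eq {U : Set E} {w g : E → ℝ} {γ : NNReal}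
    (h : HasMeanValueFormula U w g) (hU : IsOpen U) (hw : Measurable w) (hg : Measurable g)
    (hwb : ∀ x ∈ U, ∃ M, ∀ᶠ y in 𝓝 x, |w y| ≤ M) (hγ : 0 < γ) (hgγ : LocallyHolderOn γ U g)
    {x : E} (hx : x ∈ U) : ContDiffAt ℝ 2 w x ∧ -Δ w x = g x := by
  have hgc : ContinuousOn g U := hgγ.continuousOn hγ
  have hgb : ∀ᶠ y in 𝓝 x, |g y| ≤ |g x| + 1 :=
    ((hgc.continuousAt (hU.mem_nhds hx)).abs.eventually_lt_const (lt_add_one _)).mono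
      fun _ => le_of_lt
  obtain ⟨M, hM⟩ := hwb x hx
  obtain ⟨C, t, ht, hC⟩ := hgγ x hx
  rw [hU.nhdsWithin_eq hx] at ht
  obtain ⟨r, hr, hball⟩ := exists_pos_forall_closedBall_two_mul
    ((hM.and hgb).and (Eventually.and (hU.mem_nhds hx) ht))
  have hsub : ball x r ⊆ U := fun y hy =>
    (hball y (closedBall_subset_closedBall (by linarith) (ball_subset_closedBall hy))).2.1
  have hcd : ContDiffOn ℝ 2 w (ball x r) := h.contDiffOn_ball hw hg hγ hr
    (fun y hy => (hball y hy).2.1) (fun y hy => (hball y hy).1.1.trans (le_max_left M _))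
    (fun y hy => (hball y hy).1.2.trans (le_max_right M _)) (hC.mono fun y hy => (hball y hy).2.2)
  exact ⟨hcd.contDiffAt (ball_mem_nhds x hr), h.laplacian_eq hr hsub hcd (hgc.mono hsub)⟩

end LocallyHolder

section PenalisedEquation

lemma nonpos_of_mul_le_laplacian_of_isClosed {E : Type*} [NormedAddCommGroup E]
    [InnerProductSpace ℝ E] [FiniteDimensional ℝ E] {S : Set E} (hS : IsClosed S) {v : E → ℝ}
    (hc : ContinuousOn v S) {B κ : ℝ} (hκ : 0 < κ) (hB : ∀ x ∈ S, v x ≤ B)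
    (hv : ∀ x ∈ S, 0 < v x → S ∈ 𝓝 x ∧ ContDiffAt ℝ 2 v x ∧ κ * v x ≤ Δ v x) :
    ∀ x ∈ S, v x ≤ 0 := by
  have hfrontier : ∀ x ∈ frontier S, max (v x) 0 = 0 := fun x hx => max_eq_right <| by
    by_contra! hpos
    exact hx.2 (mem_interior_iff_mem_nhds.2 (hv x (hS.frontier_subset hx) hpos).1)
  have hcont : Continuous (S.indicator fun x => max (v x) 0) :=
    continuous_indicator hfrontier (by rw [hS.closure_eq]; exact hc.sup continuousOn_const)
  have hle : ∀ x, S.indicator (fun x => max (v x) 0) x ≤ 0 := by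
    refine nonpos_of_mul_le_laplacian hcont hκ (B := max B 0) (fun x => ?_) fun x hx => ?_
    · exact indicator_le' (fun x hx => max_le_max_right 0 (hB x hx)) (fun x _ => le_max_right B 0) x
    · have hxS : x ∈ S := mem_of_indicator_ne_zero hx.ne'
      rw [indicator_of_mem hxS, lt_max_iff, or_iff_left (lt_irrefl 0)] at hx
      obtain ⟨hnhds, hcd, hΔ⟩ := hv x hxS hx
      have heq : S.indicator (fun x => max (v x) 0) =ᶠ[𝓝 x] v := by
        filter_upwards [hnhds, hcd.continuousAt.eventually_const_lt hx] with y hyS hy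
        rw [indicator_of_mem hyS, max_eq_left hy.le]
      rw [(InnerProductSpace.laplacian_congr_nhds heq).self_of_nhds, heq.self_of_nhds]
      exact ⟨hcd.congr_of_eventuallyEq heq, hΔ⟩
  intro x hx
  have := hle x
  rw [indicator_of_mem hx] at this
  exact (le_max_left _ _).trans this

lemma contDiff_add_mul_norm_sub_sq {E : Type*} [NormedAddCommGroup E] [InnerProductSpace ℝ E]
    (a b : ℝ) (c : E) : ContDiff ℝ 2 fun x => a + b * ‖x - c‖ ^ 2 :=
  contDiff_const.add (contDiff_const.mul (contDiff_norm_sub_sq c))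

lemma laplacian_const_add_mul {E : Type*} [NormedAddCommGroup E] [InnerProductSpace ℝ E]
    [FiniteDimensional ℝ E] {u : E → ℝ} {x : E} (hu : ContDiffAt ℝ 2 u x) (a b : ℝ) :
    Δ (fun x => a + b * u x) x = b * Δ u x := by
  have hadd : Δ ((fun _ : E => a) + b • u) x = Δ (fun _ : E => a) x + Δ (b • u) x :=
    contDiffAt_const.laplacian_add (contDiffAt_const.smul hu)
  rwa [InnerProductSpace.laplacian_smul b hu, InnerProductSpace.laplacian_const, Pi.zero_apply,
    zero_add] at hadd

lemma laplacian_add_mul_norm_sub_sq {E : Type*} [NormedAddCommGroup E] [InnerProductSpace ℝ E]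
    [FiniteDimensional ℝ E] (a b : ℝ) (c x : E) :
    Δ (fun x => a + b * ‖x - c‖ ^ 2) x = b * (2 * finrank ℝ E) := by
  rw [laplacian_const_add_mul (contDiff_norm_sub_sq c).contDiffAt, laplacian_norm_sub_sq]

/-- The data of the singular equation `-Δ w = φ (δ x) * f w` on `{x | 0 < δ x}`: a weight `φ` and
a nonlinearity `f` that may both blow up at zero, and a distance-like function `δ`. -/
structure IsSingularSource {E : Type*} [NormedAddCommGroup E] (γ : NNReal) (φ f : ℝ → ℝ)
    (δ : E → ℝ) : Prop where
  exponent_pos : 0 < γ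
  exponent_le_one : γ ≤ 1
  weight_pos : ∀ r, 0 < r → 0 < φ r
  antitoneOn_weight : AntitoneOn φ (Ioi 0)
  locallyHolderOn_weight : LocallyHolderOn γ (Ioi 0) φ
  nonlinearity_pos : ∀ t, 0 < t → 0 < f t
  antitoneOn_nonlinearity : AntitoneOn f (Ioi 0)
  lipschitzOn_nonlinearity : ∀ a, 0 < a → ∃ L, LipschitzOnWith L f (Ici a)
  dist_nonneg : ∀ x, 0 ≤ δ x
  lipschitzWith_dist : LipschitzWith 1 δ

namespace IsSingularSource

variable {E : Type*} [NormedAddCommGroup E] {γ : NNReal} {φ f : ℝ → ℝ} {δ : E → ℝ}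

lemma source_le (D : IsSingularSource γ φ f δ) {a b r t : ℝ} (ha : 0 < a) (har : a ≤ r)
    (hb : 0 < b) (hbt : b ≤ t) : φ r * f t ≤ φ a * f b :=
  mul_le_mul (D.antitoneOn_weight ha (ha.trans_le har) har)
    (D.antitoneOn_nonlinearity hb (hb.trans_le hbt) hbt)
    (D.nonlinearity_pos t (hb.trans_le hbt)).le (D.weight_pos a ha).le

lemma source_pos (D : IsSingularSource γ φ f δ) {r t : ℝ} (hr : 0 < r) (ht : 0 < t) :
    0 < φ r * f t :=
  mul_pos (D.weight_pos r hr) (D.nonlinearity_pos t ht)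

lemma locallyLipschitzOn_nonlinearity (D : IsSingularSource γ φ f δ) :
    LocallyLipschitzOn (Ioi 0) f := fun t ht => by
  obtain ⟨L, hL⟩ := D.lipschitzOn_nonlinearity (t / 2) (half_pos ht)
  exact ⟨L, _, mem_nhdsWithin_of_mem_nhds (Ici_mem_nhds (half_lt_self ht)), hL⟩

lemma exists_lipschitzWith_regularised (D : IsSingularSource γ φ f δ) {ε : ℝ} (hε : 0 < ε) :
    ∃ L, LipschitzWith L fun t => f (max t 0 + ε) := by
  obtain ⟨L, hL⟩ := D.lipschitzOn_nonlinearity ε hε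
  have hmax : LipschitzWith (1 + 0) fun t : ℝ => max t 0 + ε :=
    (LipschitzWith.id.max_const 0).add (.const ε)
  have hmaps : MapsTo (fun t : ℝ => max t 0 + ε) univ (Ici ε) := fun t _ =>
    le_add_of_nonneg_left (le_max_right t 0)
  exact ⟨_, lipschitzOnWith_univ.1 (hL.comp hmax.lipschitzOnWith hmaps)⟩

lemma locallyHolderOn_weight_max (D : IsSingularSource γ φ f δ) {ε : ℝ} (hε : 0 < ε) :
    LocallyHolderOn γ univ fun x => φ (max (δ x) ε) :=
  D.locallyHolderOn_weight.comp_locallyLipschitzOn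
    (D.lipschitzWith_dist.max_const ε).locallyLipschitz.locallyLipschitzOn
    fun _ _ => lt_max_of_lt_right hε

end IsSingularSource
end PenalisedEquation

section PenalisedExistence

namespace IsSingularSource

section

variable {E : Type*} [NormedAddCommGroup E] {γ : NNReal} {φ f : ℝ → ℝ} {δ : E → ℝ} {ε : ℝ}

lemma weight_max_pos (D : IsSingularSource γ φ f δ) (hε : 0 < ε) (x : E) :
    0 < φ (max (δ x) ε) :=
  D.weight_pos _ (lt_max_of_lt_right hε)

lemma weight_max_le (D : IsSingularSource γ φ f δ) (hε : 0 < ε) (x : E) :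
    φ (max (δ x) ε) ≤ φ ε :=
  D.antitoneOn_weight hε (mem_Ioi.2 (lt_max_of_lt_right hε)) (le_max_right _ _)

lemma continuous_weight_max (D : IsSingularSource γ φ f δ) (hε : 0 < ε) :
    Continuous fun x => φ (max (δ x) ε) :=
  continuousOn_univ.1 ((D.locallyHolderOn_weight_max hε).continuousOn D.exponent_pos)

lemma antitone_regularised (D : IsSingularSource γ φ f δ) (hε : 0 < ε) :
    Antitone fun t => f (max t 0 + ε) := fun s t hst =>
  D.antitoneOn_nonlinearity (add_pos_of_nonneg_of_pos (le_max_right s 0) hε)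
    (add_pos_of_nonneg_of_pos (le_max_right t 0) hε) (by gcongr)

end

variable {E : Type*} [NormedAddCommGroup E] [InnerProductSpace ℝ E] [FiniteDimensional ℝ E]
  [MeasurableSpace E] [BorelSpace E] {γ : NNReal} {φ f : ℝ → ℝ} {δ p : E → ℝ} {ε P : ℝ}

lemma exists_hasMeanValueFormula_penalised (D : IsSingularSource γ φ f δ) (hε : 0 < ε)
    (hpε : ∀ x, ε ≤ p x) (hpP : ∀ x, p x ≤ P) (hp : Continuous p) :
    ∃ w : BoundedContinuousFunction E ℝ, HasMeanValueFormula univ w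
      fun x => φ (max (δ x) ε) * f (max (w x) 0 + ε) - p x * w x := by
  obtain ⟨L, hL⟩ := D.exists_lipschitzWith_regularised hε
  have hεP : ε ≤ P := (hpε 0).trans (hpP 0)
  have hφL : 0 ≤ φ ε * L := mul_nonneg (D.weight_pos ε hε).le L.2
  have hcont : Continuous fun q : E × ℝ =>
      φ (max (δ q.1) ε) * f (max q.2 0 + ε) - p q.1 * q.2 :=
    (((D.continuous_weight_max hε).comp continuous_fst).mul
      (hL.continuous.comp continuous_snd)).sub ((hp.comp continuous_fst).mul continuous_snd)
  refine exists_hasMeanValueFormula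
    (H := fun x t => φ (max (δ x) ε) * f (max t 0 + ε) - p x * t) hcont (B := φ ε * f ε)
    (κ := ε) (l := φ ε * L + P + 1) (fun x => ?_) hε (by linarith) (fun x s t hst => ?_)
    fun x s t hst => ?_
  · simp only [max_self, zero_add, mul_zero, sub_zero]
    rw [abs_of_pos (D.source_pos (lt_max_of_lt_right hε) hε)]
    exact D.source_le hε (le_max_right _ _) hε le_rfl
  · have hts : 0 ≤ t - s := sub_nonneg.2 hst
    have hdist := hL.dist_le_mul s t
    rw [Real.dist_eq, Real.dist_eq, abs_sub_comm s, abs_of_nonneg hts] at hdist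
    have hsource : φ (max (δ x) ε) * (f (max s 0 + ε) - f (max t 0 + ε)) ≤ φ ε * (L * (t - s)) :=
      mul_le_mul (D.weight_max_le hε x) ((le_abs_self _).trans hdist)
        (sub_nonneg.2 (D.antitone_regularised hε hst)) (D.weight_pos ε hε).le
    have hpen : p x * (t - s) ≤ P * (t - s) :=
      mul_le_mul_of_nonneg_right (hpP x) hts
    linarith
  · have hsource := mul_le_mul_of_nonneg_left (D.antitone_regularised hε hst)
      (D.weight_max_pos hε x).le
    have hpen : ε * (t - s) ≤ p x * (t - s) :=
      mul_le_mul_of_nonneg_right (hpε x) (sub_nonneg.2 hst)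
    dsimp only at hsource
    linarith

lemma contDiffAt_and_laplacian_eq_of_penalised [Nontrivial E] (D : IsSingularSource γ φ f δ)
    (hε : 0 < ε) {Λ : NNReal} (hp : LipschitzWith Λ p) {w : E → ℝ} (hw : Continuous w)
    (hmv : HasMeanValueFormula univ w
      fun x => φ (max (δ x) ε) * f (max (w x) 0 + ε) - p x * w x) (x : E) :
    ContDiffAt ℝ 2 w x ∧ -Δ w x = φ (max (δ x) ε) * f (max (w x) 0 + ε) - p x * w x := by
  obtain ⟨L, hL⟩ := D.exists_lipschitzWith_regularised hε
  have hlocBdd : ∀ {h : E → ℝ}, Continuous h → ∀ x ∈ univ, ∃ M, ∀ᶠ y in 𝓝 x, |h y| ≤ M :=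
    fun hh x _ => ⟨_, (hh.abs.continuousAt.eventually_lt_const (lt_add_one _)).mono
      fun _ => le_of_lt⟩
  have hcont : Continuous fun x => φ (max (δ x) ε) * f (max (w x) 0 + ε) - p x * w x :=
    ((D.continuous_weight_max hε).mul (hL.continuous.comp hw)).sub (hp.continuous.mul hw)
  have hwL : LocallyLipschitzOn univ w := hmv.locallyLipschitzOn isOpen_univ hw.measurable
    hcont.measurable (hlocBdd hw) (hlocBdd hcont)
  have hfL : LocallyHolderOn γ univ fun x => f (max (w x) 0 + ε) :=
    (LocallyHolderOn.of_locallyLipschitzOn hL.locallyLipschitz.locallyLipschitzOn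
      D.exponent_le_one).comp_locallyLipschitzOn hwL (mapsTo_univ _ _)
  refine hmv.contDiffAt_and_laplacian_eq isOpen_univ hw.measurable hcont.measurable (hlocBdd hw)
    D.exponent_pos ?_ (mem_univ x)
  exact ((D.locallyHolderOn_weight_max hε).mul D.exponent_pos hfL).sub
    ((LocallyHolderOn.of_locallyLipschitzOn hp.locallyLipschitz.locallyLipschitzOn
      D.exponent_le_one).mul D.exponent_pos
      (.of_locallyLipschitzOn hwL D.exponent_le_one))

end IsSingularSource

/-- A bounded classical solution of the equation regularised at scale `ε`. The term `p x * w x`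
pushes `w` towards zero where the penalty `p` is large. -/
structure IsPenalisedSolution {E : Type*} [NormedAddCommGroup E] [InnerProductSpace ℝ E]
    [FiniteDimensional ℝ E] [MeasurableSpace E] [BorelSpace E] (φ f : ℝ → ℝ) (δ p : E → ℝ)
    (ε : ℝ) (w : E → ℝ) : Prop where
  continuous_penalty : Continuous p
  le_penalty : ∀ x, ε ≤ p x
  contDiff : ContDiff ℝ 2 w
  nonneg : ∀ x, 0 ≤ w x
  bddAbove : BddAbove (range w)
  neg_laplacian : ∀ x, -Δ w x = φ (max (δ x) ε) * f (w x + ε) - p x * w x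
  hasMeanValueFormula : HasMeanValueFormula univ w
    fun x => φ (max (δ x) ε) * f (w x + ε) - p x * w x

lemma IsSingularSource.exists_isPenalisedSolution {E : Type*} [NormedAddCommGroup E]
    [InnerProductSpace ℝ E] [FiniteDimensional ℝ E] [MeasurableSpace E] [BorelSpace E]
    [Nontrivial E] {γ : NNReal} {φ f : ℝ → ℝ} {δ p : E → ℝ} {ε P : ℝ}
    (D : IsSingularSource γ φ f δ) (hε : 0 < ε) (hpε : ∀ x, ε ≤ p x) (hpP : ∀ x, p x ≤ P)
    {Λ : NNReal} (hp : LipschitzWith Λ p) : ∃ w, IsPenalisedSolution φ f δ p ε w := by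
  obtain ⟨w, hmv⟩ := D.exists_hasMeanValueFormula_penalised hε hpε hpP hp.continuous
  have hsol := D.contDiffAt_and_laplacian_eq_of_penalised hε hp w.continuous hmv
  have hneg : ∀ x, -w x ≤ 0 := by
    refine nonpos_of_mul_le_laplacian w.continuous.neg hε (B := ‖w‖)
      (fun x => (neg_le_abs _).trans (w.norm_coe_le_norm x)) fun x hx => ⟨(hsol x).1.neg, ?_⟩
    rw [show (fun y => -w y) = -⇑w from rfl, InnerProductSpace.laplacian_neg, Pi.neg_apply,
      (hsol x).2]
    have hsource := D.source_pos (lt_max_of_lt_right hε : 0 < max (δ x) ε)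
      (add_pos_of_nonneg_of_pos (le_max_right (w x) 0) hε)
    have hpen := mul_le_mul_of_nonneg_right (hpε x) hx.le
    linarith
  have hmax : ∀ x, max (w x) 0 = w x := fun x => max_eq_left (neg_nonpos.1 (hneg x))
  simp only [hmax] at hmv hsol
  exact ⟨w, hp.continuous, hpε, contDiff_iff_contDiffAt.2 fun x => (hsol x).1,
    fun x => neg_nonpos.1 (hneg x),
    ⟨‖w‖, forall_mem_range.2 fun x => (le_abs_self _).trans (w.norm_coe_le_norm x)⟩,
    fun x => (hsol x).2, hmv⟩

end PenalisedExistence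

section ApproximateSolution

variable {E : Type*} [NormedAddCommGroup E] [InnerProductSpace ℝ E] [FiniteDimensional ℝ E]
  [MeasurableSpace E] [BorelSpace E] {γ : NNReal} {φ f : ℝ → ℝ} {δ p : E → ℝ} {ε : ℝ} {w : E → ℝ}

namespace IsPenalisedSolution

lemma le_of_supersolution (h : IsPenalisedSolution φ f δ p ε w) (D : IsSingularSource γ φ f δ)
    (hε : 0 < ε) {S : Set E} (hS : IsClosed S) {z : E → ℝ} (hzc : ContinuousOn z S)
    (hz0 : ∀ x ∈ S, 0 ≤ z x)
    (hz : ∀ x ∈ S, z x < w x → S ∈ 𝓝 x ∧ ContDiffAt ℝ 2 z x ∧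
      φ (max (δ x) ε) * f (z x + ε) - p x * z x ≤ -Δ z x) :
    ∀ x ∈ S, w x ≤ z x := by
  obtain ⟨B, hB⟩ := h.bddAbove
  suffices ∀ x ∈ S, (w - z) x ≤ 0 from fun x hx => sub_nonpos.1 (this x hx)
  refine nonpos_of_mul_le_laplacian_of_isClosed hS (h.contDiff.continuous.continuousOn.sub hzc) hε
    (B := B) (fun x hx => ?_) fun x hx hpos => ?_
  · exact (sub_le_self _ (hz0 x hx)).trans (hB (mem_range_self x))
  · have hlt : z x < w x := sub_pos.1 hpos
    obtain ⟨hnhds, hcd, hΔ⟩ := hz x hx hlt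
    refine ⟨hnhds, h.contDiff.contDiffAt.sub hcd, ?_⟩
    rw [h.contDiff.contDiffAt.laplacian_sub hcd, Pi.sub_apply]
    have hsource := D.source_le (lt_max_of_lt_right hε) (le_refl (max (δ x) ε))
      (add_pos_of_nonneg_of_pos (hz0 x hx) hε) (add_le_add_left hlt.le ε)
    have hpen := mul_le_mul_of_nonneg_right (h.le_penalty x) (sub_nonneg.2 hlt.le)
    linarith [h.neg_laplacian x]

lemma le_of_subsolution (h : IsPenalisedSolution φ f δ p ε w) (D : IsSingularSource γ φ f δ)
    (hε : 0 < ε) {z : E → ℝ} (hzc : ContDiff ℝ 2 z) {B : ℝ} (hB : ∀ x, z x ≤ B)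
    (hz : ∀ x, w x < z x → -Δ z x ≤ φ (max (δ x) ε) * f (z x + ε) - p x * z x) (x : E) :
    z x ≤ w x := by
  suffices ∀ x, (z - w) x ≤ 0 from sub_nonpos.1 (this x)
  refine nonpos_of_mul_le_laplacian (hzc.continuous.sub h.contDiff.continuous) hε
    (B := B) (fun x => (sub_le_self _ (h.nonneg x)).trans (hB x)) fun x hpos => ?_
  have hlt : w x < z x := sub_pos.1 hpos
  refine ⟨(hzc.sub h.contDiff).contDiffAt, ?_⟩
  rw [hzc.contDiffAt.laplacian_sub h.contDiff.contDiffAt, Pi.sub_apply]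
  have hsource := D.source_le (lt_max_of_lt_right hε) (le_refl (max (δ x) ε))
    (add_pos_of_nonneg_of_pos (h.nonneg x) hε) (add_le_add_left hlt.le ε)
  have hpen := mul_le_mul_of_nonneg_right (h.le_penalty x) (sub_nonneg.2 hlt.le)
  linarith [h.neg_laplacian x, hz x hlt]

lemma continuous_source (h : IsPenalisedSolution φ f δ p ε w) (D : IsSingularSource γ φ f δ)
    (hε : 0 < ε) : Continuous fun x => φ (max (δ x) ε) * f (w x + ε) - p x * w x := by
  have hw := h.contDiff.continuous
  have hf : Continuous fun x => f (w x + ε) :=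
    D.locallyLipschitzOn_nonlinearity.continuousOn.comp_continuous (hw.add continuous_const)
      fun x => add_pos_of_nonneg_of_pos (h.nonneg x) hε
  exact ((D.continuous_weight_max hε).mul hf).sub (h.continuous_penalty.mul hw)

lemma le_div (h : IsPenalisedSolution φ f δ p ε w) (D : IsSingularSource γ φ f δ)
    (hε : 0 < ε) (x : E) : w x ≤ φ ε * f ε / ε := by
  set C := φ ε * f ε / ε with hC
  have hC0 : 0 ≤ C := (div_pos (D.source_pos hε hε) hε).le
  refine h.le_of_supersolution D hε isClosed_univ continuousOn_const (fun _ _ => hC0)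
    (fun x _ _ => ⟨univ_mem, contDiffAt_const, ?_⟩) x (mem_univ x)
  rw [InnerProductSpace.laplacian_const, Pi.zero_apply, neg_zero, sub_nonpos]
  calc φ (max (δ x) ε) * f (C + ε) ≤ φ ε * f ε :=
        D.source_le hε (le_max_right _ _) hε (le_add_of_nonneg_left hC0)
    _ = ε * C := by rw [hC, mul_div_cancel₀ _ hε.ne']
    _ ≤ p x * C := mul_le_mul_of_nonneg_right (h.le_penalty x) hC0

lemma le_of_le_penalty (h : IsPenalisedSolution φ f δ p ε w) (D : IsSingularSource γ φ f δ)
    (hε : 0 < ε) {P r : ℝ} (hP : 0 < P) (hr : 0 < r) {x : E}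
    (hp : ∀ y ∈ closedBall x r, P ≤ p y) :
    w x ≤ (φ ε * f ε + φ ε * f ε / ε / r ^ 2 * (2 * finrank ℝ E)) / P := by
  have hφf : 0 < φ ε * f ε := D.source_pos hε hε
  set Q := φ ε * f ε / ε / r ^ 2
  set θ := (φ ε * f ε + Q * (2 * finrank ℝ E)) / P with hθ
  have : 0 ≤ Q := by positivity
  have hθ0 : 0 ≤ θ := by positivity
  have hz0 : ∀ y, θ ≤ θ + Q * ‖y - x‖ ^ 2 := fun y => le_add_of_nonneg_right (by positivity)
  have hz := contDiff_add_mul_norm_sub_sq θ Q x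
  have hle := h.le_of_supersolution D hε isClosed_univ hz.continuous.continuousOn
    (fun y _ => hθ0.trans (hz0 y)) (fun y _ hy => ⟨univ_mem, hz.contDiffAt, ?_⟩) x (mem_univ x)
  · simpa using hle
  · have hyr : y ∈ closedBall x r := by
      rw [mem_closedBall, dist_eq_norm]
      by_contra! hlt
      have hQr : Q * r ^ 2 = φ ε * f ε / ε := div_mul_cancel₀ _ (by positivity)
      have : Q * r ^ 2 ≤ Q * ‖y - x‖ ^ 2 := by gcongr
      linarith [h.le_div D hε y]
    rw [laplacian_add_mul_norm_sub_sq]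
    have hsource := D.source_le hε (le_max_right (δ y) ε) hε
      (le_add_of_nonneg_left (hθ0.trans (hz0 y)))
    have hpen : P * θ ≤ p y * (θ + Q * ‖y - x‖ ^ 2) :=
      mul_le_mul (hp y hyr) (hz0 y) hθ0 (hε.le.trans (h.le_penalty y))
    rw [hθ, mul_div_cancel₀ _ hP.ne', ← hθ] at hpen
    linarith

end IsPenalisedSolution

/-- A penalised solution with a penalty which does not act on `{x | ε ≤ δ x}` but keeps the
solution below `ε` on `{x | δ x ≤ ε / 2}`. -/
structure IsApproximateSolution (φ f : ℝ → ℝ) (δ p : E → ℝ) (ε : ℝ) (w : E → ℝ) : Prop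
    extends IsPenalisedSolution φ f δ p ε w where
  penalty_eq : ∀ x, ε ≤ δ x → p x = ε
  le_of_dist_le : ∀ x, δ x ≤ ε / 2 → w x ≤ ε

lemma IsSingularSource.exists_isApproximateSolution [Nontrivial E]
    (D : IsSingularSource γ φ f δ) (hε : 0 < ε) :
    ∃ p w, IsApproximateSolution φ f δ p ε w := by
  have hφf : 0 < φ ε * f ε := D.source_pos hε hε
  set A := φ ε * f ε + φ ε * f ε / ε / (ε / 4) ^ 2 * (2 * finrank ℝ E) with hA
  have hA0 : 0 < A := by positivity
  set m : ℝ := 4 * A / ε ^ 2 with hm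
  have hm0 : 0 < m := by positivity
  set p : E → ℝ := fun x => ε + m * max (ε - δ x) 0 with hp
  have hpε : ∀ x, ε ≤ p x := fun x => le_add_of_nonneg_right (by positivity)
  have hpP : ∀ x, p x ≤ ε + m * ε := fun x => (add_le_add_iff_left ε).2 <|
    mul_le_mul_of_nonneg_left (max_le (sub_le_self ε (D.dist_nonneg x)) hε.le) hm0.le
  have hpL := (LipschitzWith.const (α := E) ε).add
    ((lipschitzWith_smul m).comp (((LipschitzWith.const ε).sub D.lipschitzWith_dist).max_const 0))
  obtain ⟨w, hw⟩ := D.exists_isPenalisedSolution hε hpε hpP hpL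
  refine ⟨p, w, hw, fun x hx => ?_, fun x hx => ?_⟩
  · rw [hp]
    simp only [max_eq_right (sub_nonpos.2 hx), mul_zero, add_zero]
  · have hball : ∀ y ∈ closedBall x (ε / 4), A / ε ≤ p y := fun y hy => by
      have hδ : δ y ≤ δ x + dist y x := by
        have := D.lipschitzWith_dist.dist_le_mul y x
        rw [Real.dist_eq, NNReal.coe_one, one_mul] at this
        linarith [le_abs_self (δ y - δ x)]
      have hmax : ε / 4 ≤ max (ε - δ y) 0 := le_max_of_le_left (by linarith [mem_closedBall.1 hy])
      calc A / ε = m * (ε / 4) := by rw [hm]; field_simp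
        _ ≤ m * max (ε - δ y) 0 := mul_le_mul_of_nonneg_left hmax hm0.le
        _ ≤ p y := le_add_of_nonneg_left hε.le
    have := hw.le_of_le_penalty D hε (div_pos hA0 hε) (by positivity : 0 < ε / 4) hball
    rwa [← hA, div_div_cancel₀ hA0.ne'] at this

namespace IsApproximateSolution

lemma le_add {ε' : ℝ} {p' w' : E → ℝ} (h : IsApproximateSolution φ f δ p ε w)
    (h' : IsApproximateSolution φ f δ p' ε' w') (D : IsSingularSource γ φ f δ) (hε' : 0 < ε')
    (hε : ε' ≤ ε / 2) (x : E) : w x ≤ w' x + ε := by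
  have hε0 : 0 < ε := by linarith
  have hz : ContDiff ℝ 2 (w' + fun _ => ε) := h'.contDiff.add contDiff_const
  refine h.le_of_supersolution D hε0 isClosed_univ hz.continuous.continuousOn
    (fun y _ => add_nonneg (h'.nonneg y) hε0.le) (fun y _ hy => ⟨univ_mem, hz.contDiffAt, ?_⟩) x
    (mem_univ x)
  rw [h'.contDiff.contDiffAt.laplacian_add contDiffAt_const, InnerProductSpace.laplacian_const,
    Pi.zero_apply, add_zero, h'.neg_laplacian]
  dsimp only [Pi.add_apply] at hy ⊢
  have hw' : 0 ≤ w' y := h'.nonneg y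
  have hδ : ε' < δ y := by
    by_contra! hle
    linarith [h.le_of_dist_le y (hle.trans hε)]
  rw [h'.penalty_eq y hδ.le]
  have hsource : φ (max (δ y) ε) * f (w' y + ε + ε) ≤ φ (max (δ y) ε') * f (w' y + ε') :=
    D.source_le (lt_max_of_lt_right hε') (max_le_max_left _ (by linarith)) (by linarith)
      (by linarith)
  have hpen : ε' * w' y ≤ p y * (w' y + ε) :=
    mul_le_mul (by linarith [h.le_penalty y]) (by linarith) hw' (hε0.le.trans (h.le_penalty y))
  linarith

lemma mul_sq_le {a d D₀ : ℝ} {y : E} (h : IsApproximateSolution φ f δ p ε w)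
    (D : IsSingularSource γ φ f δ) (hε : 0 < ε) (hε1 : ε ≤ 1) (ha : 0 ≤ a) (hd : 0 < d)
    (had : a * d ^ 2 ≤ 1) (haD : a * (2 * finrank ℝ E + d ^ 2) ≤ φ D₀ * f 2)
    (hδ : ∀ x ∈ closedBall y d, ε ≤ δ x ∧ δ x ≤ D₀) : a * d ^ 2 ≤ w y := by
  have hz := h.le_of_subsolution D hε (contDiff_add_mul_norm_sub_sq (a * d ^ 2) (-a) y)
    (B := a * d ^ 2) (fun x => ?_) (fun x hx => ?_) y
  · simpa using hz
  · have : 0 ≤ a * ‖x - y‖ ^ 2 := by positivity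
    linarith
  · have hwx : 0 ≤ w x := h.nonneg x
    have ha0 : 0 ≤ a * ‖x - y‖ ^ 2 := by positivity
    have hxd : x ∈ closedBall y d := by
      rw [mem_closedBall, dist_eq_norm]
      by_contra! hlt
      have : a * d ^ 2 ≤ a * ‖x - y‖ ^ 2 := by gcongr
      linarith
    obtain ⟨hεx, hxD⟩ := hδ x hxd
    rw [laplacian_add_mul_norm_sub_sq, h.penalty_eq x hεx, max_eq_left hεx]
    have hsource : φ D₀ * f 2 ≤ φ (δ x) * f (a * d ^ 2 + -a * ‖x - y‖ ^ 2 + ε) :=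
      D.source_le (hε.trans_le hεx) hxD (by linarith) (by linarith)
    have hpen : ε * (a * d ^ 2 + -a * ‖x - y‖ ^ 2) ≤ 1 * (a * d ^ 2) :=
      mul_le_mul hε1 (by linarith) (by linarith) zero_le_one
    linarith

end IsApproximateSolution
end ApproximateSolution

section Barrier

/-- A nonnegative supersolution of `-Δ b = φ (δ x)` on `{x ∈ R | 0 < δ x}`. It is exempt from the
inequality on `T`, which has to contain the boundary points of `R`. -/
structure IsBarrier {E : Type*} [NormedAddCommGroup E] [InnerProductSpace ℝ E]
    [FiniteDimensional ℝ E] (φ : ℝ → ℝ) (δ : E → ℝ) (R T : Set E) (b : E → ℝ) : Prop where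
  isClosed : IsClosed R
  continuousOn : ContinuousOn b (R ∩ {x | 0 < δ x})
  nonneg : ∀ x ∈ R, 0 < δ x → 0 ≤ b x
  supersolution : ∀ x ∈ R, 0 < δ x → x ∉ T →
    R ∈ 𝓝 x ∧ ContDiffAt ℝ 2 b x ∧ φ (δ x) ≤ -Δ b x

lemma IsBarrier.mono_exempt {E : Type*} [NormedAddCommGroup E] [InnerProductSpace ℝ E]
    [FiniteDimensional ℝ E] {φ : ℝ → ℝ} {δ : E → ℝ} {R S T : Set E} {b : E → ℝ}
    (h : IsBarrier φ δ R S b) (hST : S ⊆ T) : IsBarrier φ δ R T b :=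
  { h with supersolution := fun x hxR hx hxT => h.supersolution x hxR hx fun hxS => hxT (hST hxS) }

variable {E : Type*} [NormedAddCommGroup E] [InnerProductSpace ℝ E] [FiniteDimensional ℝ E]
  [MeasurableSpace E] [BorelSpace E] {γ : NNReal} {φ f : ℝ → ℝ} {δ : E → ℝ}

lemma IsApproximateSolution.le_of_isBarrier {p : E → ℝ} {ε : ℝ} {w b : E → ℝ} {R T : Set E}
    (h : IsApproximateSolution φ f δ p ε w) (D : IsSingularSource γ φ f δ) (hε : 0 < ε)
    (hb : IsBarrier φ δ R T b) {s : ℝ} (hs : 0 < s)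
    (hT : ∀ x ∈ T, 0 < δ x → w x ≤ s + ε + f s * b x) :
    ∀ x ∈ R, 0 < δ x → w x ≤ s + ε + f s * b x := by
  intro x hxR hx
  have hfs := D.nonlinearity_pos s hs
  have hz0 : ∀ y ∈ R, 0 < δ y → s + ε ≤ s + ε + f s * b y := fun y hyR hy =>
    le_add_of_nonneg_right (mul_nonneg hfs.le (hb.nonneg y hyR hy))
  rcases le_or_gt (δ x) (ε / 2) with hxε | hxε
  · linarith [h.le_of_dist_le x hxε, hz0 x hxR hx]
  have hS : IsClosed (R ∩ {y | ε / 2 ≤ δ y}) :=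
    hb.isClosed.inter (isClosed_le continuous_const D.lipschitzWith_dist.continuous)
  have hpos : ∀ y ∈ R ∩ {y | ε / 2 ≤ δ y}, 0 < δ y := fun y hy => (half_pos hε).trans_le hy.2
  have hzc : ContinuousOn (fun y => s + ε + f s * b y) (R ∩ {y | ε / 2 ≤ δ y}) :=
    continuousOn_const.add
      (continuousOn_const.mul (hb.continuousOn.mono fun y hy => ⟨hy.1, hpos y hy⟩))
  refine h.le_of_supersolution D hε hS hzc (fun y hy => ?_) (fun y hy hlt => ?_) x ⟨hxR, hxε.le⟩
  · linarith [hz0 y hy.1 (hpos y hy)]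
  · have hyδ := hpos y hy
    have hyε : ε / 2 < δ y := by
      by_contra! hle
      linarith [h.le_of_dist_le y hle, hz0 y hy.1 hyδ]
    obtain ⟨hnhds, hcd, hΔ⟩ := hb.supersolution y hy.1 hyδ fun hyT => (hT y hyT hyδ).not_gt hlt
    refine ⟨inter_mem hnhds ((D.lipschitzWith_dist.continuous.continuousAt.eventually_const_lt
      hyε).mono fun _ => le_of_lt), contDiffAt_const.add (contDiffAt_const.mul hcd), ?_⟩
    rw [laplacian_const_add_mul hcd]
    have hsource : φ (max (δ y) ε) * f (s + ε + f s * b y + ε) ≤ φ (δ y) * f s :=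
      D.source_le hyδ (le_max_left _ _) hs (by linarith [hz0 y hy.1 hyδ])
    have hpen : 0 ≤ p y * (s + ε + f s * b y) :=
      mul_nonneg (hε.le.trans (h.le_penalty y)) (by linarith [hz0 y hy.1 hyδ])
    have hbarrier := mul_le_mul_of_nonneg_right hΔ hfs.le
    linarith

end Barrier

section SingularEquation

variable {E : Type*} [NormedAddCommGroup E] [InnerProductSpace ℝ E] [FiniteDimensional ℝ E]
  [MeasurableSpace E] [BorelSpace E] {γ : NNReal} {φ f : ℝ → ℝ} {δ : E → ℝ}

/-- `w` is the pointwise limit of uniformly bounded approximate solutions at scales tending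
to zero. -/
structure IsLimitOfApproximateSolutions (φ f : ℝ → ℝ) (δ : E → ℝ) (ε : ℕ → ℝ)
    (p W : ℕ → E → ℝ) (w : E → ℝ) (M : ℝ) : Prop where
  scale_pos : ∀ n, 0 < ε n
  scale_le_one : ∀ n, ε n ≤ 1
  tendsto_scale : Tendsto ε atTop (𝓝 0)
  isApproximateSolution : ∀ n, IsApproximateSolution φ f δ (p n) (ε n) (W n)
  le_bound : ∀ n x, 0 < δ x → W n x ≤ M
  tendsto : ∀ x, Tendsto (fun n => W n x) atTop (𝓝 (w x))

lemma IsSingularSource.exists_isLimitOfApproximateSolutions [Nontrivial E]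
    (D : IsSingularSource γ φ f δ) {V : E → ℝ} {B : ℝ} (hV : IsBarrier φ δ univ ∅ V)
    (hB : ∀ x, 0 < δ x → V x ≤ B) :
    ∃ ε p W w, IsLimitOfApproximateSolutions φ f δ ε p W w (2 + f 1 * B) := by
  set ε : ℕ → ℝ := fun n => (1 / 2) ^ n with hεdef
  have hε : ∀ n, 0 < ε n := fun n => by positivity
  have hε1 : ∀ n, ε n ≤ 1 := fun n => pow_le_one₀ (by norm_num) (by norm_num)
  have hhalf : ∀ n, ε (n + 1) = ε n / 2 := fun n => by rw [hεdef]; dsimp only; ring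
  have hε0 : Tendsto ε atTop (𝓝 0) :=
    tendsto_pow_atTop_nhds_zero_of_lt_one (by norm_num) (by norm_num)
  choose p W hW using fun n => D.exists_isApproximateSolution (hε n)
  have hbound : ∀ n x, 0 < δ x → W n x ≤ 2 + f 1 * B := fun n x hx => by
    have hle := (hW n).le_of_isBarrier D (hε n) hV one_pos (fun _ h => h.elim) x (mem_univ x) hx
    have := mul_le_mul_of_nonneg_left (hB x hx) (D.nonlinearity_pos 1 one_pos).le
    linarith [hε1 n]
  have hmono : ∀ x, Monotone fun n => W n x - 2 * ε n := fun x =>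
    monotone_nat_of_le_succ fun n => by
      have := (hW n).le_add (hW (n + 1)) D (hε (n + 1)) (hhalf n).le x
      linarith [hhalf n]
  have hbdd : ∀ x, BddAbove (range fun n => W n x - 2 * ε n) := fun x => by
    refine ⟨max 1 (2 + f 1 * B), forall_mem_range.2 fun n => ?_⟩
    rcases (D.dist_nonneg x).eq_or_lt with hx | hx
    · exact le_max_of_le_left
        (by linarith [(hW n).le_of_dist_le x (by linarith [hε n]), hε n, hε1 n])
    · exact le_max_of_le_right (by linarith [hbound n x hx, hε n])
  refine ⟨ε, p, W, fun x => ⨆ n, (W n x - 2 * ε n), hε, hε1, hε0, hW, hbound, fun x => ?_⟩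
  have := (tendsto_atTop_ciSup (hmono x) (hbdd x)).add (hε0.const_mul 2)
  simpa using this

namespace IsLimitOfApproximateSolutions

variable {ε : ℕ → ℝ} {p W : ℕ → E → ℝ} {w : E → ℝ} {M : ℝ}

lemma eq_zero (h : IsLimitOfApproximateSolutions φ f δ ε p W w M) {x : E} (hx : δ x = 0) :
    w x = 0 := by
  refine tendsto_nhds_unique (h.tendsto x) (squeeze_zero
    (fun n => (h.isApproximateSolution n).nonneg x) (fun n => ?_) h.tendsto_scale)
  exact (h.isApproximateSolution n).le_of_dist_le x (hx.trans_le (half_pos (h.scale_pos n)).le)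

lemma nonneg (h : IsLimitOfApproximateSolutions φ f δ ε p W w M) (x : E) : 0 ≤ w x :=
  ge_of_tendsto' (h.tendsto x) fun n => (h.isApproximateSolution n).nonneg x

lemma le_of_isBarrier (h : IsLimitOfApproximateSolutions φ f δ ε p W w M)
    (D : IsSingularSource γ φ f δ) {V b : E → ℝ} (hV : IsBarrier φ δ univ ∅ V) {R : Set E}
    (hb : IsBarrier φ δ R {x | V x ≤ b x} b) {s : ℝ} (hs : 0 < s) {x : E} (hxR : x ∈ R)
    (hx : 0 < δ x) : w x ≤ s + f s * b x := by
  have hle : ∀ n, W n x ≤ s + ε n + f s * b x := fun n => by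
    have hn := h.isApproximateSolution n
    refine hn.le_of_isBarrier D (h.scale_pos n) hb hs (fun y hyb hy => ?_) x hxR hx
    have hVy := hn.le_of_isBarrier D (h.scale_pos n) hV hs (fun _ h => h.elim) y (mem_univ y) hy
    have := mul_le_mul_of_nonneg_left (mem_ofPred.1 hyb) (D.nonlinearity_pos s hs).le
    linarith
  have hlim : Tendsto (fun n => s + ε n + f s * b x) atTop (𝓝 (s + 0 + f s * b x)) :=
    (h.tendsto_scale.const_add s).add_const _
  simpa using le_of_tendsto_of_tendsto' (h.tendsto x) hlim hle

lemma eventually_lower_bound_nhds (h : IsLimitOfApproximateSolutions φ f δ ε p W w M)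
    (D : IsSingularSource γ φ f δ) {x : E} (hx : 0 < δ x) :
    ∃ c > 0, ∃ t ∈ 𝓝 x, ∀ᶠ n in atTop, ∀ y ∈ t, c ≤ δ y ∧ c ≤ W n y := by
  set d := δ x / 4 with hd
  have hd0 : 0 < d := by positivity
  have hD₀ := D.source_pos (by positivity : 0 < 6 * d) two_pos
  set a := min (1 / d ^ 2) (φ (6 * d) * f 2 / (2 * finrank ℝ E + d ^ 2))
  have ha0 : 0 < a := lt_min (by positivity) (by positivity)
  have had : a * d ^ 2 ≤ 1 := (le_div_iff₀ (by positivity)).1 (min_le_left _ _)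
  have haD : a * (2 * finrank ℝ E + d ^ 2) ≤ φ (6 * d) * f 2 :=
    (le_div_iff₀ (by positivity)).1 (min_le_right _ _)
  have hδ : ∀ y ∈ closedBall x (2 * d), 2 * d ≤ δ y ∧ δ y ≤ 6 * d := fun y hy => by
    have := (D.lipschitzWith_dist.dist_le_mul y x).trans (mul_le_mul_of_nonneg_left hy (by simp))
    rw [Real.dist_eq, NNReal.coe_one, one_mul, abs_le] at this
    constructor <;> linarith
  refine ⟨min d (a * d ^ 2), lt_min hd0 (by positivity), closedBall x d,
    closedBall_mem_nhds x hd0, (h.tendsto_scale.eventually_lt_const hd0).mono fun n hn y hy => ?_⟩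
  have hsub : closedBall y d ⊆ closedBall x (2 * d) :=
    closedBall_subset_closedBall' (by linarith [mem_closedBall.1 hy])
  have hlow := (h.isApproximateSolution n).mul_sq_le D (h.scale_pos n) (h.scale_le_one n) ha0.le
    hd0 had haD fun z hz => ⟨by linarith [hδ z (hsub hz)], (hδ z (hsub hz)).2⟩
  exact ⟨(min_le_left _ _).trans (by linarith [hδ y (hsub (mem_closedBall_self hd0.le))]),
    (min_le_right _ _).trans hlow⟩

lemma eventually_lower_bound (h : IsLimitOfApproximateSolutions φ f δ ε p W w M)
    (D : IsSingularSource γ φ f δ) {K : Set E} (hK : IsCompact K) (hKδ : ∀ x ∈ K, 0 < δ x) :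
    ∃ c > 0, ∀ᶠ n in atTop, ∀ y ∈ K, c ≤ δ y ∧ c ≤ W n y := by
  refine hK.induction_on (p := fun s => ∃ c > 0, ∀ᶠ n in atTop, ∀ y ∈ s, c ≤ δ y ∧ c ≤ W n y)
    ⟨1, one_pos, .of_forall fun _ _ hy => hy.elim⟩ ?_ ?_ fun x hx => ?_
  · rintro s t hst ⟨c, hc, ht⟩
    exact ⟨c, hc, ht.mono fun n hn y hy => hn y (hst hy)⟩
  · rintro s t ⟨c, hc, hs⟩ ⟨c', hc', ht⟩
    refine ⟨min c c', lt_min hc hc', (hs.and ht).mono fun n hn y hy => ?_⟩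
    rcases hy with hy | hy
    · exact ⟨(min_le_left _ _).trans (hn.1 y hy).1, (min_le_left _ _).trans (hn.1 y hy).2⟩
    · exact ⟨(min_le_right _ _).trans (hn.2 y hy).1, (min_le_right _ _).trans (hn.2 y hy).2⟩
  · obtain ⟨c, hc, t, ht, hct⟩ := h.eventually_lower_bound_nhds D (hKδ x hx)
    exact ⟨t, mem_nhdsWithin_of_mem_nhds ht, c, hc, hct⟩

lemma pos (h : IsLimitOfApproximateSolutions φ f δ ε p W w M) (D : IsSingularSource γ φ f δ)
    {x : E} (hx : 0 < δ x) : 0 < w x := by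
  obtain ⟨c, hc, hct⟩ := h.eventually_lower_bound D isCompact_singleton (K := {x}) (by simpa)
  exact hc.trans_le (ge_of_tendsto (h.tendsto x) (hct.mono fun n hn => (hn x rfl).2))

lemma tendsto_source (h : IsLimitOfApproximateSolutions φ f δ ε p W w M)
    (D : IsSingularSource γ φ f δ) {x : E} (hx : 0 < δ x) :
    Tendsto (fun n => φ (max (δ x) (ε n)) * f (W n x + ε n) - p n x * W n x) atTop
      (𝓝 (φ (δ x) * f (w x))) := by
  have hf : ContinuousAt f (w x) :=
    D.locallyLipschitzOn_nonlinearity.continuousOn.continuousAt (Ioi_mem_nhds (h.pos D hx))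
  have hsum : Tendsto (fun n => W n x + ε n) atTop (𝓝 (w x)) := by
    simpa using (h.tendsto x).add h.tendsto_scale
  have hlim : Tendsto (fun n => φ (δ x) * f (W n x + ε n) - ε n * W n x) atTop
      (𝓝 (φ (δ x) * f (w x) - 0 * w x)) :=
    ((hf.tendsto.comp hsum).const_mul _).sub (h.tendsto_scale.mul (h.tendsto x))
  rw [zero_mul, sub_zero] at hlim
  refine hlim.congr' ((h.tendsto_scale.eventually_lt_const hx).mono fun n hn => ?_)
  dsimp only
  rw [max_eq_left hn.le, (h.isApproximateSolution n).penalty_eq x hn.le]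

lemma exists_eventually_abs_le (h : IsLimitOfApproximateSolutions φ f δ ε p W w M)
    (D : IsSingularSource γ φ f δ) {K : Set E} (hK : IsCompact K) (hKδ : ∀ x ∈ K, 0 < δ x) :
    ∃ C, ∀ᶠ n in atTop, ∀ y ∈ K,
      |φ (max (δ y) (ε n)) * f (W n y + ε n) - p n y * W n y| ≤ C := by
  obtain ⟨c, hc, hlow⟩ := h.eventually_lower_bound D hK hKδ
  refine ⟨φ c * f c + M, (hlow.and (h.tendsto_scale.eventually_lt_const hc)).mono
    fun n ⟨hn, hεc⟩ y hy => ?_⟩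
  obtain ⟨hδ, hW⟩ := hn y hy
  have hε := h.scale_pos n
  rw [(h.isApproximateSolution n).penalty_eq y (hεc.le.trans hδ), max_eq_left (hεc.le.trans hδ)]
  have hWM : W n y ≤ M := h.le_bound n y (hKδ y hy)
  have hWpos : 0 < W n y := hc.trans_le hW
  have hsource : φ (δ y) * f (W n y + ε n) ≤ φ c * f c := D.source_le hc hδ hc (by linarith)
  have hsource_pos := D.source_pos (hKδ y hy) (add_pos hWpos hε)
  have hpen : ε n * W n y ≤ 1 * M := mul_le_mul (h.scale_le_one n) hWM hWpos.le zero_le_one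
  have hpen_pos := mul_pos hε hWpos
  exact abs_le.2 ⟨by linarith, by linarith⟩

lemma hasMeanValueFormula [Nontrivial E] (h : IsLimitOfApproximateSolutions φ f δ ε p W w M)
    (D : IsSingularSource γ φ f δ) :
    HasMeanValueFormula {x | 0 < δ x} w fun x => φ (δ x) * f (w x) := fun x r hr hU => by
  obtain ⟨C, hC⟩ := h.exists_eventually_abs_le D (isCompact_closedBall x r) hU
  refine meanValueFormulaAt_of_tendsto (M := max M C)
    (fun n => (h.isApproximateSolution n).contDiff.continuous.measurable)
    (fun n => ((h.isApproximateSolution n).continuous_source D (h.scale_pos n)).measurable) hr.le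
    (.of_forall fun n y hy => ?_) (hC.mono fun n hn y hy => (hn y hy).trans (le_max_right M C))
    (fun y _ => h.tendsto y) (fun y hy => h.tendsto_source D (hU hy))
    (.of_forall fun n => (h.isApproximateSolution n).hasMeanValueFormula x r hr (subset_univ _))
  rw [abs_of_nonneg ((h.isApproximateSolution n).nonneg y)]
  exact (h.le_bound n y (hU hy)).trans (le_max_left M C)

lemma measurable_source (h : IsLimitOfApproximateSolutions φ f δ ε p W w M)
    (D : IsSingularSource γ φ f δ) :
    Measurable ({x | 0 < δ x}.indicator fun x => φ (δ x) * f (w x)) := by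
  have hU : IsOpen {x | 0 < δ x} := isOpen_lt continuous_const D.lipschitzWith_dist.continuous
  refine measurable_of_tendsto_metrizable (fun n => ((h.isApproximateSolution n).continuous_source D
    (h.scale_pos n)).measurable.indicator hU.measurableSet) (tendsto_pi_nhds.2 fun x => ?_)
  by_cases hx : 0 < δ x
  · simpa only [indicator_of_mem (show x ∈ {x | 0 < δ x} from hx)] using h.tendsto_source D hx
  · simpa only [indicator_of_notMem (show x ∉ {x | 0 < δ x} from hx)] using tendsto_const_nhds

lemma eventually_abs_source_le (h : IsLimitOfApproximateSolutions φ f δ ε p W w M)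
    (D : IsSingularSource γ φ f δ) {x : E} (hx : 0 < δ x) :
    ∃ C, ∀ᶠ y in 𝓝 x, |φ (δ y) * f (w y)| ≤ C := by
  obtain ⟨c, hc, t, ht, hct⟩ := h.eventually_lower_bound_nhds D hx
  refine ⟨φ c * f c, mem_of_superset ht fun y hy => ?_⟩
  obtain ⟨n, hn⟩ := hct.exists
  have hδ : c ≤ δ y := (hn y hy).1
  have hw : c ≤ w y := ge_of_tendsto (h.tendsto y) (hct.mono fun n hn => (hn y hy).2)
  rw [mem_ofPred_eq, abs_of_pos (D.source_pos (hc.trans_le hδ) (hc.trans_le hw))]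
  exact D.source_le hc hδ hc hw

lemma contDiffAt_and_laplacian_eq [Nontrivial E]
    (h : IsLimitOfApproximateSolutions φ f δ ε p W w M) (D : IsSingularSource γ φ f δ) {x : E}
    (hx : 0 < δ x) : ContDiffAt ℝ 2 w x ∧ -Δ w x = φ (δ x) * f (w x) := by
  set U := {x | 0 < δ x}
  have hU : IsOpen U := isOpen_lt continuous_const D.lipschitzWith_dist.continuous
  set g := U.indicator fun x => φ (δ x) * f (w x)
  have hgU : EqOn (fun x => φ (δ x) * f (w x)) g U := eqOn_indicator.symm
  have hmv : HasMeanValueFormula U w g := fun y r hr hyU =>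
    (h.hasMeanValueFormula D y r hr hyU).congr hr.le (fun _ _ => rfl) fun z hz => hgU (hyU hz)
  have hw : Measurable w := measurable_of_tendsto_metrizable
    (fun n => (h.isApproximateSolution n).contDiff.continuous.measurable)
    (tendsto_pi_nhds.2 h.tendsto)
  have hwb : ∀ x ∈ U, ∃ M, ∀ᶠ y in 𝓝 x, |w y| ≤ M := fun x hx =>
    ⟨M, (hU.eventually_mem hx).mono fun y hy => by
      rw [abs_of_pos (h.pos D hy)]
      exact le_of_tendsto' (h.tendsto y) fun n => h.le_bound n y hy⟩
  have hgb : ∀ x ∈ U, ∃ C, ∀ᶠ y in 𝓝 x, |g y| ≤ C := fun x hx => by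
    obtain ⟨C, hC⟩ := h.eventually_abs_source_le D hx
    exact ⟨C, (hC.and (hU.eventually_mem hx)).mono fun y hy => hgU hy.2 ▸ hy.1⟩
  have hwL : LocallyLipschitzOn U w :=
    hmv.locallyLipschitzOn hU hw (h.measurable_source D) hwb hgb
  have hφδ : LocallyHolderOn γ U fun x => φ (δ x) :=
    D.locallyHolderOn_weight.comp_locallyLipschitzOn
      D.lipschitzWith_dist.locallyLipschitz.locallyLipschitzOn fun y hy => hy
  have hfw : LocallyHolderOn γ U fun x => f (w x) :=
    (LocallyHolderOn.of_locallyLipschitzOn D.locallyLipschitzOn_nonlinearity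
      D.exponent_le_one).comp_locallyLipschitzOn hwL fun y hy => h.pos D hy
  have hgγ : LocallyHolderOn γ U g := (hφδ.mul D.exponent_pos hfw).congr hgU
  rw [show φ (δ x) * f (w x) = g x from hgU hx]
  exact hmv.contDiffAt_and_laplacian_eq hU hw (h.measurable_source D) hwb D.exponent_pos hgγ hx

end IsLimitOfApproximateSolutions
end SingularEquation

section RadialPotential

lemma contDiffOn_two_of_hasDerivAt {v v' v'' : ℝ → ℝ} {U : Set ℝ} (hU : IsOpen U)
    (hv : ∀ r ∈ U, HasDerivAt v (v' r) r) (hv' : ∀ r ∈ U, HasDerivAt v' (v'' r) r)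
    (hv'' : ContinuousOn v'' U) : ContDiffOn ℝ 2 v U := by
  have hderiv : EqOn (deriv v) v' U := fun r hr => (hv r hr).deriv
  have hderiv' : EqOn (deriv v') v'' U := fun r hr => (hv' r hr).deriv
  have hC1 : ContDiffOn ℝ (0 + 1) v' U :=
    (contDiffOn_succ_iff_deriv_of_isOpen hU).2
      ⟨fun r hr => (hv' r hr).differentiableAt.differentiableWithinAt, by simp,
        contDiffOn_zero.2 (hv''.congr hderiv')⟩
  rw [zero_add] at hC1
  rw [show (2 : WithTop ℕ∞) = 1 + 1 by norm_num, contDiffOn_succ_iff_deriv_of_isOpen hU]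
  exact ⟨fun r hr => (hv r hr).differentiableAt.differentiableWithinAt, by simp, hC1.congr hderiv⟩

lemma contDiffAt_and_laplacian_radial {E : Type*} [NormedAddCommGroup E] [InnerProductSpace ℝ E]
    [FiniteDimensional ℝ E] {v v' v'' : ℝ → ℝ} {U : Set ℝ} (hU : IsOpen U)
    (hv : ∀ r ∈ U, HasDerivAt v (v' r) r) (hv' : ∀ r ∈ U, HasDerivAt v' (v'' r) r)
    (hv'' : ContinuousOn v'' U) {c x : E} (hxc : x ≠ c) (hx : ‖x - c‖ ∈ U) :
    ContDiffAt ℝ 2 (fun y => v ‖y - c‖) x ∧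
      Δ (fun y => v ‖y - c‖) x = v'' ‖x - c‖ + (finrank ℝ E - 1) / ‖x - c‖ * v' ‖x - c‖ := by
  have hC2 : ContDiffAt ℝ 2 v ‖x - c‖ :=
    (contDiffOn_two_of_hasDerivAt hU hv hv' hv'').contDiffAt (hU.mem_nhds hx)
  have hderiv : deriv v =ᶠ[𝓝 ‖x - c‖] v' := by
    filter_upwards [hU.mem_nhds hx] with r hr using (hv r hr).deriv
  refine ⟨hC2.comp x ((contDiffAt_id.sub contDiffAt_const).norm ℝ (sub_ne_zero.2 hxc)), ?_⟩
  rw [laplacian_radial hxc hC2, hderiv.deriv_eq, (hv' _ hx).deriv, hderiv.eq_of_nhds]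

lemma ne_of_lt_norm_sub {E : Type*} [NormedAddCommGroup E] {c x : E} {ρ : ℝ} (hρ : 0 ≤ ρ)
    (hx : ρ < ‖x - c‖) : x ≠ c :=
  sub_ne_zero.1 (norm_pos_iff.1 (hρ.trans_lt hx))

/-- The profile of the capacitary potential of a ball of radius `ρ`: in dimension `k + 2` the
function `y ↦ capacitaryPotential k ρ ‖y‖` is harmonic away from the origin, equals `1` on the
sphere of radius `ρ` and, for `k ≠ 0`, vanishes at infinity. -/
noncomputable def capacitaryPotential (k : ℕ) (ρ r : ℝ) : ℝ := (ρ / r) ^ k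

variable {k : ℕ} {ρ r s : ℝ}

lemma hasDerivAt_capacitaryPotential (k : ℕ) (ρ : ℝ) (hr : r ≠ 0) :
    HasDerivAt (capacitaryPotential k ρ) (-(k / r * capacitaryPotential k ρ r)) r := by
  refine (((hasDerivAt_inv hr).const_mul ρ).pow k).congr_deriv ?_
  rcases k with _ | k
  · simp
  · simp only [capacitaryPotential, Nat.add_sub_cancel, pow_succ]
    field_simp

lemma hasDerivAt_neg_div_mul_capacitaryPotential (k : ℕ) (ρ : ℝ) (hr : r ≠ 0) :
    HasDerivAt (fun r => -(k / r * capacitaryPotential k ρ r))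
      (k * (k + 1) / r ^ 2 * capacitaryPotential k ρ r) r := by
  refine ((((hasDerivAt_inv hr).const_mul (k : ℝ)).mul
    (hasDerivAt_capacitaryPotential k ρ hr)).neg).congr_deriv ?_
  field_simp
  ring

lemma continuousOn_capacitaryPotential (k : ℕ) (hρ : 0 < ρ) :
    ContinuousOn (capacitaryPotential k ρ) (Ioi ρ) := fun _ hr =>
  (hasDerivAt_capacitaryPotential k ρ (hρ.trans hr).ne').continuousAt.continuousWithinAt

lemma capacitaryPotential_le_of_le (k : ℕ) (hρ : 0 ≤ ρ) (hr : 0 < r) (hrs : r ≤ s) :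
    capacitaryPotential k ρ s ≤ capacitaryPotential k ρ r := by
  have := hr.trans_le hrs
  unfold capacitaryPotential
  gcongr

lemma capacitaryPotential_pos (k : ℕ) (hρ : 0 < ρ) (hr : 0 < r) :
    0 < capacitaryPotential k ρ r :=
  pow_pos (div_pos hρ hr) k

lemma capacitaryPotential_lt_one (hk : k ≠ 0) (hρ : 0 < ρ) (hr : ρ < r) :
    capacitaryPotential k ρ r < 1 :=
  have hr' : 0 < r := hρ.trans hr
  pow_lt_one₀ (div_nonneg hρ.le hr'.le) ((div_lt_one hr').2 hr) hk

lemma one_sub_capacitaryPotential_le (k : ℕ) (hρ : 0 ≤ ρ) (hr : 0 < r) :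
    1 - capacitaryPotential k ρ r ≤ k * ((r - ρ) / r) := by
  have hbernoulli := one_add_mul_le_pow (a := ρ / r - 1) (by linarith [div_nonneg hρ hr.le]) k
  have hquot : (r - ρ) / r = 1 - ρ / r := by field_simp
  rw [add_sub_cancel] at hbernoulli
  rw [capacitaryPotential, hquot]
  linarith

lemma tendsto_capacitaryPotential_atTop (hk : k ≠ 0) (ρ : ℝ) :
    Tendsto (capacitaryPotential k ρ) atTop (𝓝 0) := by
  have h := (tendsto_id.const_div_atTop ρ : Tendsto (fun r => ρ / r) atTop (𝓝 0)).pow k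
  rwa [zero_pow hk] at h

lemma tendsto_capacitaryPotential_nhdsGT (k : ℕ) (hρ : 0 < ρ) :
    Tendsto (capacitaryPotential k ρ) (𝓝[>] ρ) (𝓝 1) := by
  have h := (hasDerivAt_capacitaryPotential k ρ hρ.ne').continuousAt.tendsto
  rw [capacitaryPotential, div_self hρ.ne', one_pow] at h
  exact h.mono_left nhdsWithin_le_nhds

/-- A radial weight `ψ` on the exterior of the ball of radius `ρ` with the integrability at the
sphere and at infinity under which its Newtonian potential is bounded. -/
structure IsRadialWeight (ρ : ℝ) (ψ : ℝ → ℝ) : Prop where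
  radius_pos : 0 < ρ
  continuousOn : ContinuousOn ψ (Ioi ρ)
  nonneg : ∀ s, ρ < s → 0 ≤ ψ s
  integrableOn : IntegrableOn (fun s => (s - ρ) * ψ s) (Ioi ρ)

/-- The density of the mass distribution `ψ (‖y‖) dy` in the radial variable, divided by the
Wronskian `k * ρ ^ k` of the harmonic profiles `u` and `1 - u`, `u = capacitaryPotential k ρ`. -/
noncomputable def radialDensity (k : ℕ) (ρ : ℝ) (ψ : ℝ → ℝ) (s : ℝ) : ℝ :=
  s ^ (k + 1) / (k * ρ ^ k) * ψ s

/-- The integrand of the radial Green potential of `ψ`: the Green function of the exterior of the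
ball is `u (max r s) * (1 - u (min r s))`, written here with `min (u r) (u s)`. -/
noncomputable def radialGreen (k : ℕ) (ρ : ℝ) (ψ : ℝ → ℝ) (r s : ℝ) : ℝ :=
  (min (capacitaryPotential k ρ r) (capacitaryPotential k ρ s)
    - capacitaryPotential k ρ r * capacitaryPotential k ρ s) * radialDensity k ρ ψ s

/-- The profile of the solution of `-Δ v = ψ (‖y‖)` outside the ball of radius `ρ` in dimension
`k + 2` that vanishes on the sphere and at infinity. -/
noncomputable def radialPotential (k : ℕ) (ρ : ℝ) (ψ : ℝ → ℝ) (r : ℝ) : ℝ :=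
  ∫ s in Ioi ρ, radialGreen k ρ ψ r s

/-- The charge between the sphere and radius `r`, seen through the profile `1 - u`. -/
noncomputable def innerCharge (k : ℕ) (ρ : ℝ) (ψ : ℝ → ℝ) (r : ℝ) : ℝ :=
  ∫ s in ρ..r, (1 - capacitaryPotential k ρ s) * radialDensity k ρ ψ s

/-- The charge beyond radius `r`, seen through the profile `u`. -/
noncomputable def outerCharge (k : ℕ) (ρ : ℝ) (ψ : ℝ → ℝ) (r : ℝ) : ℝ :=
  ∫ s in Ioi r, capacitaryPotential k ρ s * radialDensity k ρ ψ s

namespace IsRadialWeight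

variable {ψ : ℝ → ℝ}

lemma radialDensity_nonneg (h : IsRadialWeight ρ ψ) (k : ℕ) (hs : ρ < s) :
    0 ≤ radialDensity k ρ ψ s := by
  have := h.radius_pos
  have := this.trans hs
  exact mul_nonneg (by positivity) (h.nonneg s hs)

lemma continuousOn_radialDensity (h : IsRadialWeight ρ ψ) (k : ℕ) :
    ContinuousOn (radialDensity k ρ ψ) (Ioi ρ) :=
  (by fun_prop : Continuous fun s : ℝ => s ^ (k + 1) / (k * ρ ^ k)).continuousOn.mul h.continuousOn

lemma continuousOn_mul_radialDensity (h : IsRadialWeight ρ ψ) (k : ℕ) :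
    ContinuousOn (fun s => capacitaryPotential k ρ s * radialDensity k ρ ψ s) (Ioi ρ) :=
  (continuousOn_capacitaryPotential k h.radius_pos).mul (h.continuousOn_radialDensity k)

lemma continuousOn_one_sub_mul_radialDensity (h : IsRadialWeight ρ ψ) (k : ℕ) :
    ContinuousOn (fun s => (1 - capacitaryPotential k ρ s) * radialDensity k ρ ψ s) (Ioi ρ) :=
  (continuousOn_const.sub (continuousOn_capacitaryPotential k h.radius_pos)).mul
    (h.continuousOn_radialDensity k)

lemma mul_one_sub_mul_radialDensity_le (h : IsRadialWeight ρ ψ) (hk : k ≠ 0) (hs : ρ < s) :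
    capacitaryPotential k ρ s * (1 - capacitaryPotential k ρ s) * radialDensity k ρ ψ s
      ≤ (s - ρ) * ψ s := by
  have hρ := h.radius_pos
  have hs0 : 0 < s := hρ.trans hs
  have hmass : capacitaryPotential k ρ s * radialDensity k ρ ψ s = s / k * ψ s := by
    simp only [capacitaryPotential, radialDensity, div_pow, pow_succ]
    field_simp
  calc capacitaryPotential k ρ s * (1 - capacitaryPotential k ρ s) * radialDensity k ρ ψ s
      = (1 - capacitaryPotential k ρ s) * (s / k * ψ s) := by rw [← hmass]; ring
    _ ≤ k * ((s - ρ) / s) * (s / k * ψ s) :=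
        mul_le_mul_of_nonneg_right (one_sub_capacitaryPotential_le k hρ.le hs0)
          (mul_nonneg (by positivity) (h.nonneg s hs))
    _ = (s - ρ) * ψ s := by field_simp

lemma integrableOn_one_sub_mul_radialDensity (h : IsRadialWeight ρ ψ) (hk : k ≠ 0) (hr : ρ < r) :
    IntegrableOn (fun s => (1 - capacitaryPotential k ρ s) * radialDensity k ρ ψ s)
      (Ioc ρ r) := by
  have hρ := h.radius_pos
  have hur := capacitaryPotential_pos k hρ (hρ.trans hr)
  refine ((h.integrableOn.mono_set Ioc_subset_Ioi_self).const_mul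
    (capacitaryPotential k ρ r)⁻¹).mono' (((h.continuousOn_one_sub_mul_radialDensity k).mono
      Ioc_subset_Ioi_self).aestronglyMeasurable measurableSet_Ioc) ?_
  filter_upwards [ae_restrict_mem measurableSet_Ioc] with s hs
  have hnonneg : 0 ≤ (1 - capacitaryPotential k ρ s) * radialDensity k ρ ψ s :=
    mul_nonneg (sub_nonneg.2 (capacitaryPotential_lt_one hk hρ hs.1).le)
      (h.radialDensity_nonneg k hs.1)
  rw [Real.norm_of_nonneg hnonneg, ← div_eq_inv_mul, le_div_iff₀ hur]
  refine le_trans ?_ (h.mul_one_sub_mul_radialDensity_le hk hs.1)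
  rw [mul_comm, mul_assoc]
  exact mul_le_mul_of_nonneg_right
    (capacitaryPotential_le_of_le k hρ.le (hρ.trans hs.1) hs.2) hnonneg

lemma integrableOn_mul_radialDensity (h : IsRadialWeight ρ ψ) (hk : k ≠ 0) (hr : ρ < r) :
    IntegrableOn (fun s => capacitaryPotential k ρ s * radialDensity k ρ ψ s) (Ioi r) := by
  have hρ := h.radius_pos
  have hur := sub_pos.2 (capacitaryPotential_lt_one hk hρ hr)
  have hsub : Ioi r ⊆ Ioi ρ := Ioi_subset_Ioi hr.le
  refine ((h.integrableOn.mono_set hsub).const_mul (1 - capacitaryPotential k ρ r)⁻¹).mono'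
    (((h.continuousOn_mul_radialDensity k).mono hsub).aestronglyMeasurable measurableSet_Ioi) ?_
  filter_upwards [ae_restrict_mem measurableSet_Ioi] with s hs
  have hnonneg : 0 ≤ capacitaryPotential k ρ s * radialDensity k ρ ψ s :=
    mul_nonneg (capacitaryPotential_pos k hρ (hρ.trans (hsub hs))).le
      (h.radialDensity_nonneg k (hsub hs))
  rw [Real.norm_of_nonneg hnonneg, ← div_eq_inv_mul, le_div_iff₀ hur]
  refine le_trans ?_ (h.mul_one_sub_mul_radialDensity_le hk (hsub hs))
  rw [mul_right_comm _ (1 - _)]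
  exact mul_le_mul_of_nonneg_left (sub_le_sub_left
    (capacitaryPotential_le_of_le k hρ.le (hρ.trans hr) (mem_Ioi.1 hs).le) 1) hnonneg

lemma radialGreen_nonneg (h : IsRadialWeight ρ ψ) (hk : k ≠ 0) (hr : ρ < r) (hs : ρ < s) :
    0 ≤ radialGreen k ρ ψ r s := by
  have hρ := h.radius_pos
  have hur := capacitaryPotential_pos k hρ (hρ.trans hr)
  have hus := capacitaryPotential_pos k hρ (hρ.trans hs)
  have hur' := capacitaryPotential_lt_one hk hρ hr
  have hus' := capacitaryPotential_lt_one hk hρ hs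
  refine mul_nonneg (sub_nonneg.2 (le_min ?_ ?_)) (h.radialDensity_nonneg k hs)
  · exact mul_le_of_le_one_right hur.le hus'.le
  · exact mul_le_of_le_one_left hus.le hur'.le

lemma radialGreen_le (h : IsRadialWeight ρ ψ) (hk : k ≠ 0) (r : ℝ) (hs : ρ < s) :
    radialGreen k ρ ψ r s ≤ (s - ρ) * ψ s := by
  have hρ := h.radius_pos
  have hus := capacitaryPotential_pos k hρ (hρ.trans hs)
  have hus' := capacitaryPotential_lt_one hk hρ hs
  refine (mul_le_mul_of_nonneg_right ?_ (h.radialDensity_nonneg k hs)).trans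
    (h.mul_one_sub_mul_radialDensity_le hk hs)
  rcases le_total (capacitaryPotential k ρ r) (capacitaryPotential k ρ s) with hle | hle
  · rw [min_eq_left hle]
    nlinarith
  · rw [min_eq_right hle]
    nlinarith

lemma aestronglyMeasurable_radialGreen (h : IsRadialWeight ρ ψ) (k : ℕ) (r : ℝ) :
    AEStronglyMeasurable (radialGreen k ρ ψ r) (volume.restrict (Ioi ρ)) :=
  have hu := continuousOn_capacitaryPotential k h.radius_pos
  (((continuousOn_const.inf hu).sub (continuousOn_const.mul hu)).mul
    (h.continuousOn_radialDensity k)).aestronglyMeasurable measurableSet_Ioi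

lemma norm_radialGreen_le (h : IsRadialWeight ρ ψ) (hk : k ≠ 0) (hr : ρ < r) :
    ∀ᵐ s ∂volume.restrict (Ioi ρ), ‖radialGreen k ρ ψ r s‖ ≤ (s - ρ) * ψ s := by
  filter_upwards [ae_restrict_mem measurableSet_Ioi] with s hs
  rw [Real.norm_of_nonneg (h.radialGreen_nonneg hk hr hs)]
  exact h.radialGreen_le hk r hs

lemma integrableOn_radialGreen (h : IsRadialWeight ρ ψ) (hk : k ≠ 0) (hr : ρ < r) :
    IntegrableOn (radialGreen k ρ ψ r) (Ioi ρ) :=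
  h.integrableOn.mono' (h.aestronglyMeasurable_radialGreen k r) (h.norm_radialGreen_le hk hr)

lemma radialPotential_nonneg (h : IsRadialWeight ρ ψ) (hk : k ≠ 0) (hr : ρ < r) :
    0 ≤ radialPotential k ρ ψ r :=
  setIntegral_nonneg measurableSet_Ioi fun _ hs => h.radialGreen_nonneg hk hr hs

lemma radialPotential_le (h : IsRadialWeight ρ ψ) (hk : k ≠ 0) (hr : ρ < r) :
    radialPotential k ρ ψ r ≤ ∫ s in Ioi ρ, (s - ρ) * ψ s :=
  setIntegral_mono_on (h.integrableOn_radialGreen hk hr) h.integrableOn measurableSet_Ioi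
    fun _ hs => h.radialGreen_le hk r hs

lemma tendsto_radialPotential (h : IsRadialWeight ρ ψ) (hk : k ≠ 0) {l : Filter ℝ}
    [l.IsCountablyGenerated] {a : ℝ} (hl : ∀ᶠ r in l, ρ < r)
    (hu : Tendsto (capacitaryPotential k ρ) l (𝓝 a))
    (ha : ∀ s, ρ < s → min a (capacitaryPotential k ρ s) = a * capacitaryPotential k ρ s) :
    Tendsto (radialPotential k ρ ψ) l (𝓝 0) := by
  rw [show (0 : ℝ) = ∫ _ in Ioi ρ, (0 : ℝ) by simp]
  refine tendsto_integral_filter_of_dominated_convergence (fun s => (s - ρ) * ψ s)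
    (.of_forall fun r => h.aestronglyMeasurable_radialGreen k r)
    (hl.mono fun r hr => h.norm_radialGreen_le hk hr) h.integrableOn ?_
  filter_upwards [ae_restrict_mem measurableSet_Ioi] with s hs
  have hlim := ((hu.min (tendsto_const_nhds (x := capacitaryPotential k ρ s))).sub
    (hu.mul_const (capacitaryPotential k ρ s))).mul_const (radialDensity k ρ ψ s)
  rwa [ha s hs, sub_self, zero_mul] at hlim

lemma tendsto_radialPotential_atTop (h : IsRadialWeight ρ ψ) (hk : k ≠ 0) :
    Tendsto (radialPotential k ρ ψ) atTop (𝓝 0) :=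
  h.tendsto_radialPotential hk (eventually_gt_atTop ρ) (tendsto_capacitaryPotential_atTop hk ρ)
    fun s hs => by
      rw [zero_mul,
        min_eq_left (capacitaryPotential_pos k h.radius_pos (h.radius_pos.trans hs)).le]

lemma tendsto_radialPotential_nhdsGT (h : IsRadialWeight ρ ψ) (hk : k ≠ 0) :
    Tendsto (radialPotential k ρ ψ) (𝓝[>] ρ) (𝓝 0) :=
  h.tendsto_radialPotential hk self_mem_nhdsWithin
    (tendsto_capacitaryPotential_nhdsGT k h.radius_pos) fun s hs => by
      rw [one_mul, min_eq_right (capacitaryPotential_lt_one hk h.radius_pos hs).le]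

lemma radialPotential_eq (h : IsRadialWeight ρ ψ) (hk : k ≠ 0) (hr : ρ < r) :
    radialPotential k ρ ψ r = capacitaryPotential k ρ r * innerCharge k ρ ψ r
      + (1 - capacitaryPotential k ρ r) * outerCharge k ρ ψ r := by
  have hρ := h.radius_pos
  have hint := h.integrableOn_radialGreen hk hr
  rw [radialPotential, ← Ioc_union_Ioi_eq_Ioi hr.le,
    setIntegral_union Ioc_disjoint_Ioi_same measurableSet_Ioi
      (hint.mono_set Ioc_subset_Ioi_self) (hint.mono_set (Ioi_subset_Ioi hr.le)),
    innerCharge, intervalIntegral.integral_of_le hr.le, outerCharge, ← integral_const_mul,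
    ← integral_const_mul]
  congr 1
  · refine setIntegral_congr_fun measurableSet_Ioc fun s hs => ?_
    have hle := capacitaryPotential_le_of_le k hρ.le (hρ.trans hs.1) hs.2
    simp only [radialGreen, min_eq_left hle]
    ring
  · refine setIntegral_congr_fun measurableSet_Ioi fun s hs => ?_
    have hle := capacitaryPotential_le_of_le k hρ.le (hρ.trans hr) (mem_Ioi.1 hs).le
    simp only [radialGreen, min_eq_right hle]
    ring

lemma hasDerivAt_innerCharge (h : IsRadialWeight ρ ψ) (hk : k ≠ 0) (hr : ρ < r) :
    HasDerivAt (innerCharge k ρ ψ)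
      ((1 - capacitaryPotential k ρ r) * radialDensity k ρ ψ r) r :=
  have hcont := h.continuousOn_one_sub_mul_radialDensity k
  intervalIntegral.integral_hasDerivAt_right
    ((intervalIntegrable_iff_integrableOn_Ioc_of_le hr.le).2
      (h.integrableOn_one_sub_mul_radialDensity hk hr))
    (hcont.stronglyMeasurableAtFilter isOpen_Ioi r hr) (hcont.continuousAt (Ioi_mem_nhds hr))

lemma hasDerivAt_outerCharge (h : IsRadialWeight ρ ψ) (hk : k ≠ 0) (hr : ρ < r) :
    HasDerivAt (outerCharge k ρ ψ) (-(capacitaryPotential k ρ r * radialDensity k ρ ψ r)) r := by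
  obtain ⟨a, hρa, har⟩ := exists_between hr
  have hcont := h.continuousOn_mul_radialDensity k
  have hint := h.integrableOn_mul_radialDensity hk hρa
  refine ((intervalIntegral.integral_hasDerivAt_right
    ((intervalIntegrable_iff_integrableOn_Ioc_of_le har.le).2 (hint.mono_set Ioc_subset_Ioi_self))
    (hcont.stronglyMeasurableAtFilter isOpen_Ioi r hr)
    (hcont.continuousAt (Ioi_mem_nhds hr))).const_sub
      (outerCharge k ρ ψ a)).congr_of_eventuallyEq ?_
  filter_upwards [Ioi_mem_nhds har] with t ht
  exact eq_sub_of_add_eq' (intervalIntegral.integral_interval_add_Ioi hint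
    (h.integrableOn_mul_radialDensity hk (hρa.trans ht)))

lemma hasDerivAt_radialPotential (h : IsRadialWeight ρ ψ) (hk : k ≠ 0) (hr : ρ < r) :
    HasDerivAt (radialPotential k ρ ψ) (-(k / r * capacitaryPotential k ρ r)
      * (innerCharge k ρ ψ r - outerCharge k ρ ψ r)) r := by
  have hu := hasDerivAt_capacitaryPotential k ρ (h.radius_pos.trans hr).ne'
  refine (((hu.mul (h.hasDerivAt_innerCharge hk hr)).add ((hu.const_sub 1).mul
    (h.hasDerivAt_outerCharge hk hr))).congr_deriv (by ring)).congr_of_eventuallyEq ?_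
  filter_upwards [Ioi_mem_nhds hr] with t ht using h.radialPotential_eq hk ht

lemma hasDerivAt_deriv_radialPotential (h : IsRadialWeight ρ ψ) (hk : k ≠ 0) (hr : ρ < r) :
    HasDerivAt (fun r => -(k / r * capacitaryPotential k ρ r)
        * (innerCharge k ρ ψ r - outerCharge k ρ ψ r))
      (k * (k + 1) / r ^ 2 * capacitaryPotential k ρ r
          * (innerCharge k ρ ψ r - outerCharge k ρ ψ r)
        - k / r * capacitaryPotential k ρ r * radialDensity k ρ ψ r) r := by
  have hu := hasDerivAt_neg_div_mul_capacitaryPotential k ρ (h.radius_pos.trans hr).ne'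
  refine (hu.mul ((h.hasDerivAt_innerCharge hk hr).sub
    (h.hasDerivAt_outerCharge hk hr))).congr_deriv ?_
  simp only [Pi.sub_apply]
  ring

lemma continuousOn_second_deriv_radialPotential (h : IsRadialWeight ρ ψ)
    (hk : k ≠ 0) :
    ContinuousOn (fun r => k * (k + 1) / r ^ 2 * capacitaryPotential k ρ r
        * (innerCharge k ρ ψ r - outerCharge k ρ ψ r)
      - k / r * capacitaryPotential k ρ r * radialDensity k ρ ψ r) (Ioi ρ) := by
  have hu := continuousOn_capacitaryPotential k h.radius_pos
  have hcharge : ContinuousOn (fun r => innerCharge k ρ ψ r - outerCharge k ρ ψ r) (Ioi ρ) :=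
    fun r hr => ((h.hasDerivAt_innerCharge hk hr).continuousAt.sub
      (h.hasDerivAt_outerCharge hk hr).continuousAt).continuousWithinAt
  have hne : ∀ r ∈ Ioi ρ, r ≠ 0 := fun r hr => (h.radius_pos.trans hr).ne'
  exact (((continuousOn_const.div (continuousOn_id.pow 2) fun r hr => pow_ne_zero 2 (hne r hr)).mul
    hu).mul hcharge).sub (((continuousOn_const.div continuousOn_id hne).mul hu).mul
      (h.continuousOn_radialDensity k))

end IsRadialWeight

variable {E : Type*} [NormedAddCommGroup E] [InnerProductSpace ℝ E] [FiniteDimensional ℝ E]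

lemma IsRadialWeight.contDiffAt_and_laplacian {ψ : ℝ → ℝ} (h : IsRadialWeight ρ ψ) (hk : k ≠ 0)
    (hE : finrank ℝ E = k + 2) {c x : E} (hx : ρ < ‖x - c‖) :
    ContDiffAt ℝ 2 (fun y => radialPotential k ρ ψ ‖y - c‖) x ∧
      -Δ (fun y => radialPotential k ρ ψ ‖y - c‖) x = ψ ‖x - c‖ := by
  have hρ := h.radius_pos
  have hr : 0 < ‖x - c‖ := hρ.trans hx
  obtain ⟨hC2, hΔ⟩ := contDiffAt_and_laplacian_radial isOpen_Ioi
    (fun _ hr => h.hasDerivAt_radialPotential hk hr)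
    (fun _ hr => h.hasDerivAt_deriv_radialPotential hk hr)
    (h.continuousOn_second_deriv_radialPotential hk) (ne_of_lt_norm_sub hρ.le hx) hx
  refine ⟨hC2, ?_⟩
  rw [hΔ, hE]
  simp only [radialDensity, capacitaryPotential, div_pow]
  push_cast
  field_simp
  ring

lemma contDiffAt_and_laplacian_capacitaryPotential (hρ : 0 < ρ) (hE : finrank ℝ E = k + 2)
    {c x : E} (hx : ρ < ‖x - c‖) :
    ContDiffAt ℝ 2 (fun y => capacitaryPotential k ρ ‖y - c‖) x ∧
      Δ (fun y => capacitaryPotential k ρ ‖y - c‖) x = 0 := by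
  have hr : 0 < ‖x - c‖ := hρ.trans hx
  have hne : ∀ r ∈ Ioi ρ, r ≠ 0 := fun r hr => (hρ.trans hr).ne'
  obtain ⟨hC2, hΔ⟩ := contDiffAt_and_laplacian_radial isOpen_Ioi
    (fun r hr => hasDerivAt_capacitaryPotential k ρ (hne r hr))
    (fun r hr => hasDerivAt_neg_div_mul_capacitaryPotential k ρ (hne r hr))
    ((continuousOn_const.div (continuousOn_id.pow 2) fun r hr => pow_ne_zero 2 (hne r hr)).mul
      (continuousOn_capacitaryPotential k hρ)) (ne_of_lt_norm_sub hρ.le hx) hx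
  refine ⟨hC2, ?_⟩
  rw [hΔ, hE]
  push_cast
  field_simp
  ring

end RadialPotential

section BallFamily

/-- A family of balls with positive radii whose closures are pairwise disjoint. -/
structure IsBallFamily {ι E : Type*} [NormedAddCommGroup E] (c : ι → E) (ρ : ι → ℝ) : Prop where
  radius_pos : ∀ i, 0 < ρ i
  pairwise_disjoint : Pairwise fun i j => Disjoint (closedBall (c i) (ρ i)) (closedBall (c j) (ρ j))

/-- The distance to a union of closed balls. -/
noncomputable def ballDist {ι E : Type*} [NormedAddCommGroup E] (c : ι → E) (ρ : ι → ℝ)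
    (x : E) : ℝ :=
  infDist x (⋃ i, closedBall (c i) (ρ i))

variable {ι E : Type*} [NormedAddCommGroup E] {c : ι → E} {ρ : ι → ℝ} {φ : ℝ → ℝ}

lemma isClosed_iUnion_closedBall [Finite ι] (c : ι → E) (ρ : ι → ℝ) :
    IsClosed (⋃ i, closedBall (c i) (ρ i)) :=
  isClosed_iUnion_of_finite fun _ => isClosed_closedBall

namespace IsBallFamily

lemma nonempty_iUnion_closedBall [Nonempty ι] (h : IsBallFamily c ρ) :
    (⋃ i, closedBall (c i) (ρ i)).Nonempty :=
  nonempty_iUnion.2 ⟨Classical.arbitrary ι, nonempty_closedBall.2 (h.radius_pos _).le⟩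

lemma ballDist_pos_iff [Finite ι] [Nonempty ι] (h : IsBallFamily c ρ) {x : E} :
    0 < ballDist c ρ x ↔ x ∉ ⋃ i, closedBall (c i) (ρ i) :=
  ((isClosed_iUnion_closedBall c ρ).notMem_iff_infDist_pos h.nonempty_iUnion_closedBall).symm

lemma lt_norm_sub_of_ballDist_pos [Finite ι] [Nonempty ι] (h : IsBallFamily c ρ) {x : E}
    (hx : 0 < ballDist c ρ x) (i : ι) : ρ i < ‖x - c i‖ := by
  by_contra! hle
  exact h.ballDist_pos_iff.1 hx (mem_iUnion.2 ⟨i, mem_closedBall_iff_norm.2 hle⟩)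

lemma exists_norm_sub_sub_le_ballDist [ProperSpace E] [Finite ι] [Nonempty ι]
    (h : IsBallFamily c ρ) (x : E) : ∃ i, ‖x - c i‖ - ρ i ≤ ballDist c ρ x := by
  obtain ⟨y, hy, hxy⟩ :=
    (isClosed_iUnion_closedBall c ρ).exists_infDist_eq_dist h.nonempty_iUnion_closedBall x
  obtain ⟨i, hi⟩ := mem_iUnion.1 hy
  refine ⟨i, ?_⟩
  rw [← dist_eq_norm, ballDist, hxy]
  linarith [dist_triangle x y (c i), mem_closedBall.1 hi]

lemma exists_add_add_le_dist [NormedSpace ℝ E] [Finite ι] (h : IsBallFamily c ρ) (i : ι) :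
    ∃ d > 0, ∀ j ≠ i, ρ i + ρ j + 2 * d ≤ dist (c i) (c j) := by
  have hgap : ∀ᶠ d : ℝ in 𝓝[>] 0, ∀ j, j ≠ i → ρ i + ρ j + 2 * d ≤ dist (c i) (c j) := by
    refine eventually_all.2 fun j => ?_
    by_cases hj : j = i
    · exact .of_forall fun d hji => absurd hj hji
    have hlt := (disjoint_closedBall_closedBall_iff (h.radius_pos i).le (h.radius_pos j).le).1
      (h.pairwise_disjoint (Ne.symm hj))
    have hlim : Tendsto (fun d : ℝ => ρ i + ρ j + 2 * d) (𝓝[>] 0) (𝓝 (ρ i + ρ j + 2 * 0)) :=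
      (Continuous.tendsto (by fun_prop) _).mono_left nhdsWithin_le_nhds
    filter_upwards [hlim.eventually_lt_const (by linarith)] with d hd _ using hd.le
  obtain ⟨d, hd, hd0⟩ := (hgap.and self_mem_nhdsWithin).exists
  exact ⟨d, hd0, hd⟩

lemma exists_norm_sub_sub_le_ballDist_near [NormedSpace ℝ E] [Finite ι] (h : IsBallFamily c ρ)
    (i : ι) : ∃ d > 0, ∀ x, ‖x - c i‖ ≤ ρ i + d → ‖x - c i‖ - ρ i ≤ ballDist c ρ x := by
  obtain ⟨d, hd0, hd⟩ := h.exists_add_add_le_dist i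
  have : Nonempty ι := ⟨i⟩
  refine ⟨d, hd0, fun x hx => (le_infDist h.nonempty_iUnion_closedBall).2 fun {y} hy => ?_⟩
  obtain ⟨j, hj⟩ := mem_iUnion.1 hy
  rw [← dist_eq_norm] at hx ⊢
  rcases eq_or_ne j i with rfl | hji
  · linarith [dist_triangle x y (c j), mem_closedBall.1 hj]
  · linarith [hd j hji, dist_triangle4 (c i) x y (c j), dist_comm (c i) x, mem_closedBall.1 hj]

lemma tendsto_norm_sub_nhdsGT [Finite ι] [Nonempty ι] (h : IsBallFamily c ρ) {i : ι} {p : E}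
    (hp : p ∈ closedBall (c i) (ρ i)) :
    Tendsto (fun x => ‖x - c i‖) (𝓝[(⋃ i, closedBall (c i) (ρ i))ᶜ] p) (𝓝[>] ρ i) := by
  have hgt : ∀ᶠ x in 𝓝[(⋃ i, closedBall (c i) (ρ i))ᶜ] p, ρ i < ‖x - c i‖ := by
    filter_upwards [self_mem_nhdsWithin] with x hx
    exact h.lt_norm_sub_of_ballDist_pos (h.ballDist_pos_iff.2 hx) i
  have hcont : Tendsto (fun x => ‖x - c i‖) (𝓝 p) (𝓝 ‖p - c i‖) :=
    Continuous.tendsto (by fun_prop) p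
  refine tendsto_nhdsWithin_iff.2 ⟨tendsto_order.2 ⟨fun a ha => ?_, fun a ha => ?_⟩, hgt⟩
  · exact hgt.mono fun x hx => ha.trans hx
  · exact (hcont.mono_left nhdsWithin_le_nhds).eventually_lt_const
      ((mem_closedBall_iff_norm.1 hp).trans_lt ha)

end IsBallFamily

/-- A positive nonincreasing weight `φ` on `(0, ∞)` with `∫ r φ(r) dr < ∞`. -/
structure IsIntegrableWeight (φ : ℝ → ℝ) : Prop where
  pos : ∀ r, 0 < r → 0 < φ r
  antitoneOn : AntitoneOn φ (Ioi 0)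
  continuousOn : ContinuousOn φ (Ioi 0)
  integrableOn : IntegrableOn (fun r => r * φ r) (Ioi 0)

lemma IsIntegrableWeight.isRadialWeight (h : IsIntegrableWeight φ) {a : ℝ} (ha : 0 < a) :
    IsRadialWeight a fun s => φ (s - a) where
  radius_pos := ha
  continuousOn := h.continuousOn.comp (by fun_prop) fun _ hs => mem_Ioi.2 (sub_pos.2 hs)
  nonneg := fun _ hs => (h.pos _ (sub_pos.2 hs)).le
  integrableOn := by
    have hcomp := ((measurePreserving_sub_right volume a).integrableOn_comp_preimage
      (MeasurableEquiv.subRight a).measurableEmbedding (f := fun r => r * φ r) (s := Ioi 0)).2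
        h.integrableOn
    rwa [preimage_sub_const_Ioi, zero_add] at hcomp

/-- The sum of the potentials of the weights `φ(|x - c i| - ρ i)` relative to the single balls, in
dimension `k + 2`. -/
noncomputable def ballPotential [Fintype ι] (k : ℕ) (c : ι → E) (ρ : ι → ℝ) (φ : ℝ → ℝ)
    (x : E) : ℝ :=
  ∑ i, radialPotential k (ρ i) (fun s => φ (s - ρ i)) ‖x - c i‖

/-- An upper bound of `ballPotential k c ρ φ` outside the balls, valid for every `k`. -/
noncomputable def ballPotentialBound [Fintype ι] (ρ : ι → ℝ) (φ : ℝ → ℝ) : ℝ :=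
  ∑ i, ∫ s in Ioi (ρ i), (s - ρ i) * φ (s - ρ i)

/-- The profile of a barrier at the sphere of radius `a`: the multiple `A` of the harmonic
profile that vanishes there is added to the potential of the ball in order to dominate
`ballPotential` on a larger concentric sphere. -/
noncomputable def sphereBarrier (k : ℕ) (a A : ℝ) (φ : ℝ → ℝ) (r : ℝ) : ℝ :=
  radialPotential k a (fun s => φ (s - a)) r + A * (1 - capacitaryPotential k a r)

lemma IsIntegrableWeight.tendsto_sphereBarrier (h : IsIntegrableWeight φ) {k : ℕ} (hk : k ≠ 0)
    {a : ℝ} (ha : 0 < a) (A : ℝ) : Tendsto (sphereBarrier k a A φ) (𝓝[>] a) (𝓝 0) := by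
  have hlim := ((h.isRadialWeight ha).tendsto_radialPotential_nhdsGT hk).add
    (((tendsto_capacitaryPotential_nhdsGT k ha).const_sub 1).const_mul A)
  rwa [sub_self, mul_zero, add_zero] at hlim

section Potential

variable [Fintype ι] {k : ℕ}

lemma IsBallFamily.ballPotentialBound_nonneg (h : IsBallFamily c ρ) (hφ : IsIntegrableWeight φ) :
    0 ≤ ballPotentialBound ρ φ :=
  Finset.sum_nonneg fun i _ => setIntegral_nonneg measurableSet_Ioi fun s hs =>
    mul_nonneg (sub_pos.2 hs).le ((hφ.isRadialWeight (h.radius_pos i)).nonneg s hs)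

lemma IsBallFamily.ballPotential_le [Nonempty ι] (h : IsBallFamily c ρ)
    (hφ : IsIntegrableWeight φ) (hk : k ≠ 0) {x : E} (hx : 0 < ballDist c ρ x) :
    ballPotential k c ρ φ x ≤ ballPotentialBound ρ φ :=
  Finset.sum_le_sum fun i _ => (hφ.isRadialWeight (h.radius_pos i)).radialPotential_le hk
    (h.lt_norm_sub_of_ballDist_pos hx i)

lemma IsBallFamily.tendsto_ballPotential_cocompact [ProperSpace E] (h : IsBallFamily c ρ)
    (hφ : IsIntegrableWeight φ) (hk : k ≠ 0) :
    Tendsto (ballPotential k c ρ φ) (cocompact E) (𝓝 0) := by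
  rw [show (0 : ℝ) = ∑ _i : ι, 0 by simp]
  refine tendsto_finsetSum _ fun i _ =>
    ((hφ.isRadialWeight (h.radius_pos i)).tendsto_radialPotential_atTop hk).comp ?_
  simpa only [dist_eq_norm] using tendsto_dist_right_cocompact_atTop (c i)

end Potential

section Barriers

variable [Fintype ι] [Nonempty ι] {k : ℕ} [InnerProductSpace ℝ E] [FiniteDimensional ℝ E]

lemma IsIntegrableWeight.contDiffAt_and_laplacian_sphereBarrier (hφ : IsIntegrableWeight φ)
    (hk : k ≠ 0) (hE : finrank ℝ E = k + 2) {a : ℝ} (ha : 0 < a) (A : ℝ) {c x : E}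
    (hx : a < ‖x - c‖) :
    ContDiffAt ℝ 2 (fun y => sphereBarrier k a A φ ‖y - c‖) x ∧
      -Δ (fun y => sphereBarrier k a A φ ‖y - c‖) x = φ (‖x - c‖ - a) := by
  obtain ⟨hV, hΔV⟩ := (hφ.isRadialWeight ha).contDiffAt_and_laplacian hk hE hx
  obtain ⟨hu, hΔu⟩ := contDiffAt_and_laplacian_capacitaryPotential ha hE hx
  have hA : ContDiffAt ℝ 2 (fun y => A + -A * capacitaryPotential k a ‖y - c‖) x :=
    contDiffAt_const.add (contDiffAt_const.mul hu)
  have heq : (fun y => sphereBarrier k a A φ ‖y - c‖) =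
      (fun y => radialPotential k a (fun s => φ (s - a)) ‖y - c‖)
        + fun y => A + -A * capacitaryPotential k a ‖y - c‖ := by
    funext y
    simp only [sphereBarrier, Pi.add_apply]
    ring
  rw [heq, hV.laplacian_add hA, laplacian_const_add_mul hu, hΔu, mul_zero, add_zero]
  exact ⟨hV.add hA, hΔV⟩

namespace IsBallFamily

lemma isBarrier_ballPotential (h : IsBallFamily c ρ) (hφ : IsIntegrableWeight φ) (hk : k ≠ 0)
    (hE : finrank ℝ E = k + 2) :
    IsBarrier φ (ballDist c ρ) univ ∅ (ballPotential k c ρ φ) := by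
  have hψ := fun i => hφ.isRadialWeight (h.radius_pos i)
  have hrad := fun x (hx : 0 < ballDist c ρ x) i =>
    (hψ i).contDiffAt_and_laplacian hk hE (h.lt_norm_sub_of_ballDist_pos hx i)
  have hC2 : ∀ x, 0 < ballDist c ρ x → ContDiffAt ℝ 2 (ballPotential k c ρ φ) x := fun x hx =>
    ContDiffAt.sum fun i _ => (hrad x hx i).1
  refine ⟨isClosed_univ, fun x hx => (hC2 x hx.2).continuousAt.continuousWithinAt,
    fun x _ hx => Finset.sum_nonneg fun i _ =>
      (hψ i).radialPotential_nonneg hk (h.lt_norm_sub_of_ballDist_pos hx i),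
    fun x _ hx _ => ⟨univ_mem, hC2 x hx, ?_⟩⟩
  obtain ⟨i, hi⟩ := h.exists_norm_sub_sub_le_ballDist x
  have hgap : ∀ j, 0 < ‖x - c j‖ - ρ j := fun j => sub_pos.2 (h.lt_norm_sub_of_ballDist_pos hx j)
  calc φ (ballDist c ρ x) ≤ φ (‖x - c i‖ - ρ i) := hφ.antitoneOn (hgap i) hx hi
    _ ≤ ∑ j, φ (‖x - c j‖ - ρ j) :=
      Finset.single_le_sum (f := fun j => φ (‖x - c j‖ - ρ j))
        (fun j _ => (hφ.pos _ (hgap j)).le) (Finset.mem_univ i)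
    _ = -Δ (ballPotential k c ρ φ) x := by
      unfold ballPotential
      rw [laplacian_sum _ fun j _ => (hrad x hx j).1, ← Finset.sum_neg_distrib]
      exact Finset.sum_congr rfl fun j _ => (hrad x hx j).2.symm

lemma exists_isBarrier_sphereBarrier (h : IsBallFamily c ρ) (hφ : IsIntegrableWeight φ)
    (hk : k ≠ 0) (hE : finrank ℝ E = k + 2) (i : ι) :
    ∃ d > 0, ∃ A, IsBarrier φ (ballDist c ρ) {x | ‖x - c i‖ ≤ ρ i + d}
      {x | ballPotential k c ρ φ x ≤ sphereBarrier k (ρ i) A φ ‖x - c i‖}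
      fun x => sphereBarrier k (ρ i) A φ ‖x - c i‖ := by
  obtain ⟨d, hd, hgap⟩ := h.exists_norm_sub_sub_le_ballDist_near i
  have hρ := h.radius_pos i
  have hψ := hφ.isRadialWeight hρ
  have hlt := fun x (hx : 0 < ballDist c ρ x) => h.lt_norm_sub_of_ballDist_pos hx i
  have hu : ∀ {r}, ρ i < r → 0 < 1 - capacitaryPotential k (ρ i) r := fun hr =>
    sub_pos.2 (capacitaryPotential_lt_one hk hρ hr)
  have hud := hu (lt_add_of_pos_right (ρ i) hd)
  set A := ballPotentialBound ρ φ / (1 - capacitaryPotential k (ρ i) (ρ i + d)) with hA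
  have hA0 : 0 ≤ A := div_nonneg (h.ballPotentialBound_nonneg hφ) hud.le
  have hrad := fun x hx => hφ.contDiffAt_and_laplacian_sphereBarrier hk hE hρ A (hlt x hx)
  refine ⟨d, hd, A, isClosed_le (by fun_prop) continuous_const,
    fun x hx => (hrad x hx.2).1.continuousAt.continuousWithinAt, fun x _ hx => ?_,
    fun x hxR hx hxT => ?_⟩
  · exact add_nonneg (hψ.radialPotential_nonneg hk (hlt x hx)) (mul_nonneg hA0 (hu (hlt x hx)).le)
  · have hxd : ‖x - c i‖ < ρ i + d := by
      refine lt_of_le_of_ne hxR fun heq => hxT ((h.ballPotential_le hφ hk hx).trans ?_)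
      rw [sphereBarrier, heq, hA, div_mul_cancel₀ _ hud.ne']
      exact le_add_of_nonneg_left (hψ.radialPotential_nonneg hk (by linarith))
    refine ⟨?_, (hrad x hx).1, ?_⟩
    · filter_upwards [(by fun_prop : Continuous fun y => ‖y - c i‖).continuousAt.eventually_lt_const
        hxd] with y hy using le_of_lt hy
    · rw [(hrad x hx).2]
      exact hφ.antitoneOn (mem_Ioi.2 (sub_pos.2 (hlt x hx))) hx (hgap x hxR)

end IsBallFamily
end Barriers
end BallFamily

section GroundState

lemma locallyLipschitzOn_of_contDiffOn {E F : Type*} [NormedAddCommGroup E] [NormedSpace ℝ E]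
    [NormedAddCommGroup F] [NormedSpace ℝ F] {s : Set E} {f : E → F} (hs : IsOpen s)
    (hf : ContDiffOn ℝ 1 f s) : LocallyLipschitzOn s f := fun x hx => by
  obtain ⟨L, t, ht, hL⟩ := (hf.contDiffAt (hs.mem_nhds hx)).exists_lipschitzOnWith
  exact ⟨L, t, mem_nhdsWithin_of_mem_nhds ht, hL⟩

lemma exists_lipschitzOnWith_comp_min {f : ℝ → ℝ} (hf : LocallyLipschitzOn (Ioi 0) f) {M : ℝ}
    (hM : 0 < M) {a : ℝ} (ha : 0 < a) :
    ∃ L, LipschitzOnWith L (fun t => f (min t M)) (Ici a) := by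
  have hsub : Icc (min a M) M ⊆ Ioi 0 := fun t ht => (lt_min ha hM).trans_le ht.1
  obtain ⟨L, hL⟩ := (hf.mono hsub).exists_lipschitzOnWith_of_compact isCompact_Icc
  exact ⟨L * 1, hL.comp (LipschitzWith.id.min_const M).lipschitzOnWith
    fun t ht => ⟨min_le_min_right M ht, min_le_right t M⟩⟩

lemma isSingularSource_comp_min {ι E : Type*} [NormedAddCommGroup E] {c : ι → E} {ρ : ι → ℝ}
    {γ : NNReal} {φ f : ℝ → ℝ} (hγ0 : 0 < γ) (hγ1 : γ ≤ 1)
    (hφ : IsIntegrableWeight φ) (hφH : LocallyHolderOn γ (Ioi 0) φ)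
    (hfL : LocallyLipschitzOn (Ioi 0) f) (hfanti : AntitoneOn f (Ioi 0))
    (hfpos : ∀ t, 0 < t → 0 < f t) {M : ℝ} (hM : 0 < M) :
    IsSingularSource γ φ (fun t => f (min t M)) (ballDist c ρ) where
  exponent_pos := hγ0
  exponent_le_one := hγ1
  weight_pos := hφ.pos
  antitoneOn_weight := hφ.antitoneOn
  locallyHolderOn_weight := hφH
  nonlinearity_pos := fun _ ht => hfpos _ (lt_min ht hM)
  antitoneOn_nonlinearity := fun _ hs _ ht hst =>
    hfanti (mem_Ioi.2 (lt_min hs hM)) (mem_Ioi.2 (lt_min ht hM)) (min_le_min_right M hst)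
  lipschitzOn_nonlinearity := fun _ ha => exists_lipschitzOnWith_comp_min hfL hM ha
  dist_nonneg := fun _ => infDist_nonneg
  lipschitzWith_dist := lipschitz_infDist_pt _

lemma tendsto_zero_of_forall_le_add_mul {α : Type*} {l : Filter α} {K : Set α} {w b : α → ℝ}
    {f : ℝ → ℝ} (hK : ∀ x ∈ K, w x = 0) (hw : ∀ x, 0 ≤ w x)
    (hb : Tendsto b (l ⊓ 𝓟 Kᶜ) (𝓝 0))
    (hle : ∀ s > 0, ∀ᶠ x in l ⊓ 𝓟 Kᶜ, w x ≤ s + f s * b x) : Tendsto w l (𝓝 0) := by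
  refine tendsto_order.2 ⟨fun a ha => .of_forall fun x => ha.trans_le (hw x), fun a ha => ?_⟩
  have hlim : Tendsto (fun x => a / 2 + f (a / 2) * b x) (l ⊓ 𝓟 Kᶜ) (𝓝 (a / 2)) := by
    simpa only [mul_zero, add_zero] using (hb.const_mul (f (a / 2))).const_add (a / 2)
  have hcompl : ∀ᶠ x in l ⊓ 𝓟 Kᶜ, w x < a := by
    filter_upwards [hle (a / 2) (half_pos ha), hlim.eventually_lt_const (half_lt_self ha)]
      with x hx hxa using hx.trans_lt hxa
  filter_upwards [eventually_inf_principal.1 hcompl] with x hx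
  by_cases hxK : x ∈ K
  · rwa [hK x hxK]
  · exact hx hxK

/-- The positive part of `w - u` outside `K`, extended by zero to `K`. -/
noncomputable def excess {X : Type*} (K : Set X) (w u : X → ℝ) : X → ℝ :=
  Kᶜ.indicator fun x => max (w x - u x) 0

lemma excess_nonneg {X : Type*} {K : Set X} {w u : X → ℝ} (x : X) : 0 ≤ excess K w u x :=
  indicator_nonneg (fun _ _ => le_max_right _ _) x

lemma excess_eventuallyEq {X : Type*} [TopologicalSpace X] {K : Set X} {w u : X → ℝ}
    (hK : IsClosed K) {x : X} (hx : x ∉ K) :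
    excess K w u =ᶠ[𝓝 x] fun y => max (w y - u y) 0 :=
  eventually_of_mem (hK.isOpen_compl.mem_nhds hx) fun _ hy => indicator_of_mem hy _

variable {E : Type*} [NormedAddCommGroup E] [InnerProductSpace ℝ E] [FiniteDimensional ℝ E]

/-- A positive classical solution of `-Δ w = g x * f (w x)` outside the closed set `K` which
vanishes at infinity, and extends continuously by zero to `K`. -/
structure IsGroundState (g : E → ℝ) (f : ℝ → ℝ) (K : Set E) (w : E → ℝ) : Prop where
  continuous : Continuous w
  eq_zero : ∀ x ∈ K, w x = 0
  tendsto_zero : Tendsto w (cocompact E) (𝓝 0)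
  pos : ∀ x ∉ K, 0 < w x
  contDiffAt : ∀ x ∉ K, ContDiffAt ℝ 2 w x
  equation : ∀ x ∉ K, -Δ w x = g x * f (w x)

namespace IsGroundState

variable {g : E → ℝ} {f : ℝ → ℝ} {K : Set E} {w u : E → ℝ}

lemma nonneg (h : IsGroundState g f K w) (x : E) : 0 ≤ w x := by
  by_cases hx : x ∈ K
  · exact (h.eq_zero x hx).ge
  · exact (h.pos x hx).le

lemma excess_le (h : IsGroundState g f K w) (hu : ∀ x ∉ K, 0 < u x) (x : E) :
    excess K w u x ≤ w x :=
  indicator_apply_le' (fun hx => max_le (sub_le_self _ (hu x hx).le) (h.nonneg x))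
    fun _ => h.nonneg x

lemma continuous_excess (h : IsGroundState g f K w) (hK : IsClosed K)
    (hu : ContinuousOn u Kᶜ) (hu0 : ∀ x ∉ K, 0 < u x) : Continuous (excess K w u) := by
  refine continuous_iff_continuousAt.2 fun x => ?_
  by_cases hx : x ∈ K
  · have hlim : Tendsto w (𝓝 x) (𝓝 0) := h.eq_zero x hx ▸ h.continuous.tendsto x
    rw [ContinuousAt, excess, indicator_of_notMem (not_not_intro hx)]
    exact squeeze_zero excess_nonneg (h.excess_le hu0) hlim
  · have hmax : ContinuousAt (fun y => max (w y - u y) 0) x :=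
      (h.continuous.continuousAt.sub (hu.continuousAt (hK.isOpen_compl.mem_nhds hx))).max
        continuousAt_const
    exact hmax.congr (excess_eventuallyEq hK hx).symm

lemma laplacian_excess_nonneg (h : IsGroundState g f K w) (hK : IsClosed K)
    (hg : ∀ x ∉ K, 0 ≤ g x) (hf : AntitoneOn f (Ioi 0)) (hu : ContDiffOn ℝ 2 u Kᶜ)
    (hsuper : ∀ x ∉ K, 0 < u x ∧ g x * f (u x) ≤ -Δ u x) {x : E} (hx0 : 0 < excess K w u x) :
    ContDiffAt ℝ 2 (excess K w u) x ∧ 0 ≤ Δ (excess K w u) x := by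
  have hx : x ∉ K := fun hx => hx0.ne' (indicator_of_notMem (not_not_intro hx) _)
  have hux : ContDiffAt ℝ 2 u x := hu.contDiffAt (hK.isOpen_compl.mem_nhds hx)
  have hlt : u x < w x := by
    rw [(excess_eventuallyEq hK hx).eq_of_nhds] at hx0
    exact sub_pos.1 ((lt_max_iff.1 hx0).resolve_right (lt_irrefl 0))
  have heq : excess K w u =ᶠ[𝓝 x] w - u := by
    filter_upwards [excess_eventuallyEq hK hx,
      hux.continuousAt.eventually_lt h.continuous.continuousAt hlt] with y hy hlt
    rw [hy, max_eq_left (sub_pos.2 hlt).le, Pi.sub_apply]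
  refine ⟨((h.contDiffAt x hx).sub hux).congr_of_eventuallyEq heq, ?_⟩
  rw [(InnerProductSpace.laplacian_congr_nhds heq).eq_of_nhds,
    (h.contDiffAt x hx).laplacian_sub hux]
  have hfle := mul_le_mul_of_nonneg_left (hf (hsuper x hx).1 (h.pos x hx) hlt.le) (hg x hx)
  linarith [h.equation x hx, (hsuper x hx).2]

theorem le_of_supersolution [Nontrivial E] (h : IsGroundState g f K w) (hK : IsClosed K)
    (hg : ∀ x ∉ K, 0 ≤ g x) (hf : AntitoneOn f (Ioi 0)) (hu : ContDiffOn ℝ 2 u Kᶜ)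
    (hsuper : ∀ x ∉ K, 0 < u x ∧ g x * f (u x) ≤ -Δ u x) {x : E} (hx : x ∉ K) : w x ≤ u x := by
  have hu0 := fun x hx => (hsuper x hx).1
  have hle := nonpos_of_laplacian_nonneg_of_tendsto_zero
    (h.continuous_excess hK hu.continuousOn hu0)
    (squeeze_zero excess_nonneg (h.excess_le hu0) h.tendsto_zero)
    (fun _ => h.laplacian_excess_nonneg hK hg hf hu hsuper) x
  rw [(excess_eventuallyEq hK hx).eq_of_nhds] at hle
  exact sub_nonpos.1 ((le_max_left _ _).trans hle)

end IsGroundState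

section Existence

variable {ι : Type*} [Finite ι] [Nonempty ι] {c : ι → E} {ρ : ι → ℝ} {γ : NNReal} {φ f : ℝ → ℝ}

namespace IsLimitOfApproximateSolutions

variable [MeasurableSpace E] [BorelSpace E] {k : ℕ} {ε : ℕ → ℝ} {p W : ℕ → E → ℝ} {w : E → ℝ}
  {M : ℝ}

lemma tendsto_cocompact (h : IsLimitOfApproximateSolutions φ f (ballDist c ρ) ε p W w M)
    (D : IsSingularSource γ φ f (ballDist c ρ)) (hc : IsBallFamily c ρ)
    (hφ : IsIntegrableWeight φ) (hk : k ≠ 0) (hE : finrank ℝ E = k + 2) :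
    Tendsto w (cocompact E) (𝓝 0) := by
  have := Fintype.ofFinite ι
  have hV := hc.isBarrier_ballPotential hφ hk hE
  refine tendsto_zero_of_forall_le_add_mul (f := f) (K := ⋃ i, closedBall (c i) (ρ i))
    (fun x hx => h.eq_zero (infDist_zero_of_mem hx)) h.nonneg
    ((hc.tendsto_ballPotential_cocompact hφ hk).mono_left inf_le_left) fun s hs => ?_
  filter_upwards [mem_inf_of_right (mem_principal_self _)] with x hx
  exact h.le_of_isBarrier D hV (hV.mono_exempt (empty_subset _)) hs (mem_univ x)
    (hc.ballDist_pos_iff.2 hx)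

lemma tendsto_nhds (h : IsLimitOfApproximateSolutions φ f (ballDist c ρ) ε p W w M)
    (D : IsSingularSource γ φ f (ballDist c ρ)) (hc : IsBallFamily c ρ)
    (hφ : IsIntegrableWeight φ) (hk : k ≠ 0) (hE : finrank ℝ E = k + 2) {i : ι} {q : E}
    (hq : q ∈ closedBall (c i) (ρ i)) : Tendsto w (𝓝 q) (𝓝 0) := by
  have := Fintype.ofFinite ι
  obtain ⟨d, hd, A, hb⟩ := hc.exists_isBarrier_sphereBarrier hφ hk hE i
  refine tendsto_zero_of_forall_le_add_mul (f := f) (K := ⋃ i, closedBall (c i) (ρ i))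
    (fun x hx => h.eq_zero (infDist_zero_of_mem hx)) h.nonneg
    ((hφ.tendsto_sphereBarrier hk (hc.radius_pos i) A).comp (hc.tendsto_norm_sub_nhdsGT hq))
    fun s hs => ?_
  have hnear : ∀ᶠ x in 𝓝 q, ‖x - c i‖ < ρ i + d :=
    (by fun_prop : Continuous fun x => ‖x - c i‖).continuousAt.eventually_lt_const
      (by linarith [mem_closedBall_iff_norm.1 hq])
  filter_upwards [mem_inf_of_left hnear, mem_inf_of_right (mem_principal_self _)] with x hxd hx
  exact h.le_of_isBarrier D (hc.isBarrier_ballPotential hφ hk hE) hb hs (le_of_lt hxd)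
    (hc.ballDist_pos_iff.2 hx)

lemma isGroundState [Nontrivial E]
    (h : IsLimitOfApproximateSolutions φ f (ballDist c ρ) ε p W w M)
    (D : IsSingularSource γ φ f (ballDist c ρ)) (hc : IsBallFamily c ρ)
    (hφ : IsIntegrableWeight φ) (hk : k ≠ 0) (hE : finrank ℝ E = k + 2) :
    IsGroundState (fun x => φ (ballDist c ρ x)) f (⋃ i, closedBall (c i) (ρ i)) w where
  continuous := continuous_iff_continuousAt.2 fun q => by
    by_cases hq : q ∈ ⋃ i, closedBall (c i) (ρ i)
    · obtain ⟨i, hi⟩ := mem_iUnion.1 hq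
      rw [ContinuousAt, h.eq_zero (infDist_zero_of_mem hq)]
      exact h.tendsto_nhds D hc hφ hk hE hi
    · exact (h.contDiffAt_and_laplacian_eq D (hc.ballDist_pos_iff.2 hq)).1.continuousAt
  eq_zero := fun _ hx => h.eq_zero (infDist_zero_of_mem hx)
  tendsto_zero := h.tendsto_cocompact D hc hφ hk hE
  pos := fun _ hx => h.pos D (hc.ballDist_pos_iff.2 hx)
  contDiffAt := fun _ hx => (h.contDiffAt_and_laplacian_eq D (hc.ballDist_pos_iff.2 hx)).1
  equation := fun _ hx => (h.contDiffAt_and_laplacian_eq D (hc.ballDist_pos_iff.2 hx)).2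

end IsLimitOfApproximateSolutions

theorem IsBallFamily.exists_isGroundState (hc : IsBallFamily c ρ) (hE : 3 ≤ finrank ℝ E)
    (hγ0 : 0 < γ) (hγ1 : γ ≤ 1) (hφ : IsIntegrableWeight φ) (hφH : LocallyHolderOn γ (Ioi 0) φ)
    (hfL : LocallyLipschitzOn (Ioi 0) f) (hfanti : AntitoneOn f (Ioi 0))
    (hfpos : ∀ t, 0 < t → 0 < f t) :
    ∃ w, IsGroundState (fun x => φ (ballDist c ρ x)) f (⋃ i, closedBall (c i) (ρ i)) w := by
  have := Fintype.ofFinite ι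
  borelize E
  have : Nontrivial E := Module.nontrivial_of_finrank_pos (R := ℝ) (by lia)
  obtain ⟨k, hkE⟩ := Nat.exists_eq_add_of_le' ((Nat.le_succ 2).trans hE)
  have hk : k ≠ 0 := by lia
  have hB := mul_nonneg (hfpos 1 one_pos).le (hc.ballPotentialBound_nonneg hφ)
  -- Truncation of `f` at an a priori bound `M` of `w` makes it Lipschitz away from zero.
  set M := 2 + f 1 * ballPotentialBound ρ φ with hM
  have hM1 : 1 ≤ M := by linarith
  have D : IsSingularSource γ φ (fun t => f (min t M)) (ballDist c ρ) :=
    isSingularSource_comp_min hγ0 hγ1 hφ hφH hfL hfanti hfpos (one_pos.trans_le hM1)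
  obtain ⟨ε, p, W, w, h⟩ := D.exists_isLimitOfApproximateSolutions
    (hc.isBarrier_ballPotential hφ hk hkE) fun x hx => hc.ballPotential_le hφ hk hx
  rw [min_eq_left hM1, ← hM] at h
  have hw := h.isGroundState D hc hφ hk hkE
  refine ⟨w, { hw with equation := fun x hx => ?_ }⟩
  have hwM : w x ≤ M := le_of_tendsto' (h.tendsto x) fun n =>
    h.le_bound n x (hc.ballDist_pos_iff.2 hx)
  rw [hw.equation x hx, min_eq_left hwM]

end Existence

theorem statement_6_general {E : Type*} [NormedAddCommGroup E] [InnerProductSpace ℝ E]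
    [FiniteDimensional ℝ E] (hE : 3 ≤ finrank ℝ E) {ι : Type*} [Finite ι] [Nonempty ι]
    {c : ι → E} {ρ : ι → ℝ} (hρ : ∀ i, 0 < ρ i)
    (hdisj : Pairwise fun i j => Disjoint (closedBall (c i) (ρ i)) (closedBall (c j) (ρ j)))
    {γ : NNReal} (hγ0 : 0 < γ) (hγ1 : γ ≤ 1) {φ f : ℝ → ℝ} (hφpos : ∀ r, 0 < r → 0 < φ r)
    (hφanti : AntitoneOn φ (Ioi 0)) (hφH : LocallyHolderOn γ (Ioi 0) φ)
    (hφint : IntegrableOn (fun r => r * φ r) (Ioi 0)) (hfL : LocallyLipschitzOn (Ioi 0) f)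
    (hfanti : AntitoneOn f (Ioi 0)) (hfpos : ∀ t, 0 < t → 0 < f t) :
    ∃ w : E → ℝ,
      ContinuousOn w (interior (⋃ i, closedBall (c i) (ρ i)))ᶜ ∧
      ContDiffOn ℝ 2 w (⋃ i, closedBall (c i) (ρ i))ᶜ ∧
      (∀ x ∈ (⋃ i, closedBall (c i) (ρ i))ᶜ,
        0 < w x ∧ -Δ w x = φ (infDist x (⋃ i, closedBall (c i) (ρ i))) * f (w x)) ∧
      (∀ x ∈ frontier (⋃ i, closedBall (c i) (ρ i)), w x = 0) ∧
      Tendsto w (cocompact E) (𝓝 0) ∧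
      ∀ u : E → ℝ, ContDiffOn ℝ 2 u (⋃ i, closedBall (c i) (ρ i))ᶜ →
        (∀ x ∈ (⋃ i, closedBall (c i) (ρ i))ᶜ,
          0 < u x ∧ φ (infDist x (⋃ i, closedBall (c i) (ρ i))) * f (u x) ≤ -Δ u x) →
        ∀ x ∈ (⋃ i, closedBall (c i) (ρ i))ᶜ, w x ≤ u x := by
  have : Nontrivial E := Module.nontrivial_of_finrank_pos (R := ℝ) (by lia)
  have hc : IsBallFamily c ρ := ⟨hρ, hdisj⟩
  have hφ : IsIntegrableWeight φ := ⟨hφpos, hφanti, hφH.continuousOn hγ0, hφint⟩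
  have hK := isClosed_iUnion_closedBall c ρ
  obtain ⟨w, hw⟩ := hc.exists_isGroundState hE hγ0 hγ1 hφ hφH hfL hfanti hfpos
  exact ⟨w, hw.continuous.continuousOn, fun x hx => (hw.contDiffAt x hx).contDiffWithinAt,
    fun x hx => ⟨hw.pos x hx, hw.equation x hx⟩,
    fun x hx => hw.eq_zero x (hK.frontier_subset hx), hw.tendsto_zero,
    fun u hu hsuper x hx => hw.le_of_supersolution hK
      (fun y hy => (hφpos _ (hc.ballDist_pos_iff.2 hy)).le) hfanti hu hsuper hx⟩

end GroundState

/-- Theorem 3.4 (for a finite union of disjoint closed balls): existence of a minimal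
ground-state solution when `∫₀^∞ r φ(r) dr < ∞`. -/
theorem statement_6 {N : ℕ} (hN : 3 ≤ N) (k : ℕ) (hk : 1 ≤ k)
    (c : Fin k → EuclideanSpace ℝ (Fin N)) (ρ : Fin k → ℝ) (hρ : ∀ i, 0 < ρ i)
    (hdisj : Pairwise fun i j => Disjoint (closedBall (c i) (ρ i)) (closedBall (c j) (ρ j)))
    (γ : NNReal) (hγ0 : 0 < γ) (hγ1 : γ < 1) (φ f : ℝ → ℝ)
    (hφpos : ∀ r : ℝ, 0 < r → 0 < φ r) (hφanti : AntitoneOn φ (Ioi (0:ℝ)))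
    (hφhold : ∀ s : Set ℝ, IsCompact s → s ⊆ Ioi (0:ℝ) → ∃ C : NNReal, HolderOnWith C γ φ s)
    (hφint : IntegrableOn (fun r : ℝ => r * φ r) (Ioi (0:ℝ)) volume)
    (hf : ContDiffOn ℝ 1 f (Ioi (0:ℝ))) (hfanti : StrictAntiOn f (Ioi (0:ℝ)))
    (hfpos : ∀ t : ℝ, 0 < t → 0 < f t) :
    ∃ w : EuclideanSpace ℝ (Fin N) → ℝ,
      ContinuousOn w (interior (⋃ i, closedBall (c i) (ρ i)))ᶜ ∧
      ContDiffOn ℝ 2 w (⋃ i, closedBall (c i) (ρ i))ᶜ ∧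
      (∀ x ∈ (⋃ i, closedBall (c i) (ρ i))ᶜ,
        0 < w x ∧ -laplacian w x = φ (infDist x (⋃ i, closedBall (c i) (ρ i))) * f (w x)) ∧
      (∀ x ∈ frontier (⋃ i, closedBall (c i) (ρ i)), w x = 0) ∧
      Tendsto w (Filter.cocompact (EuclideanSpace ℝ (Fin N))) (nhds 0) ∧
      (∀ u : EuclideanSpace ℝ (Fin N) → ℝ,
        ContDiffOn ℝ 2 u (⋃ i, closedBall (c i) (ρ i))ᶜ →
        (∀ x ∈ (⋃ i, closedBall (c i) (ρ i))ᶜ,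
          0 < u x ∧ φ (infDist x (⋃ i, closedBall (c i) (ρ i))) * f (u x) ≤ -laplacian u x) →
        ∀ x ∈ (⋃ i, closedBall (c i) (ρ i))ᶜ, w x ≤ u x) := by
  simp only [laplacian_eq_laplacian_innerProductSpace]
  have : Nonempty (Fin k) := ⟨⟨0, hk⟩⟩
  exact statement_6_general (by simpa using hN) hρ hdisj hγ0 hγ1.le hφpos hφanti
    (.of_forall_isCompact isOpen_Ioi hφhold) hφint
    (locallyLipschitzOn_of_contDiffOn isOpen_Ioi hf) hfanti.antitoneOn hfpos
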